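/- arXiv:1410.8260 — 2 statements merged into one kernel-verified Lean document; each statement's English description precedes it below -/
import Mathlib

section
/- Fix k ∈ {1,…,p−1} and let Λ̃_k = ⟨U_k V_kᵀ, B⟩ = U_kᵀ B V_k, where U_k and V_k are the k-th columns of U and V. Then the statistic S_{k,Λ̃_k} = (∫_{d_k}^{d_{k−1}} e^{−(z−Λ̃_k)²/(2σ²)} z^{N−p} ∏_{j≤p, j≠k} |z² − d_j²| dz) / (∫_{d_{k+1}}^{d_{k−1}} e^{−(z−Λ̃_k)²/(2σ²)} z^{N−p} ∏_{j≤p, j≠k} |z² − d_j²| dz) is uniformly distributed on (0,1). -/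
open MeasureTheory ProbabilityTheory Matrix

/-!
Translating `Y` along `U_k V_kᵀ` moves the `k`-th singular value and fixes the other singular values
and all singular vectors, so it sweeps out the conditioning orbit of `Y`. By the exponential chart
of the singular value decomposition, the Jacobian of the translation is the quotient of
`z ^ (N - p) * ∏ j ≠ k, |z ^ 2 - d_j ^ 2|` at the new and the old value `z` of `d_k`, while the
Gaussian density changes by the quotient of `exp (-(z - Λ̃) ^ 2 / (2 σ ^ 2))`, because
`⟨U_k V_kᵀ, Y⟩ = d_k`. Resampling `d_k` on its orbit with density proportional to the product of
these two factors is therefore in detailed balance with the law of `Y`, hence leaves that law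
invariant. After one resampling step, the statistic is the survival function of the resampling
density evaluated at its own sample, which is uniform by the probability integral transform.
-/

open scoped ENNReal Topology

section ProbabilityIntegralTransform

theorem continuous_cdf (μ : Measure ℝ) [IsProbabilityMeasure μ] [NullSingletonClass μ] :
    Continuous (cdf μ) := by
  refine continuous_iff_continuousAt.2 fun x => ?_
  rw [(monotone_cdf μ).continuousAt_iff_leftLim_eq_rightLim, (cdf μ).rightLim_eq]
  refine le_antisymm ((monotone_cdf μ).leftLim_le le_rfl) ?_
  have hx : (cdf μ).measure {x} = 0 := by rw [measure_cdf, measure_singleton]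
  rwa [StieltjesFunction.measure_singleton, ENNReal.ofReal_eq_zero, sub_nonpos] at hx

theorem mem_range_cdf (μ : Measure ℝ) [IsProbabilityMeasure μ] [NullSingletonClass μ] {t : ℝ}
    (ht₀ : 0 < t) (ht₁ : t < 1) : t ∈ Set.range (cdf μ) :=
  mem_range_of_exists_le_of_exists_ge (continuous_cdf μ)
    ((tendsto_cdf_atBot μ).eventually_le_const ht₀).exists
    ((tendsto_cdf_atTop μ).eventually_const_le ht₁).exists

theorem measure_cdf_le (μ : Measure ℝ) [IsProbabilityMeasure μ] [NullSingletonClass μ] {t : ℝ}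
    (ht : t < 1) : μ {x | cdf μ x ≤ t} = ENNReal.ofReal t := by
  apply le_antisymm
  · have hlim : Filter.Tendsto ENNReal.ofReal (𝓝[>] t) (𝓝 (ENNReal.ofReal t)) :=
      ENNReal.continuous_ofReal.continuousWithinAt
    refine ge_of_tendsto hlim ?_
    filter_upwards [Ioo_mem_nhdsGT ht] with s hs
    rcases le_or_gt s 0 with hs₀ | hs₀
    · have hempty : {x | cdf μ x ≤ t} = ∅ :=
        Set.eq_empty_of_forall_notMem fun x hx =>
          (hx.trans_lt (hs.1.trans_le hs₀)).not_ge (cdf_nonneg μ x)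
      simp [hempty]
    · obtain ⟨y, rfl⟩ := mem_range_cdf μ hs₀ hs.2
      rw [ofReal_cdf]
      exact measure_mono fun x hx => ((monotone_cdf μ).reflect_lt (hx.trans_lt hs.1)).le
  · rcases le_or_gt t 0 with ht₀ | ht₀
    · simp [ENNReal.ofReal_of_nonpos ht₀]
    · obtain ⟨y, rfl⟩ := mem_range_cdf μ ht₀ ht
      rw [ofReal_cdf]
      exact measure_mono fun x hx => monotone_cdf μ hx

theorem map_cdf (μ : Measure ℝ) [IsProbabilityMeasure μ] [NullSingletonClass μ] :
    μ.map (cdf μ) = volume.restrict (Set.Ioo 0 1) := by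
  have hm : Measurable (cdf μ) := (monotone_cdf μ).measurable
  have : IsProbabilityMeasure (μ.map (cdf μ)) := Measure.isProbabilityMeasure_map hm.aemeasurable
  refine Measure.ext_of_Iic _ _ fun t => ?_
  rw [Measure.map_apply hm measurableSet_Iic, Measure.restrict_apply measurableSet_Iic]
  rcases lt_or_ge t 1 with ht | ht
  · have hIoc : Set.Iic t ∩ Set.Ioo 0 1 = Set.Ioc 0 t :=
      Set.ext fun x => ⟨fun h => ⟨h.2.1, h.1⟩, fun h => ⟨h.2, h.1, h.2.trans_lt ht⟩⟩
    rw [hIoc, Real.volume_Ioc, sub_zero]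
    exact measure_cdf_le μ ht
  · have huniv : cdf μ ⁻¹' Set.Iic t = Set.univ :=
      Set.eq_univ_of_forall fun x => (cdf_le_one μ x).trans ht
    have hIoo : Set.Iic t ∩ Set.Ioo 0 1 = Set.Ioo (0 : ℝ) 1 :=
      Set.inter_eq_right.2 fun x hx => hx.2.le.trans ht
    simp [huniv, hIoo]

theorem map_measureReal_Ioi (μ : Measure ℝ) [IsProbabilityMeasure μ] [NullSingletonClass μ] :
    μ.map (fun x => μ.real (Set.Ioi x)) = volume.restrict (Set.Ioo 0 1) := by
  have hcompl : (fun x => μ.real (Set.Ioi x)) = (fun t => 1 - t) ∘ cdf μ := by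
    ext x
    rw [← Set.compl_Iic, probReal_compl_eq_one_sub measurableSet_Iic, Function.comp_apply,
      cdf_eq_real]
  have hreflect := (Measure.measurePreserving_sub_left volume (1 : ℝ)).restrict_preimage
    (measurableSet_Ioo : MeasurableSet (Set.Ioo (0 : ℝ) 1))
  rw [Set.preimage_const_sub_Ioo, sub_self, sub_zero] at hreflect
  have hsub : Measurable fun t : ℝ => 1 - t := measurable_id.const_sub 1
  rw [hcompl, ← Measure.map_map hsub (monotone_cdf μ).measurable, map_cdf, hreflect.map_eq]

theorem map_measureReal_Ioi_div (μ : Measure ℝ) [IsFiniteMeasure μ] [NullSingletonClass μ] :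
    μ.map (fun x => μ.real (Set.Ioi x) / μ.real Set.univ) =
      μ Set.univ • volume.restrict (Set.Ioo 0 1) := by
  rcases eq_zero_or_neZero μ with rfl | hμ
  · simp
  have hnull : NullSingletonClass ((μ Set.univ)⁻¹ • μ) := ⟨fun x => by simp⟩
  have h := map_measureReal_Ioi ((μ Set.univ)⁻¹ • μ)
  have hreal : ∀ x, ((μ Set.univ)⁻¹ • μ).real (Set.Ioi x) =
      μ.real (Set.Ioi x) / μ.real Set.univ := fun x => by
    rw [measureReal_ennreal_smul_apply, ENNReal.toReal_inv, div_eq_inv_mul, measureReal_def μ .univ]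
  simp only [hreal, Measure.map_smul] at h
  rw [← h, smul_smul, ENNReal.mul_inv_cancel (NeZero.ne _) (measure_ne_top _ _), one_smul]

theorem lintegral_ofReal_survival {μ : Measure ℝ} [NullSingletonClass μ] {f : ℝ → ℝ}
    (hf₀ : 0 ≤ᵐ[μ] f) (hf : Integrable f μ) {A : Set ℝ} (hA : MeasurableSet A) :
    ∫⁻ z, ENNReal.ofReal (f z) *
        A.indicator 1 ((∫ x in Set.Ioi z, f x ∂μ) / ∫ x, f x ∂μ) ∂μ =
      ENNReal.ofReal (∫ z, f z ∂μ) * volume.restrict (Set.Ioo 0 1) A := by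
  set ν := μ.withDensity fun z => ENNReal.ofReal (f z) with hν
  have hfin : IsFiniteMeasure ν := isFiniteMeasure_withDensity_ofReal hf.2
  have hmeas : ∀ s, MeasurableSet s → ν s = ENNReal.ofReal (∫ x in s, f x ∂μ) := fun s hs => by
    rw [hν, withDensity_apply _ hs,
      ofReal_integral_eq_lintegral_ofReal hf.integrableOn (ae_restrict_of_ae hf₀)]
  have hreal : ∀ s, MeasurableSet s → ν.real s = ∫ x in s, f x ∂μ := fun s hs => by
    rw [measureReal_def, hmeas s hs,
      ENNReal.toReal_ofReal (setIntegral_nonneg_ae hs (hf₀.mono fun x hx _ => hx))]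
  have hratio : (fun z => ν.real (Set.Ioi z) / ν.real Set.univ) =
      fun z => (∫ x in Set.Ioi z, f x ∂μ) / ∫ x, f x ∂μ := by
    ext z
    rw [hreal _ measurableSet_Ioi, hreal _ .univ, setIntegral_univ]
  have hm : Measurable fun z => (∫ x in Set.Ioi z, f x ∂μ) / ∫ x, f x ∂μ := hratio ▸
    (Antitone.measurable fun x y hxy => measureReal_mono (Set.Ioi_subset_Ioi hxy)).div_const _
  have h := map_measureReal_Ioi_div ν
  rw [hratio, hmeas _ .univ, setIntegral_univ] at h
  calc ∫⁻ z, ENNReal.ofReal (f z) *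
        A.indicator 1 ((∫ x in Set.Ioi z, f x ∂μ) / ∫ x, f x ∂μ) ∂μ
      = ∫⁻ z, A.indicator 1 ((∫ x in Set.Ioi z, f x ∂μ) / ∫ x, f x ∂μ) ∂ν := by
        rw [hν, lintegral_withDensity_eq_lintegral_mul_non_measurable₀ _
          hf.aemeasurable.ennreal_ofReal (ae_of_all _ fun _ => ENNReal.ofReal_lt_top)]
        rfl
    _ = ENNReal.ofReal (∫ z, f z ∂μ) * volume.restrict (Set.Ioo 0 1) A := by
        rw [← lintegral_map (measurable_one.indicator hA) hm, h, lintegral_indicator_one hA,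
          Measure.smul_apply, smul_eq_mul]

end ProbabilityIntegralTransform

section HeatBath

variable {E α : Type*} [MeasurableSpace E] [MeasurableSpace α] {ν : Measure E} [SFinite ν]
  {w : E → ℝ → ℝ≥0∞} {Φ : ℝ → E → E}

theorem lintegral_heatBath (hw : Measurable (Function.uncurry w))
    (hΦ : Measurable fun x : E × ℝ => Φ x.2 x.1)
    (hrev : ∀ c, ∀ g : E → ℝ≥0∞, Measurable g →
      ∫⁻ Y, w Y (-c) * g Y ∂ν = ∫⁻ Y, w Y c * g (Φ c Y) ∂ν)
    (hinv : ∀ Y c, w Y c ≠ 0 → ∫⁻ b, w (Φ c Y) b = ∫⁻ b, w Y b)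
    (h₀ : ∀ᵐ Y ∂ν, ∫⁻ c, w Y c ≠ 0) (h_top : ∀ᵐ Y ∂ν, ∫⁻ c, w Y c ≠ ∞)
    {T : E → ℝ≥0∞} (hT : Measurable T) :
    ∫⁻ Y, (∫⁻ c, w Y c)⁻¹ * (∫⁻ c, w Y c * T (Φ c Y)) ∂ν = ∫⁻ Y, T Y ∂ν := by
  set C : E → ℝ≥0∞ := fun Y => ∫⁻ c, w Y c with hC
  have hCm : Measurable C := hw.lintegral_prod_right'
  have hwneg : Measurable fun x : E × ℝ => w x.1 (-x.2) :=
    hw.comp (measurable_fst.prodMk measurable_snd.neg)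
  have hTC : Measurable fun Y => (C Y)⁻¹ * T Y := hCm.inv.mul hT
  have hwT : Measurable fun x : E × ℝ => w x.1 x.2 * ((C x.1)⁻¹ * T (Φ x.2 x.1)) :=
    hw.mul ((hCm.inv.comp measurable_fst).mul (hT.comp hΦ))
  have hwTΦ : Measurable fun x : E × ℝ => w x.1 x.2 * T (Φ x.2 x.1) := hw.mul (hT.comp hΦ)
  calc ∫⁻ Y, (C Y)⁻¹ * (∫⁻ c, w Y c * T (Φ c Y)) ∂ν
      = ∫⁻ Y, (∫⁻ c, w Y c * ((C Y)⁻¹ * T (Φ c Y))) ∂ν := by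
        refine lintegral_congr fun Y => ?_
        refine (lintegral_const_mul _ (hwTΦ.comp measurable_prodMk_left)).symm.trans ?_
        exact lintegral_congr fun c => mul_left_comm _ _ _
    _ = ∫⁻ c, ∫⁻ Y, w Y c * ((C Y)⁻¹ * T (Φ c Y)) ∂ν :=
        lintegral_lintegral_swap hwT.aemeasurable
    _ = ∫⁻ c, ∫⁻ Y, w Y (-c) * ((C Y)⁻¹ * T Y) ∂ν := by
        refine lintegral_congr fun c => ?_
        rw [hrev c _ hTC]
        refine lintegral_congr fun Y => ?_
        rcases eq_or_ne (w Y c) 0 with h | h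
        · simp [h]
        · simp only [hC, hinv Y c h]
    _ = ∫⁻ Y, (∫⁻ c, w Y (-c) * ((C Y)⁻¹ * T Y)) ∂ν :=
        (lintegral_lintegral_swap (hwneg.mul (hTC.comp measurable_fst)).aemeasurable).symm
    _ = ∫⁻ Y, T Y ∂ν := by
        refine lintegral_congr_ae ?_
        filter_upwards [h₀, h_top] with Y hY₀ hY_top
        refine (lintegral_mul_const _ (hwneg.comp measurable_prodMk_left)).trans ?_
        rw [Function.comp_def, lintegral_neg_eq_self (w Y), ← mul_assoc,
          ENNReal.mul_inv_cancel hY₀ hY_top, one_mul]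

theorem map_eq_of_heatBath {S : E → α} {ρ : Measure α} (hw : Measurable (Function.uncurry w))
    (hΦ : Measurable fun x : E × ℝ => Φ x.2 x.1) (hS : Measurable S)
    (hrev : ∀ c, ∀ g : E → ℝ≥0∞, Measurable g →
      ∫⁻ Y, w Y (-c) * g Y ∂ν = ∫⁻ Y, w Y c * g (Φ c Y) ∂ν)
    (hinv : ∀ Y c, w Y c ≠ 0 → ∫⁻ b, w (Φ c Y) b = ∫⁻ b, w Y b)
    (h₀ : ∀ᵐ Y ∂ν, ∫⁻ c, w Y c ≠ 0) (h_top : ∀ᵐ Y ∂ν, ∫⁻ c, w Y c ≠ ∞)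
    (hcond : ∀ A, MeasurableSet A → ∀ᵐ Y ∂ν,
      ∫⁻ c, w Y c * A.indicator 1 (S (Φ c Y)) = (∫⁻ c, w Y c) * ρ A) :
    ν.map S = ν Set.univ • ρ := by
  ext A hA
  have hT : Measurable fun Y => A.indicator (1 : α → ℝ≥0∞) (S Y) :=
    (measurable_one.indicator hA).comp hS
  have hmap : ν.map S A = ∫⁻ Y, A.indicator 1 (S Y) ∂ν := by
    rw [← lintegral_map (measurable_one.indicator hA) hS, lintegral_indicator_one hA]
  rw [hmap, ← lintegral_heatBath hw hΦ hrev hinv h₀ h_top hT]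
  have hconst : ∀ᵐ Y ∂ν,
      (∫⁻ c, w Y c)⁻¹ * (∫⁻ c, w Y c * A.indicator 1 (S (Φ c Y))) = ρ A := by
    filter_upwards [hcond A hA, h₀, h_top] with Y hY hY₀ hY_top
    rw [hY, ← mul_assoc, ENNReal.inv_mul_cancel hY₀ hY_top, one_mul]
  rw [lintegral_congr_ae hconst, lintegral_const, mul_comm]
  rfl

end HeatBath

section GaussianMatrixDensity

variable {ι κ : Type*} [Fintype ι] [Fintype κ]

theorem lintegral_fin_prod_eq_prod {n : ℕ} {X : Fin n → Type*} {mX : ∀ i, MeasurableSpace (X i)}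
    {μ : (i : Fin n) → Measure (X i)} [∀ i, SigmaFinite (μ i)]
    {f : (i : Fin n) → X i → ℝ≥0∞} (hf : ∀ i, Measurable (f i)) :
    ∫⁻ x, ∏ i, f i (x i) ∂Measure.pi μ = ∏ i, ∫⁻ x, f i x ∂μ i := by
  induction n with
  | zero => simp
  | succ n ih =>
    have htail : Measurable fun x : (i : Fin n) → X i.succ => ∏ i : Fin n, f i.succ (x i) :=
      Finset.measurable_prod _ fun i _ => (hf _).comp (measurable_pi_apply i)
    have hsplit := (measurePreserving_piFinSuccAbove μ 0).lintegral_comp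
      (((hf 0).comp measurable_fst).mul (htail.comp measurable_snd))
    rw [Fin.prod_univ_succ, ← ih fun i => hf i.succ,
      ← lintegral_prod_mul (hf 0).aemeasurable htail.aemeasurable]
    refine Eq.trans (lintegral_congr fun x => ?_) hsplit
    exact Fin.prod_univ_succ _

theorem lintegral_fintype_prod_eq_prod {X : ι → Type*} {mX : ∀ i, MeasurableSpace (X i)}
    {μ : (i : ι) → Measure (X i)} [∀ i, SigmaFinite (μ i)]
    {f : (i : ι) → X i → ℝ≥0∞} (hf : ∀ i, Measurable (f i)) :
    ∫⁻ x, ∏ i, f i (x i) ∂Measure.pi μ = ∏ i, ∫⁻ x, f i x ∂μ i := by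
  let e := (Fintype.equivFin ι).symm
  rw [← (measurePreserving_piCongrLeft μ e).lintegral_comp_emb
    (MeasurableEquiv.measurableEmbedding _)]
  simp_rw [← e.prod_comp, MeasurableEquiv.coe_piCongrLeft, Equiv.piCongrLeft_apply_apply]
  exact lintegral_fin_prod_eq_prod fun i => hf _

theorem pi_withDensity {X : ι → Type*} {mX : ∀ i, MeasurableSpace (X i)}
    {μ : (i : ι) → Measure (X i)} [∀ i, SigmaFinite (μ i)]
    {f : (i : ι) → X i → ℝ≥0∞} (hf : ∀ i, Measurable (f i))
    [∀ i, SigmaFinite ((μ i).withDensity (f i))] :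
    Measure.pi (fun i => (μ i).withDensity (f i)) =
      (Measure.pi μ).withDensity fun x => ∏ i, f i (x i) := by
  refine Measure.pi_eq fun s hs => ?_
  rw [withDensity_apply _ (.univ_pi hs), Measure.restrict_pi_pi, lintegral_fintype_prod_eq_prod hf]
  exact Finset.prod_congr rfl fun i _ => (withDensity_apply _ (hs i)).symm

theorem pi_pi_gaussianReal_eq_withDensity (B : ι → κ → ℝ) {v : NNReal} (hv : v ≠ 0) :
    Measure.pi (fun i => Measure.pi fun j => gaussianReal (B i j) v) =
      volume.withDensity fun Y => ∏ i, ∏ j, gaussianPDF (B i j) v (Y i j) := by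
  have hsigma : ∀ i j, SigmaFinite ((volume : Measure ℝ).withDensity (gaussianPDF (B i j) v)) :=
    fun i j => by rw [← gaussianReal_of_var_ne_zero _ hv]; infer_instance
  have hrow : ∀ i, Measure.pi (fun j => gaussianReal (B i j) v) =
      volume.withDensity fun y => ∏ j, gaussianPDF (B i j) v (y j) := fun i => by
    simp_rw [gaussianReal_of_var_ne_zero _ hv]
    exact pi_withDensity fun j => measurable_gaussianPDF _ _
  have hsigma' : ∀ i, SigmaFinite ((volume : Measure (κ → ℝ)).withDensity
      fun y => ∏ j, gaussianPDF (B i j) v (y j)) := fun i => by rw [← hrow i]; infer_instance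
  simp_rw [hrow]
  exact pi_withDensity fun i => Finset.measurable_prod _ fun j _ =>
    (measurable_gaussianPDF _ _).comp (measurable_pi_apply j)

end GaussianMatrixDensity

section SimpleSVD

variable {m n : Type*}

section CommRing

variable {R : Type*} [CommRing R]

/-- The rank-one factor `U_k V_kᵀ` formed from the `k`-th columns of `U` and `V`. -/
def rankOne (U : Matrix m n R) (V : Matrix n n R) (k : n) : Matrix m n R :=
  vecMulVec (U.col k) (V.col k)

variable [Fintype n] [DecidableEq n]

theorem gram_eq_of_svd [Fintype m] {Y U : Matrix m n R} {d : n → R} {V : Matrix n n R}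
    (hY : Y = U * diagonal d * Vᵀ) (hU : Uᵀ * U = 1) :
    Yᵀ * Y = V * diagonal (fun i => d i ^ 2) * Vᵀ := by
  calc Yᵀ * Y = V * diagonal d * (Uᵀ * U) * diagonal d * Vᵀ := by
        simp only [hY, transpose_mul, transpose_transpose, diagonal_transpose, Matrix.mul_assoc]
    _ = V * (diagonal d * diagonal d) * Vᵀ := by
        simp only [hU, Matrix.mul_assoc, Matrix.one_mul]
    _ = V * diagonal (fun i => d i ^ 2) * Vᵀ := by
        simp only [diagonal_mul_diagonal, sq]

theorem charpoly_conj_diagonal {V : Matrix n n R} (hV : Vᵀ * V = 1) (e : n → R) :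
    (V * diagonal e * Vᵀ).charpoly = ∏ i, (Polynomial.X - Polynomial.C (e i)) := by
  rw [charpoly_mul_comm, ← Matrix.mul_assoc, hV, Matrix.one_mul, charpoly_diagonal]

theorem mul_diagonal_single_mul_transpose (U : Matrix m n R) (V : Matrix n n R) (k : n) (c : R) :
    U * diagonal (Pi.single k c) * Vᵀ = c • rankOne U V k := by
  ext i j
  rw [Matrix.mul_apply, Finset.sum_eq_single k]
  · simp only [rankOne, mul_diagonal, Pi.single_eq_same, transpose_apply, Matrix.smul_apply,
      vecMulVec_apply, col_apply, smul_eq_mul]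
    ring
  · intro l _ hl
    simp [hl]
  · simp

theorem mul_diagonal_update_mul_transpose (U : Matrix m n R) (d : n → R) (V : Matrix n n R) (k : n)
    (c : R) :
    U * diagonal (Function.update d k (d k + c)) * Vᵀ =
      U * diagonal d * Vᵀ + c • rankOne U V k := by
  have hupdate : Function.update d k (d k + c) = d + Pi.single k c := by
    ext i
    rcases eq_or_ne i k with rfl | hi
    · simp
    · simp [hi]
  rw [hupdate, ← mul_diagonal_single_mul_transpose, ← Matrix.add_mul, ← Matrix.mul_add,
    diagonal_add]
  rfl

theorem mul_conj_diagonal_single {U : Matrix m n R} {d : n → R} {V : Matrix n n R}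
    (hV : Vᵀ * V = 1) (k : n) (c : R) :
    U * diagonal d * Vᵀ * (V * diagonal (Pi.single k c) * Vᵀ) = (d k * c) • rankOne U V k := by
  calc U * diagonal d * Vᵀ * (V * diagonal (Pi.single k c) * Vᵀ)
      = U * (diagonal d * (Vᵀ * V) * diagonal (Pi.single k c)) * Vᵀ := by
        simp only [Matrix.mul_assoc]
    _ = U * diagonal (Pi.single k (d k * c)) * Vᵀ := by
        rw [hV, Matrix.mul_one, diagonal_mul_diagonal]
        congr 3
        ext i
        rcases eq_or_ne i k with rfl | hi
        · simp
        · simp [hi]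
    _ = (d k * c) • rankOne U V k := mul_diagonal_single_mul_transpose U V k _

theorem conj_diagonal_eq_of_injective [NoZeroDivisors R] {V V' : Matrix n n R} {e : n → R}
    (hV : Vᵀ * V = 1) (hV' : V'ᵀ * V' = 1) (he : Function.Injective e)
    (h : V * diagonal e * Vᵀ = V' * diagonal e * V'ᵀ) (f : n → R) :
    V * diagonal f * Vᵀ = V' * diagonal f * V'ᵀ := by
  have hVV : V * Vᵀ = 1 := mul_eq_one_comm.1 hV
  have hVV' : V' * V'ᵀ = 1 := mul_eq_one_comm.1 hV'
  have hcomm : diagonal e * (Vᵀ * V') = Vᵀ * V' * diagonal e := by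
    calc diagonal e * (Vᵀ * V') = Vᵀ * V * diagonal e * (Vᵀ * V') := by rw [hV, Matrix.one_mul]
      _ = Vᵀ * (V * diagonal e * Vᵀ) * V' := by simp only [Matrix.mul_assoc]
      _ = Vᵀ * V' * diagonal e * (V'ᵀ * V') := by rw [h]; simp only [Matrix.mul_assoc]
      _ = Vᵀ * V' * diagonal e := by rw [hV', Matrix.mul_one]
  have hdiag : ∀ i j, i ≠ j → (Vᵀ * V') i j = 0 := fun i j hij => by
    by_contra hne
    have hentry := congrFun₂ hcomm i j
    rw [diagonal_mul, mul_diagonal, mul_comm] at hentry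
    exact hij (he (mul_left_cancel₀ hne hentry))
  have hcomm_f : diagonal f * (Vᵀ * V') = Vᵀ * V' * diagonal f := by
    ext i j
    rw [diagonal_mul, mul_diagonal, mul_comm]
    rcases eq_or_ne i j with rfl | hij
    · rfl
    · rw [hdiag i j hij, zero_mul, zero_mul]
  calc V * diagonal f * Vᵀ = V * (diagonal f * (Vᵀ * V')) * V'ᵀ := by
        simp only [Matrix.mul_assoc, hVV', Matrix.mul_one]
    _ = V * Vᵀ * V' * diagonal f * V'ᵀ := by rw [hcomm_f]; simp only [Matrix.mul_assoc]
    _ = V' * diagonal f * V'ᵀ := by rw [hVV, Matrix.one_mul]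

end CommRing

variable [Fintype m] [Fintype n] [LinearOrder n]

/-- A singular value decomposition `Y = U diag(d) Vᵀ` in economy size, with nonnegative singular
values listed in decreasing order. -/
structure IsSVD (Y U : Matrix m n ℝ) (d : n → ℝ) (V : Matrix n n ℝ) : Prop where
  eq : Y = U * diagonal d * Vᵀ
  orthonormal_left : Uᵀ * U = 1
  orthonormal_right : Vᵀ * V = 1
  antitone : Antitone d
  nonneg : ∀ i, 0 ≤ d i

/-- A singular value decomposition `Y = U diag(d) Vᵀ` whose singular values are positive and listed
in strictly decreasing order; it determines `d` and the products `U_k V_kᵀ`. -/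
structure IsSimpleSVD (Y U : Matrix m n ℝ) (d : n → ℝ) (V : Matrix n n ℝ) : Prop where
  eq : Y = U * diagonal d * Vᵀ
  orthonormal_left : Uᵀ * U = 1
  orthonormal_right : Vᵀ * V = 1
  strictAnti : StrictAnti d
  pos : ∀ i, 0 < d i

namespace IsSimpleSVD

variable {Y U U' : Matrix m n ℝ} {d d' : n → ℝ} {V V' : Matrix n n ℝ}

theorem sq_injective (h : IsSimpleSVD Y U d V) : Function.Injective fun i => d i ^ 2 :=
  fun i j hij => h.strictAnti.injective ((sq_eq_sq₀ (h.pos i).le (h.pos j).le).1 hij)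

theorem range_eq (h : IsSimpleSVD Y U d V) :
    Set.range d = {x | 0 < x ∧ (Yᵀ * Y).charpoly.IsRoot (x ^ 2)} := by
  ext x
  simp only [gram_eq_of_svd h.eq h.orthonormal_left, charpoly_conj_diagonal h.orthonormal_right,
    Polynomial.IsRoot, Polynomial.eval_prod, Finset.prod_eq_zero_iff, Polynomial.eval_sub,
    Polynomial.eval_X, Polynomial.eval_C, sub_eq_zero, Finset.mem_univ, true_and,
    Set.mem_range, Set.mem_ofPred_eq]
  constructor
  · rintro ⟨i, rfl⟩
    exact ⟨h.pos i, i, rfl⟩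
  · rintro ⟨hx, i, hi⟩
    exact ⟨i, ((sq_eq_sq₀ hx.le (h.pos i).le).1 hi).symm⟩

theorem singularValues_unique (h : IsSimpleSVD Y U d V) (h' : IsSimpleSVD Y U' d' V') : d = d' := by
  have hrange : Set.range (OrderDual.toDual ∘ d) = Set.range (OrderDual.toDual ∘ d') := by
    rw [Set.range_comp, Set.range_comp, h.range_eq, h'.range_eq]
  exact (StrictMono.range_inj h.strictAnti.dual_right h'.strictAnti.dual_right).1 hrange

theorem rankOne_unique (h : IsSimpleSVD Y U d V) (h' : IsSimpleSVD Y U' d' V') (k : n) :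
    rankOne U V k = rankOne U' V' k := by
  obtain rfl := h.singularValues_unique h'
  have hgram := (gram_eq_of_svd h.eq h.orthonormal_left).symm.trans
    (gram_eq_of_svd h'.eq h'.orthonormal_left)
  have hproj := congrArg (Y * ·) (conj_diagonal_eq_of_injective h.orthonormal_right
    h'.orthonormal_right h.sq_injective hgram (Pi.single k (d k)⁻¹))
  beta_reduce at hproj
  conv_lhs at hproj => rw [h.eq]
  conv_rhs at hproj => rw [h'.eq]
  simpa only [mul_conj_diagonal_single h.orthonormal_right,
    mul_conj_diagonal_single h'.orthonormal_right, mul_inv_cancel₀ (h.pos k).ne', one_smul]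
    using hproj

theorem shift (h : IsSimpleSVD Y U d V) {k : n} {c : ℝ}
    (hanti : StrictAnti (Function.update d k (d k + c))) (hpos : 0 < d k + c) :
    IsSimpleSVD (Y + c • rankOne U V k) U (Function.update d k (d k + c)) V where
  eq := by rw [mul_diagonal_update_mul_transpose, ← h.eq]
  orthonormal_left := h.orthonormal_left
  orthonormal_right := h.orthonormal_right
  strictAnti := hanti
  pos i := by
    rcases eq_or_ne i k with rfl | hi
    · rwa [Function.update_self]
    · rw [Function.update_of_ne hi]; exact h.pos i

end IsSimpleSVD

/-- The matrices with positive, pairwise distinct singular values. -/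
def HasSimpleSVD (Y : Matrix m n ℝ) : Prop :=
  ∃ U d V, IsSimpleSVD Y U d V

open Classical in
/-- The decreasing vector of singular values of `Y`, set to `0` if they are not positive and
pairwise distinct. -/
noncomputable def simpleSingularValues (Y : Matrix m n ℝ) : n → ℝ :=
  if h : HasSimpleSVD Y then h.choose_spec.choose else 0

open Classical in
/-- The rank-one factor `U_k V_kᵀ` of `Y`, set to `0` if the singular values of `Y` are not positive
and pairwise distinct. -/
noncomputable def simpleRankOne (k : n) (Y : Matrix m n ℝ) : Matrix m n ℝ :=
  if h : HasSimpleSVD Y then rankOne h.choose h.choose_spec.choose_spec.choose k else 0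

namespace IsSimpleSVD

variable {Y U : Matrix m n ℝ} {d : n → ℝ} {V : Matrix n n ℝ}

theorem hasSimpleSVD (h : IsSimpleSVD Y U d V) : HasSimpleSVD Y := ⟨U, d, V, h⟩

theorem simpleSingularValues_eq (h : IsSimpleSVD Y U d V) : simpleSingularValues Y = d := by
  rw [simpleSingularValues, dif_pos h.hasSimpleSVD]
  exact h.hasSimpleSVD.choose_spec.choose_spec.choose_spec.singularValues_unique h

theorem simpleRankOne_eq (h : IsSimpleSVD Y U d V) (k : n) :
    simpleRankOne k Y = rankOne U V k := by
  rw [simpleRankOne, dif_pos h.hasSimpleSVD]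
  exact h.hasSimpleSVD.choose_spec.choose_spec.choose_spec.rankOne_unique h k

end IsSimpleSVD

theorem HasSimpleSVD.exists_isSimpleSVD {Y : Matrix m n ℝ} (hY : HasSimpleSVD Y) :
    ∃ U V, IsSimpleSVD Y U (simpleSingularValues Y) V := by
  obtain ⟨U, d, V, h⟩ := hY
  exact ⟨U, V, by rwa [h.simpleSingularValues_eq]⟩

end SimpleSVD

theorem addHaar_eq_zero_of_forall_line {E : Type*} [NormedAddCommGroup E] [NormedSpace ℝ E]
    [FiniteDimensional ℝ E] [MeasurableSpace E] [BorelSpace E] (μ : Measure E) [μ.IsAddHaarMeasure]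
    {Z : Set E} (hZ : MeasurableSet Z) (x : E)
    (hline : ∀ w : E, volume {s : ℝ | x + s • w ∈ Z} = 0) :
    μ Z = 0 := by
  have hm : MeasurableSet {y : ℝ × E | x + y.1 • y.2 ∈ Z} :=
    hZ.preimage ((measurable_fst.smul measurable_snd).const_add x)
  have hprod : (volume.prod μ) {y : ℝ × E | x + y.1 • y.2 ∈ Z} = 0 := by
    rw [Measure.prod_apply_symm hm]
    exact lintegral_eq_zero_of_ae_eq_zero (ae_of_all _ hline)
  have hne : ∀ᵐ s : ℝ, s ≠ 0 := by simp [ae_iff]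
  obtain ⟨s, hs, hs₀⟩ := ((Measure.measure_ae_null_of_prod_null hprod).and hne).exists
  have hpre : μ ((s • ·) ⁻¹' ((x + ·) ⁻¹' Z)) = 0 := hs
  rw [Measure.addHaar_preimage_smul _ hs₀, measure_preimage_add, mul_eq_zero] at hpre
  refine hpre.resolve_left (ENNReal.ofReal_pos.2 (abs_pos.2 ?_)).ne'
  exact inv_ne_zero (pow_ne_zero _ hs₀)

section GramDiscriminant

variable {m : Type*} [Fintype m] {p : ℕ} {R S : Type*} [CommRing R] [CommRing S]

/-- The discriminant of the characteristic polynomial of `YᵀY`, written as the Hankel determinant of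
the power sums of its roots, times `det (YᵀY)`. Over `ℝ` it vanishes unless the singular values of
`Y` are positive and pairwise distinct. -/
def gramDiscriminant (Y : Matrix m (Fin p) R) : R :=
  det (Matrix.of fun i j : Fin p => trace ((Yᵀ * Y) ^ ((i : ℕ) + j))) * det (Yᵀ * Y)

theorem gramDiscriminant_eq {Y : Matrix m (Fin p) R} {V : Matrix (Fin p) (Fin p) R}
    {e : Fin p → R} (hY : Yᵀ * Y = V * diagonal e * Vᵀ) (hV : Vᵀ * V = 1) :
    gramDiscriminant Y = (vandermonde e).det ^ 2 * ∏ i, e i := by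
  let u : (Matrix (Fin p) (Fin p) R)ˣ := ⟨V, Vᵀ, mul_eq_one_comm.1 hV, hV⟩
  have htrace : ∀ r : ℕ, trace ((Yᵀ * Y) ^ r) = ∑ i, e i ^ r := fun r => by
    have hpow : (Yᵀ * Y) ^ r = V * diagonal (e ^ r) * Vᵀ := by
      rw [hY, ← diagonal_pow]
      exact Units.conj_pow u _ r
    rw [hpow, trace_mul_comm, ← Matrix.mul_assoc, hV, Matrix.one_mul, trace_diagonal]
    rfl
  have hhankel : (Matrix.of fun i j : Fin p => trace ((Yᵀ * Y) ^ ((i : ℕ) + j))) =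
      (vandermonde e)ᵀ * vandermonde e := by
    ext i j
    rw [vandermonde_transpose_mul_vandermonde, of_apply, htrace]
  have hdet : det (Yᵀ * Y) = ∏ i, e i := by
    rw [hY, det_mul_comm, ← Matrix.mul_assoc, hV, Matrix.one_mul, det_diagonal]
  rw [gramDiscriminant, hhankel, hdet, det_mul, det_transpose, sq]

theorem gramDiscriminant_map (f : R →+* S) (Y : Matrix m (Fin p) R) :
    gramDiscriminant (Y.map f) = f (gramDiscriminant Y) := by
  have hgram : (Y.map f)ᵀ * Y.map f = f.mapMatrix (Yᵀ * Y) := by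
    rw [RingHom.mapMatrix_apply, Matrix.map_mul, transpose_map]
  have hhankel : (Matrix.of fun i j : Fin p => trace (f.mapMatrix (Yᵀ * Y) ^ ((i : ℕ) + j))) =
      f.mapMatrix (Matrix.of fun i j : Fin p => trace ((Yᵀ * Y) ^ ((i : ℕ) + j))) := by
    ext i j
    rw [of_apply, ← map_pow, RingHom.mapMatrix_apply, RingHom.mapMatrix_apply, map_apply, of_apply,
      AddMonoidHom.map_trace f]
  rw [gramDiscriminant, gramDiscriminant, map_mul, f.map_det, f.map_det, hgram, hhankel]

theorem IsSVD.isSimpleSVD {Y U : Matrix m (Fin p) ℝ} {d : Fin p → ℝ}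
    {V : Matrix (Fin p) (Fin p) ℝ} (h : IsSVD Y U d V) (hdisc : gramDiscriminant Y ≠ 0) :
    IsSimpleSVD Y U d V := by
  rw [gramDiscriminant_eq (gram_eq_of_svd h.eq h.orthonormal_left) h.orthonormal_right] at hdisc
  have hinj := det_vandermonde_ne_zero_iff.1 ((pow_ne_zero_iff two_ne_zero).1
    (left_ne_zero_of_mul hdisc))
  have hne := Finset.prod_ne_zero_iff.1 (right_ne_zero_of_mul hdisc)
  exact ⟨h.eq, h.orthonormal_left, h.orthonormal_right,
    h.antitone.strictAnti_of_injective fun i j hij => hinj (by simp only [hij]),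
    fun i => (h.nonneg i).lt_of_ne' ((pow_ne_zero_iff two_ne_zero).1 (hne i (Finset.mem_univ i)))⟩

theorem exists_gramDiscriminant_ne_zero (hm : p ≤ Fintype.card m) :
    ∃ Y : Matrix m (Fin p) ℝ, gramDiscriminant Y ≠ 0 := by
  classical
  obtain ⟨f⟩ := Function.Embedding.nonempty_of_card_le (α := Fin p) (β := m) (by simpa using hm)
  let U : Matrix m (Fin p) ℝ := (1 : Matrix m m ℝ).submatrix id f
  let d : Fin p → ℝ := fun j => j + 1
  have hU : Uᵀ * U = 1 := by
    ext i j
    simp [U, Matrix.mul_apply, one_apply]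
  have hsq : Function.Injective fun j => d j ^ 2 := fun i j hij => by
    have h := (sq_eq_sq₀ (by positivity) (by positivity)).1 hij
    exact Fin.ext (by simpa [d] using h)
  refine ⟨U * diagonal d * (1 : Matrix (Fin p) (Fin p) ℝ)ᵀ, ?_⟩
  rw [gramDiscriminant_eq (gram_eq_of_svd rfl hU) (by simp)]
  exact mul_ne_zero (pow_ne_zero 2 (det_vandermonde_ne_zero_iff.2 hsq))
    (Finset.prod_ne_zero_iff.2 fun j _ => by positivity)

theorem finite_gramDiscriminant_line_eq_zero {Y : Matrix m (Fin p) ℝ} (hY : gramDiscriminant Y ≠ 0)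
    (W : Matrix m (Fin p) ℝ) : {s : ℝ | gramDiscriminant (Y + s • W) = 0}.Finite := by
  let F : Matrix m (Fin p) (Polynomial ℝ) :=
    Y.map (Polynomial.C : ℝ →+* _) + (Polynomial.X : Polynomial ℝ) • W.map (Polynomial.C : ℝ →+* _)
  have heval : ∀ s, (gramDiscriminant F).eval s = gramDiscriminant (Y + s • W) := fun s => by
    rw [← Polynomial.coe_evalRingHom, ← gramDiscriminant_map]
    congr 1
    ext i j
    simp [F, mul_comm s]
  have hF : gramDiscriminant F ≠ 0 := fun h => hY (by simpa [h] using (heval 0).symm)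
  refine (Polynomial.finite_setOfPred_isRoot hF).subset fun s hs => ?_
  exact (heval s).trans hs

theorem continuous_gramDiscriminant :
    Continuous fun Y : m → Fin p → ℝ => gramDiscriminant (Matrix.of Y) := by
  have hof : Continuous fun Y : m → Fin p → ℝ => Matrix.of Y := continuous_id
  have hgram := hof.matrix_transpose.matrix_mul hof
  exact (Continuous.matrix_det (continuous_matrix fun i j => (hgram.pow _).matrix_trace)).mul
    hgram.matrix_det

theorem ae_gramDiscriminant_ne_zero (hm : p ≤ Fintype.card m) :
    ∀ᵐ Y : m → Fin p → ℝ, gramDiscriminant (Matrix.of Y) ≠ 0 := by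
  obtain ⟨Y₀, hY₀⟩ := exists_gramDiscriminant_ne_zero hm
  have hZ : MeasurableSet {Y : m → Fin p → ℝ | gramDiscriminant (Matrix.of Y) = 0} :=
    (isClosed_eq continuous_gramDiscriminant continuous_const).measurableSet
  have hnull := addHaar_eq_zero_of_forall_line volume hZ Y₀ fun W =>
    (finite_gramDiscriminant_line_eq_zero hY₀ (Matrix.of W)).measure_zero _
  simpa only [ae_iff, not_not] using hnull

end GramDiscriminant

section ExpSkew

open scoped Matrix.Norms.Operator in
theorem hasStrictFDerivAt_matrix_exp_zero {n : Type*} [Fintype n] [DecidableEq n] :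
    HasStrictFDerivAt (NormedSpace.exp : Matrix n n ℝ → Matrix n n ℝ) (.id ℝ _) 0 :=
  hasStrictFDerivAt_exp_zero

theorem exp_transpose_mul_exp_of_skew {n : Type*} [Fintype n] [DecidableEq n] {A : Matrix n n ℝ}
    (hA : Aᵀ = -A) : (NormedSpace.exp A)ᵀ * NormedSpace.exp A = 1 := by
  rw [← Matrix.exp_transpose, hA, ← Matrix.exp_add_of_commute _ _ (Commute.refl A).neg_left,
    neg_add_cancel, NormedSpace.exp_zero]

end ExpSkew

section MatrixLinearMap

variable {l m n R : Type*} [CommRing R]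

/-- The linear map `X ↦ C ⊙ X` of entrywise multiplication by a fixed matrix. -/
@[simps]
def hadamardLinearMap (C : Matrix m n R) : Matrix m n R →ₗ[R] Matrix m n R where
  toFun X := C ⊙ X
  map_add' X Y := hadamard_add C X Y
  map_smul' r X := hadamard_smul C X r

theorem det_hadamardLinearMap [Fintype m] [Fintype n] (C : Matrix m n R) :
    LinearMap.det (hadamardLinearMap C) = ∏ i, ∏ j, C i j := by
  refine (LinearMap.det_pi fun i => LinearMap.pi fun j =>
    (C i j • LinearMap.id : R →ₗ[R] R) ∘ₗ LinearMap.proj j).trans ?_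
  simp only [LinearMap.det_pi, LinearMap.det_ring, LinearMap.smul_apply, LinearMap.id_apply,
    smul_eq_mul, mul_one]

/-- The linear equivalence `X ↦ P X Q` for invertible matrices `P` and `Q`. -/
def mulLeftRightEquiv [Fintype l] [Fintype m] [Fintype n] [DecidableEq l] [DecidableEq m]
    [DecidableEq n] (P : Matrix m l R) (P' : Matrix l m R) (Q Q' : Matrix n n R) (hP : P' * P = 1)
    (hP' : P * P' = 1) (hQ : Q * Q' = 1) : Matrix l n R ≃ₗ[R] Matrix m n R :=
  LinearEquiv.ofLinearMap (mulRightLinearMap m R Q ∘ₗ mulLeftLinearMap n R P)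
    (mulRightLinearMap l R Q' ∘ₗ mulLeftLinearMap n R P')
    (LinearMap.ext fun X => by
      simp only [LinearMap.comp_apply, mulRightLinearMap_apply, mulLeftLinearMap_apply,
        LinearMap.id_apply, ← Matrix.mul_assoc, hP', Matrix.one_mul]
      rw [Matrix.mul_assoc, mul_eq_one_comm.1 hQ, Matrix.mul_one])
    (LinearMap.ext fun X => by
      simp only [LinearMap.comp_apply, mulRightLinearMap_apply, mulLeftLinearMap_apply,
        LinearMap.id_apply, ← Matrix.mul_assoc, hP, Matrix.one_mul]
      rw [Matrix.mul_assoc, hQ, Matrix.mul_one])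

end MatrixLinearMap

section TangentCoordinates

variable {n κ : Type*}

/-- The main diagonal of a tall matrix. -/
@[simps]
def principalDiagonal : Matrix (n ⊕ κ) n ℝ →ₗ[ℝ] n → ℝ where
  toFun X i := X (.inl i) i
  map_add' _ _ := rfl
  map_smul' _ _ := rfl

/-- The infinitesimal rotation of the right singular frame in the direction `X`. -/
@[simps]
def rightGenerator : Matrix (n ⊕ κ) n ℝ →ₗ[ℝ] Matrix n n ℝ where
  toFun X := X.toRows₁ - X.toRows₁ᵀ
  map_add' X Y := by ext; simp; ring
  map_smul' c X := by ext; simp; ring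

theorem rightGenerator_transpose (X : Matrix (n ⊕ κ) n ℝ) :
    (rightGenerator X)ᵀ = -rightGenerator X := by
  simp

variable [LinearOrder n]

/-- The matrix with diagonal `d` on top of a zero block of shape `κ × n`. -/
@[simps]
def tallDiagonal (κ : Type*) : (n → ℝ) →ₗ[ℝ] Matrix (n ⊕ κ) n ℝ where
  toFun d := fromRows (diagonal d) 0
  map_add' d e := by ext (i | a) j <;> simp [diagonal_apply, ite_add_ite]
  map_smul' c d := by ext (i | a) j <;> simp [diagonal_apply]

/-- The antisymmetric matrix with entries `1` above the diagonal and `-1` below it. -/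
def orderSign (n : Type*) [LinearOrder n] : Matrix n n ℝ :=
  Matrix.of fun i j => if i < j then 1 else if j < i then -1 else 0

theorem orderSign_transpose : (orderSign n)ᵀ = -orderSign n := by
  ext i j
  rcases lt_trichotomy i j with h | rfl | h <;> simp [orderSign, *, not_lt_of_gt]

/-- The infinitesimal rotation of the completed left singular frame in the direction `X`. -/
@[simps]
def leftGenerator : Matrix (n ⊕ κ) n ℝ →ₗ[ℝ] Matrix (n ⊕ κ) (n ⊕ κ) ℝ where
  toFun X := fromBlocks (orderSign n ⊙ (X.toRows₁ + X.toRows₁ᵀ)) (-X.toRows₂ᵀ) X.toRows₂ 0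
  map_add' X Y := by ext (i | a) (j | b) <;> simp <;> ring
  map_smul' c X := by ext (i | a) (j | b) <;> simp; ring

theorem leftGenerator_transpose (X : Matrix (n ⊕ κ) n ℝ) :
    (leftGenerator X)ᵀ = -leftGenerator X := by
  rw [leftGenerator_apply, fromBlocks_transpose, fromBlocks_neg, transpose_hadamard,
    orderSign_transpose]
  simp only [transpose_add, transpose_neg, transpose_transpose, transpose_zero, neg_neg, neg_zero,
    add_comm X.toRows₁ᵀ]
  exact congrArg (fromBlocks · _ _ _) (Matrix.ext fun i j => neg_mul _ _)

/-- The coefficients by which the differential of the singular value decomposition at `diag(d)`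
scales the coordinates of a tangent direction. -/
def svdScaling (κ : Type*) (d : n → ℝ) : Matrix (n ⊕ κ) n ℝ :=
  fromRows (Matrix.of fun i j => if i < j then d j - d i else if j < i then d i + d j else 1)
    (Matrix.of fun _ j => d j)

/-- The linear change of coordinates `(x, y) ↦ (x + y, x - y)` on each pair of mirrored entries of
the upper block. -/
noncomputable def svdRecombination : Matrix (n ⊕ κ) n ℝ ≃ₗ[ℝ] Matrix (n ⊕ κ) n ℝ where
  toFun X := fromRows (Matrix.of fun i j => if i < j then X (.inl i) j + X (.inl j) i
    else if j < i then X (.inl j) i - X (.inl i) j else X (.inl i) j) X.toRows₂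
  invFun X := fromRows (Matrix.of fun i j => if i < j then (X (.inl i) j + X (.inl j) i) / 2
    else if j < i then (X (.inl j) i - X (.inl i) j) / 2 else X (.inl i) j) X.toRows₂
  map_add' X Y := by
    ext (i | a) j
    · simp only [fromRows_apply_inl, of_apply, Matrix.add_apply]
      split_ifs <;> ring
    · rfl
  map_smul' c X := by
    ext (i | a) j
    · simp only [fromRows_apply_inl, of_apply, Matrix.smul_apply, smul_eq_mul, RingHom.id_apply]
      split_ifs <;> ring
    · rfl
  left_inv X := by
    ext (i | a) j
    · rcases lt_trichotomy i j with h | rfl | h <;> simp [*, not_lt_of_gt]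
    · rfl
  right_inv X := by
    ext (i | a) j
    · rcases lt_trichotomy i j with h | rfl | h <;> simp [*, not_lt_of_gt] <;> ring
    · rfl

theorem svdScaling_ne_zero {d : n → ℝ} (hanti : StrictAnti d) (hpos : ∀ i, 0 < d i) (r : n ⊕ κ)
    (j : n) : svdScaling κ d r j ≠ 0 := by
  rcases r with i | _
  · simp only [svdScaling, fromRows_apply_inl, of_apply]
    split_ifs with hij hji
    · exact (sub_neg.2 (hanti hij)).ne
    · exact (add_pos (hpos i) (hpos j)).ne'
    · exact one_ne_zero
  · exact (hpos j).ne'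

theorem abs_svdScaling_mul_abs_svdScaling (d : n → ℝ) {i j : n} (hij : i ≠ j) :
    |svdScaling κ d (.inl i) j| * |svdScaling κ d (.inl j) i| = |d i ^ 2 - d j ^ 2| := by
  rw [← abs_mul]
  rcases hij.lt_or_gt with h | h
  · rw [abs_sub_comm]
    simp only [svdScaling, fromRows_apply_inl, of_apply, h, h.not_gt, if_true, if_false]
    ring_nf
  · simp only [svdScaling, fromRows_apply_inl, of_apply, h, h.not_gt, if_true, if_false]
    ring_nf

variable [Fintype n] [Fintype κ]

theorem leftGenerator_mul_add_mul_rightGenerator (d : n → ℝ) (X : Matrix (n ⊕ κ) n ℝ) :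
    leftGenerator X * tallDiagonal κ d + tallDiagonal κ (principalDiagonal X) +
      tallDiagonal κ d * (rightGenerator X)ᵀ = svdRecombination (svdScaling κ d ⊙ X) := by
  ext (i | a) j
  · have hentry : (leftGenerator X * tallDiagonal κ d) (.inl i) j =
        orderSign n i j * (X (.inl i) j + X (.inl j) i) * d j := by
      simp [Matrix.mul_apply, diagonal_apply]
    have hentry' : (tallDiagonal κ d * (rightGenerator X)ᵀ) (.inl i) j =
        d i * (X (.inl j) i - X (.inl i) j) := by
      simp [Matrix.mul_apply, diagonal_apply]
    rw [Matrix.add_apply, Matrix.add_apply, hentry, hentry']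
    rcases lt_trichotomy i j with h | rfl | h <;>
      simp [svdRecombination, svdScaling, orderSign, *, not_lt_of_gt, ne_of_lt, ne_of_gt] <;>
      ring
  · simp [svdRecombination, svdScaling, Matrix.mul_apply, diagonal_apply, mul_comm]

end TangentCoordinates

section ScalingProduct

variable {n : Type*} [Fintype n]

theorem prod_prod_eq_mul_prod_erase {M : Type*} [CommMonoid M] [DecidableEq n] (f : n → n → M)
    (k : n) : ∏ i, ∏ j, f i j = f k k * (∏ j ∈ Finset.univ.erase k, f k j * f j k) *
      ∏ i ∈ Finset.univ.erase k, ∏ j ∈ Finset.univ.erase k, f i j := by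
  simp only [← Finset.mul_prod_erase _ _ (Finset.mem_univ k), Finset.prod_mul_distrib, mul_assoc]

variable [LinearOrder n]

/-- The factor `z ^ q * ∏ j ≠ k, |z ^ 2 - d_j ^ 2|` by which the Jacobian of the singular value
decomposition depends on the `k`-th singular value `z`, where `q` is the excess of rows over
columns. -/
def svdJacobian (q : ℕ) (k : n) (d : n → ℝ) (z : ℝ) : ℝ :=
  z ^ q * ∏ j ∈ Finset.univ.erase k, |z ^ 2 - d j ^ 2|

theorem svdJacobian_update (q : ℕ) (k : n) (d : n → ℝ) (x z : ℝ) :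
    svdJacobian q k (Function.update d k x) z = svdJacobian q k d z := by
  rw [svdJacobian, svdJacobian]
  congr 1
  refine Finset.prod_congr rfl fun j hj => ?_
  rw [Function.update_of_ne (Finset.ne_of_mem_erase hj)]

theorem svdJacobian_pos (q : ℕ) {k : n} {d : n → ℝ} {z : ℝ} (hz : 0 < z)
    (hd : ∀ j ≠ k, z ^ 2 ≠ d j ^ 2) : 0 < svdJacobian q k d z :=
  mul_pos (pow_pos hz q) (Finset.prod_pos fun j hj =>
    abs_pos.2 (sub_ne_zero.2 (hd j (Finset.ne_of_mem_erase hj))))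

theorem abs_prod_svdScaling (q : ℕ) (k : n) {d : n → ℝ} (hk : 0 ≤ d k) :
    |∏ r, ∏ j, svdScaling (Fin q) d r j| =
      svdJacobian q k d (d k) * ((∏ i ∈ Finset.univ.erase k, ∏ j ∈ Finset.univ.erase k,
        |svdScaling (Fin q) d (.inl i) j|) * (∏ j ∈ Finset.univ.erase k, |d j|) ^ q) := by
  have hdiag : |svdScaling (Fin q) d (.inl k) k| = 1 := by simp [svdScaling]
  have hpairs : ∏ j ∈ Finset.univ.erase k,
      |svdScaling (Fin q) d (.inl k) j| * |svdScaling (Fin q) d (.inl j) k| =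
        ∏ j ∈ Finset.univ.erase k, |d k ^ 2 - d j ^ 2| :=
    Finset.prod_congr rfl fun j hj =>
      abs_svdScaling_mul_abs_svdScaling d (Finset.ne_of_mem_erase hj).symm
  have hlower : ∀ a : Fin q, ∏ j, |svdScaling (Fin q) d (.inr a) j| =
      d k * ∏ j ∈ Finset.univ.erase k, |d j| := fun a => by
    rw [← Finset.mul_prod_erase _ _ (Finset.mem_univ k)]
    simp only [svdScaling, fromRows_apply_inr, of_apply, abs_of_nonneg hk]
  simp only [Fintype.prod_sum_type, abs_mul, Finset.abs_prod, hlower, Finset.prod_const,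
    Finset.card_univ, Fintype.card_fin]
  rw [prod_prod_eq_mul_prod_erase _ k, hdiag, hpairs, svdJacobian, mul_pow]
  ring

theorem abs_prod_svdScaling_update_div (q : ℕ) {k : n} {d : n → ℝ} (hanti : StrictAnti d)
    (hpos : ∀ i, 0 < d i) {z : ℝ} (hz : 0 ≤ z) :
    |∏ r, ∏ j, svdScaling (Fin q) (Function.update d k z) r j / svdScaling (Fin q) d r j| =
      svdJacobian q k d z / svdJacobian q k d (d k) := by
  have hscaling : ∀ i ∈ Finset.univ.erase k, ∀ j ∈ Finset.univ.erase k,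
      svdScaling (Fin q) (Function.update d k z) (.inl i) j = svdScaling (Fin q) d (.inl i) j :=
    fun i hi j hj => by
      simp only [svdScaling, fromRows_apply_inl, of_apply,
        Function.update_of_ne (Finset.ne_of_mem_erase hi),
        Function.update_of_ne (Finset.ne_of_mem_erase hj)]
  have hd : ∀ j ∈ Finset.univ.erase k, |Function.update d k z j| = |d j| := fun j hj => by
    rw [Function.update_of_ne (Finset.ne_of_mem_erase hj)]
  simp only [Finset.prod_div_distrib]
  rw [abs_div, abs_prod_svdScaling q k (hpos k).le, abs_prod_svdScaling q k (by simpa using hz),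
    svdJacobian_update, Function.update_self, Finset.prod_congr rfl hd,
    Finset.prod_congr rfl fun i hi => Finset.prod_congr rfl fun j hj => by rw [hscaling i hi j hj]]
  refine mul_div_mul_right _ _ (mul_ne_zero ?_ ?_)
  · exact Finset.prod_ne_zero_iff.2 fun i _ => Finset.prod_ne_zero_iff.2 fun j _ =>
      abs_ne_zero.2 (svdScaling_ne_zero hanti hpos _ _)
  · exact pow_ne_zero _ (Finset.prod_ne_zero_iff.2 fun j _ => abs_ne_zero.2 (hpos j).ne')

end ScalingProduct

section OrthogonalCompletion

variable {m n κ : Type*} [Fintype m]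

theorem orthonormal_toLp_col [DecidableEq n] {U : Matrix m n ℝ} (hU : Uᵀ * U = 1) :
    Orthonormal ℝ fun j => WithLp.toLp 2 (U.col j) := by
  refine orthonormal_iff_ite.2 fun i j => ?_
  rw [← one_apply, ← hU, Matrix.mul_apply]
  simp [PiLp.inner_apply, mul_comm]

theorem toCols₁_transpose_mul_self [DecidableEq n] [DecidableEq κ] {W : Matrix m (n ⊕ κ) ℝ}
    (hW : Wᵀ * W = 1) : W.toCols₁ᵀ * W.toCols₁ = 1 := by
  ext i j
  exact (congrFun₂ hW (.inl i) (.inl j)).trans (by simp only [one_apply, Sum.inl.injEq])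

/-- The matrix `W` is orthogonal and its first columns are those of `U`. -/
structure IsOrthogonalCompletion [Fintype n] [Fintype κ] [DecidableEq m] [DecidableEq n]
    [DecidableEq κ] (U : Matrix m n ℝ) (W : Matrix m (n ⊕ κ) ℝ) : Prop where
  transpose_mul_self : Wᵀ * W = 1
  mul_transpose_self : W * Wᵀ = 1
  toCols₁_eq : W.toCols₁ = U

theorem exists_isOrthogonalCompletion [Fintype n] [Fintype κ] [DecidableEq m] [DecidableEq n]
    [DecidableEq κ] (hcard : Fintype.card m = Fintype.card n + Fintype.card κ)
    {U : Matrix m n ℝ} (hU : Uᵀ * U = 1) :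
    ∃ W : Matrix m (n ⊕ κ) ℝ, IsOrthogonalCompletion U W := by
  let v : n ⊕ κ → EuclideanSpace ℝ m := Sum.elim (fun j => WithLp.toLp 2 (U.col j)) 0
  have hv : Orthonormal ℝ ((Set.range (Sum.inl : n → n ⊕ κ)).domRestrict v) := by
    refine orthonormal_iff_ite.2 ?_
    rintro ⟨r, hr⟩ ⟨s, hs⟩
    simp only [Subtype.mk.injEq, Set.domRestrict_apply]
    obtain ⟨⟨i, rfl⟩, j, rfl⟩ := And.intro hr hs
    simpa only [v, Sum.elim_inl, Sum.inl.injEq] using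
      orthonormal_iff_ite.1 (orthonormal_toLp_col hU) i j
  obtain ⟨b, hb⟩ := hv.exists_orthonormalBasis_extension_of_card_eq
    (by rw [finrank_euclideanSpace, Fintype.card_sum, hcard])
  let W : Matrix m (n ⊕ κ) ℝ := Matrix.of fun i r => b r i
  have hW : Wᵀ * W = 1 := by
    ext r s
    rw [one_apply, ← orthonormal_iff_ite.1 b.orthonormal r s, Matrix.mul_apply]
    simp [W, PiLp.inner_apply, mul_comm]
  refine ⟨W, hW, (mul_eq_one_comm_of_card_eq _ _ _ ?_).1 hW, ?_⟩
  · rw [Fintype.card_sum, hcard]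
  · ext i j
    exact congrFun (congrArg WithLp.ofLp (hb (Sum.inl j) ⟨j, rfl⟩)) i

end OrthogonalCompletion

section SVDChart

variable {m n κ : Type*} [Fintype n] [LinearOrder n]

/-- The right singular frame obtained from `V` by the rotation with coordinates `X`. -/
noncomputable def rightFrame (V : Matrix n n ℝ) (X : Matrix (n ⊕ κ) n ℝ) : Matrix n n ℝ :=
  V * NormedSpace.exp (rightGenerator X)

theorem rightFrame_transpose_mul_self {V : Matrix n n ℝ} (hV : Vᵀ * V = 1)
    (X : Matrix (n ⊕ κ) n ℝ) : (rightFrame V X)ᵀ * rightFrame V X = 1 := by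
  rw [rightFrame, transpose_mul, Matrix.mul_assoc, ← Matrix.mul_assoc Vᵀ, hV, Matrix.one_mul,
    exp_transpose_mul_exp_of_skew (rightGenerator_transpose X)]

variable [Fintype κ]

theorem mul_tallDiagonal (W : Matrix m (n ⊕ κ) ℝ) (d : n → ℝ) :
    W * tallDiagonal κ d = W.toCols₁ * diagonal d := by
  conv_lhs => rw [← fromCols_toCols W]
  rw [tallDiagonal_apply, fromCols_mul_fromRows, Matrix.mul_zero, add_zero]

variable [DecidableEq κ]

/-- The left singular frame obtained from the orthogonal matrix `W` by the rotation with
coordinates `X`. -/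
noncomputable def leftFrame (W : Matrix m (n ⊕ κ) ℝ) (X : Matrix (n ⊕ κ) n ℝ) : Matrix m n ℝ :=
  (W * NormedSpace.exp (leftGenerator X)).toCols₁

/-- The parametrization of matrices by their singular value decomposition: the coordinates `X`
rotate the singular frames and translate the singular values `d`. -/
noncomputable def svdChart (W : Matrix m (n ⊕ κ) ℝ) (V : Matrix n n ℝ) (d : n → ℝ)
    (X : Matrix (n ⊕ κ) n ℝ) : Matrix m n ℝ :=
  leftFrame W X * diagonal (d + principalDiagonal X) * (rightFrame V X)ᵀ

theorem leftFrame_transpose_mul_self [Fintype m] {W : Matrix m (n ⊕ κ) ℝ} (hW : Wᵀ * W = 1)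
    (X : Matrix (n ⊕ κ) n ℝ) : (leftFrame W X)ᵀ * leftFrame W X = 1 := by
  refine toCols₁_transpose_mul_self ?_
  rw [transpose_mul, Matrix.mul_assoc, ← Matrix.mul_assoc Wᵀ, hW, Matrix.one_mul,
    exp_transpose_mul_exp_of_skew (leftGenerator_transpose X)]

theorem isSimpleSVD_svdChart [Fintype m] {W : Matrix m (n ⊕ κ) ℝ} (hW : Wᵀ * W = 1)
    {V : Matrix n n ℝ} (hV : Vᵀ * V = 1) {d : n → ℝ} {X : Matrix (n ⊕ κ) n ℝ}
    (hanti : StrictAnti (d + principalDiagonal X)) (hpos : ∀ i, 0 < (d + principalDiagonal X) i) :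
    IsSimpleSVD (svdChart W V d X) (leftFrame W X) (d + principalDiagonal X) (rightFrame V X) :=
  ⟨rfl, leftFrame_transpose_mul_self hW X, rightFrame_transpose_mul_self hV X, hanti, hpos⟩

theorem svdChart_zero (W : Matrix m (n ⊕ κ) ℝ) (V : Matrix n n ℝ) (d : n → ℝ) :
    svdChart W V d 0 = W.toCols₁ * diagonal d * Vᵀ := by
  simp only [svdChart, leftFrame, rightFrame, map_zero, NormedSpace.exp_zero, Matrix.mul_one,
    add_zero]

theorem svdChart_update (W : Matrix m (n ⊕ κ) ℝ) (V : Matrix n n ℝ) (d : n → ℝ) (k : n) (c : ℝ)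
    (X : Matrix (n ⊕ κ) n ℝ) :
    svdChart W V (Function.update d k (d k + c)) X =
      svdChart W V d X + c • rankOne (leftFrame W X) (rightFrame V X) k := by
  have hupdate : Function.update d k (d k + c) + principalDiagonal X =
      Function.update (d + principalDiagonal X) k ((d + principalDiagonal X) k + c) := by
    ext i
    rcases eq_or_ne i k with rfl | hi
    · simp only [Pi.add_apply, Function.update_self, add_right_comm]
    · simp only [Pi.add_apply, Function.update_of_ne hi]
  rw [svdChart, svdChart, hupdate, mul_diagonal_update_mul_transpose]

open scoped Matrix.Norms.Elementwise

/-- Matrix multiplication as a continuous bilinear map. -/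
noncomputable def matrixMulL (l m n : Type*) [Fintype l] [Fintype m] [Fintype n] :
    Matrix l m ℝ →L[ℝ] Matrix m n ℝ →L[ℝ] Matrix l n ℝ :=
  (mulLinearMap ℝ).toContinuousBilinearMap

/-- The differential of `svdChart W V d` at the origin. -/
noncomputable def svdChartDeriv (W : Matrix m (n ⊕ κ) ℝ) (V : Matrix n n ℝ) (d : n → ℝ) :
    Matrix (n ⊕ κ) n ℝ →ₗ[ℝ] Matrix m n ℝ :=
  mulRightLinearMap m ℝ Vᵀ ∘ₗ mulLeftLinearMap n ℝ W ∘ₗ svdRecombination.toLinearMap ∘ₗ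
    hadamardLinearMap (svdScaling κ d)

theorem hasStrictFDerivAt_matrix_exp_continuousLinearMap {l E : Type*} [Fintype l] [DecidableEq l]
    [NormedAddCommGroup E] [NormedSpace ℝ E] (A : E →L[ℝ] Matrix l l ℝ) :
    HasStrictFDerivAt (fun X => NormedSpace.exp (A X)) A 0 := by
  have hexp := hasStrictFDerivAt_matrix_exp_zero (n := l)
  rw [← map_zero A] at hexp
  exact hexp.comp 0 A.hasStrictFDerivAt

theorem hasStrictFDerivAt_svdChart [Finite m] (W : Matrix m (n ⊕ κ) ℝ) (V : Matrix n n ℝ)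
    (d : n → ℝ) :
    HasStrictFDerivAt (svdChart W V d) (svdChartDeriv W V d).toContinuousLinearMap 0 := by
  have := Fintype.ofFinite m
  have hleft : HasStrictFDerivAt
      (fun X : Matrix (n ⊕ κ) n ℝ => NormedSpace.exp (leftGenerator X)) _ 0 :=
    hasStrictFDerivAt_matrix_exp_continuousLinearMap
      (leftGenerator (n := n) (κ := κ)).toContinuousLinearMap
  have hright : HasStrictFDerivAt
      (fun X : Matrix (n ⊕ κ) n ℝ => (NormedSpace.exp (rightGenerator X))ᵀ) _ 0 :=
    (transposeLinearEquiv n n ℝ ℝ).toLinearMap.toContinuousLinearMap.hasStrictFDerivAt.comp 0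
      (hasStrictFDerivAt_matrix_exp_continuousLinearMap
        (rightGenerator (n := n) (κ := κ)).toContinuousLinearMap)
  have hmiddle : HasStrictFDerivAt
      (fun X : Matrix (n ⊕ κ) n ℝ => tallDiagonal κ (d + principalDiagonal X))
      (tallDiagonal κ ∘ₗ principalDiagonal).toContinuousLinearMap 0 := by
    simp only [map_add]
    exact (tallDiagonal κ ∘ₗ
      principalDiagonal).toContinuousLinearMap.hasStrictFDerivAt.const_add _
  have hprod := (matrixMulL _ _ _).hasStrictFDerivAt_of_bilinear
    ((matrixMulL _ _ _).hasStrictFDerivAt_of_bilinear hleft hmiddle) hright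
  have hframe := (mulRightLinearMap m ℝ Vᵀ ∘ₗ
    mulLeftLinearMap n ℝ W).toContinuousLinearMap.hasStrictFDerivAt.comp 0 hprod
  simp only [map_zero, NormedSpace.exp_zero, transpose_one, add_zero] at hframe
  refine (hframe.congr_fderiv ?_).congr_of_eventuallyEq (.of_forall fun X => ?_)
  · ext1 X
    change W * ((1 : Matrix (n ⊕ κ) (n ⊕ κ) ℝ) * tallDiagonal κ d * (rightGenerator X)ᵀ +
      ((1 : Matrix (n ⊕ κ) (n ⊕ κ) ℝ) * tallDiagonal κ (principalDiagonal X) +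
        leftGenerator X * tallDiagonal κ d) * (1 : Matrix n n ℝ)) * Vᵀ =
      W * (svdRecombination (svdScaling κ d ⊙ X) : Matrix (n ⊕ κ) n ℝ) * Vᵀ
    rw [← leftGenerator_mul_add_mul_rightGenerator, Matrix.one_mul, Matrix.one_mul, Matrix.mul_one]
    congr 2
    abel
  · change W * (NormedSpace.exp (leftGenerator X) * tallDiagonal κ (d + principalDiagonal X) *
      (NormedSpace.exp (rightGenerator X))ᵀ) * Vᵀ = svdChart W V d X
    rw [svdChart, leftFrame, ← mul_tallDiagonal, rightFrame, transpose_mul]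
    simp only [Matrix.mul_assoc]

end SVDChart

section SVDCoordinates

variable {m n κ : Type*} [Fintype m] [DecidableEq m] [Fintype n] [LinearOrder n] [Fintype κ]
  [DecidableEq κ]

/-- Entrywise multiplication by a matrix with nonzero entries, as a linear equivalence. -/
noncomputable def hadamardEquiv {m n : Type*} (C : Matrix m n ℝ) (hC : ∀ i j, C i j ≠ 0) :
    Matrix m n ℝ ≃ₗ[ℝ] Matrix m n ℝ :=
  LinearEquiv.ofLinearMap (hadamardLinearMap C) (hadamardLinearMap (C.map (·⁻¹)))
    (LinearMap.ext fun X => by ext i j; exact mul_inv_cancel_left₀ (hC i j) _)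
    (LinearMap.ext fun X => by ext i j; exact inv_mul_cancel_left₀ (hC i j) _)

variable {U : Matrix m n ℝ} {W : Matrix m (n ⊕ κ) ℝ} {V : Matrix n n ℝ} {d : n → ℝ}

/-- The identification of SVD coordinates with tangent directions at `U diag(d) Vᵀ`, up to
the scaling by `svdScaling κ d`. -/
noncomputable def svdFrameEquiv (hW : IsOrthogonalCompletion U W) (hV : Vᵀ * V = 1) :
    Matrix (n ⊕ κ) n ℝ ≃ₗ[ℝ] Matrix m n ℝ :=
  svdRecombination.trans
    (mulLeftRightEquiv W Wᵀ Vᵀ V hW.transpose_mul_self hW.mul_transpose_self hV)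

/-- The differential at the origin of the chart `svdChart W V d` around a simple singular value
decomposition. -/
noncomputable def IsSimpleSVD.chartEquiv {Y : Matrix m n ℝ} (h : IsSimpleSVD Y U d V)
    (hW : IsOrthogonalCompletion U W) : Matrix (n ⊕ κ) n ℝ ≃ₗ[ℝ] Matrix m n ℝ :=
  (hadamardEquiv _ (svdScaling_ne_zero h.strictAnti h.pos)).trans
    (svdFrameEquiv hW h.orthonormal_right)

open scoped Matrix.Norms.Elementwise

theorem IsSimpleSVD.exists_localInverse {Y₀ : Matrix m n ℝ} (h : IsSimpleSVD Y₀ U d V)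
    (hW : IsOrthogonalCompletion U W) :
    ∃ X : Matrix m n ℝ → Matrix (n ⊕ κ) n ℝ, X Y₀ = 0 ∧
      HasStrictFDerivAt X ((h.chartEquiv hW).symm.toLinearMap.toContinuousLinearMap) Y₀ ∧
      ∀ᶠ Y in 𝓝 Y₀, svdChart W V d (X Y) = Y := by
  have hchart : HasStrictFDerivAt (svdChart W V d)
      ((h.chartEquiv hW).toContinuousLinearEquiv : _ →L[ℝ] _) 0 :=
    hasStrictFDerivAt_svdChart W V d
  have hzero : svdChart W V d 0 = Y₀ := by rw [svdChart_zero, hW.toCols₁_eq, h.eq]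
  exact ⟨hchart.localInverse _ _ _, hzero ▸ hchart.localInverse_apply_image,
    hzero ▸ hchart.to_localInverse, hzero ▸ hchart.eventually_right_inverse⟩

theorem IsSimpleSVD.exists_localCoordinates {Y₀ : Matrix m n ℝ} (h : IsSimpleSVD Y₀ U d V)
    (hW : IsOrthogonalCompletion U W) :
    ∃ X : Matrix m n ℝ → Matrix (n ⊕ κ) n ℝ, X Y₀ = 0 ∧
      HasStrictFDerivAt X ((h.chartEquiv hW).symm.toLinearMap.toContinuousLinearMap) Y₀ ∧
      ∀ᶠ Y in 𝓝 Y₀, IsSimpleSVD Y (leftFrame W (X Y)) (d + principalDiagonal (X Y))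
        (rightFrame V (X Y)) := by
  obtain ⟨X, hX₀, hX, hright⟩ := h.exists_localInverse hW
  have hsing : ContinuousAt (fun Y => d + principalDiagonal (X Y)) Y₀ :=
    continuousAt_const.add
      ((principalDiagonal.toContinuousLinearMap.continuous.continuousAt).comp hX.continuousAt)
  have hentry : ∀ i, Filter.Tendsto (fun Y => (d + principalDiagonal (X Y)) i) (𝓝 Y₀) (𝓝 (d i)) :=
    fun i => by
      simpa only [hX₀, map_zero, add_zero] using (continuousAt_pi.1 hsing i).tendsto
  have hpos : ∀ᶠ Y in 𝓝 Y₀, ∀ i, 0 < (d + principalDiagonal (X Y)) i :=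
    Filter.eventually_all.2 fun i => (hentry i).eventually (lt_mem_nhds (h.pos i))
  have hanti : ∀ᶠ Y in 𝓝 Y₀, StrictAnti (d + principalDiagonal (X Y)) :=
    Filter.eventually_all.2 fun i => Filter.eventually_all.2 fun j =>
      Filter.eventually_imp_distrib_left.2 fun hij =>
        (hentry j).eventually_lt (hentry i) (h.strictAnti hij)
  refine ⟨X, hX₀, hX, ?_⟩
  filter_upwards [hright, hpos, hanti] with Y hY hpos hanti
  simpa only [hY] using
    isSimpleSVD_svdChart hW.transpose_mul_self h.orthonormal_right hanti hpos

theorem det_svdChartDeriv_comp_chartEquiv_symm {Y : Matrix m n ℝ} (h : IsSimpleSVD Y U d V)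
    (hW : IsOrthogonalCompletion U W) (e : n → ℝ) :
    LinearMap.det (svdChartDeriv W V e ∘ₗ (h.chartEquiv hW).symm.toLinearMap) =
      ∏ r, ∏ j, svdScaling κ e r j / svdScaling κ d r j := by
  refine Eq.trans ?_ (det_hadamardLinearMap
    (Matrix.of fun r j => svdScaling κ e r j / svdScaling κ d r j))
  let R := svdFrameEquiv hW h.orthonormal_right
  rw [← LinearMap.det_conj _ R]
  congr 1
  refine LinearMap.ext fun X => congrArg R ?_
  ext r j
  exact (mul_assoc _ _ _).symm

end SVDCoordinates

section SimpleSVDRegularity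

variable {m n : Type*} [Fintype m] [Fintype n] [LinearOrder n] {q : ℕ}

open scoped Matrix.Norms.Elementwise

theorem IsSimpleSVD.exists_hasFDerivAt_shift (hcard : Fintype.card m = Fintype.card n + q)
    {Y U : Matrix m n ℝ} {d : n → ℝ} {V : Matrix n n ℝ} (h : IsSimpleSVD Y U d V) {k : n} {c : ℝ}
    (hc : 0 ≤ d k + c) :
    ∃ L : Matrix m n ℝ →L[ℝ] Matrix m n ℝ,
      HasFDerivAt (fun Y => Y + c • simpleRankOne k Y) L Y ∧
      |L.det| = svdJacobian q k d (d k + c) / svdJacobian q k d (d k) := by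
  classical
  obtain ⟨W, hW⟩ := exists_isOrthogonalCompletion (κ := Fin q)
    (by rw [hcard, Fintype.card_fin]) h.orthonormal_left
  obtain ⟨X, hX₀, hX, hsvd⟩ := h.exists_localCoordinates hW
  have hchart := hasStrictFDerivAt_svdChart W V (Function.update d k (d k + c))
  rw [← hX₀] at hchart
  refine ⟨_, (hchart.comp Y hX).hasFDerivAt.congr_of_eventuallyEq ?_, ?_⟩
  · filter_upwards [hsvd] with Z hZ
    rw [hZ.simpleRankOne_eq]
    exact (congrArg (· + _) hZ.eq).trans (svdChart_update W V d k c (X Z)).symm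
  · exact (congrArg abs (det_svdChartDeriv_comp_chartEquiv_symm h hW _)).trans
      (abs_prod_svdScaling_update_div q h.strictAnti h.pos hc)

theorem isOpen_setOf_hasSimpleSVD (hcard : Fintype.card m = Fintype.card n + q) :
    IsOpen {Y : Matrix m n ℝ | HasSimpleSVD Y} := by
  refine isOpen_iff_mem_nhds.2 ?_
  rintro Y ⟨U, d, V, h⟩
  classical
  obtain ⟨W, hW⟩ := exists_isOrthogonalCompletion (κ := Fin q)
    (by rw [hcard, Fintype.card_fin]) h.orthonormal_left
  obtain ⟨X, -, -, hsvd⟩ := h.exists_localCoordinates hW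
  exact hsvd.mono fun Z hZ => hZ.hasSimpleSVD

theorem continuousAt_simpleSingularValues (hcard : Fintype.card m = Fintype.card n + q)
    {Y : Matrix m n ℝ} (hY : HasSimpleSVD Y) : ContinuousAt simpleSingularValues Y := by
  obtain ⟨U, d, V, h⟩ := hY
  classical
  obtain ⟨W, hW⟩ := exists_isOrthogonalCompletion (κ := Fin q)
    (by rw [hcard, Fintype.card_fin]) h.orthonormal_left
  obtain ⟨X, -, hX, hsvd⟩ := h.exists_localCoordinates hW
  have hsing : ContinuousAt (fun Z => d + principalDiagonal (X Z)) Y :=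
    continuousAt_const.add
      (principalDiagonal.toContinuousLinearMap.continuous.continuousAt.comp hX.continuousAt)
  exact hsing.congr (hsvd.mono fun Z hZ => hZ.simpleSingularValues_eq.symm)

theorem continuousAt_simpleRankOne (hcard : Fintype.card m = Fintype.card n + q)
    {Y : Matrix m n ℝ} (hY : HasSimpleSVD Y) (k : n) : ContinuousAt (simpleRankOne k) Y := by
  obtain ⟨U, d, V, h⟩ := hY
  obtain ⟨L, hL, -⟩ := h.exists_hasFDerivAt_shift hcard (k := k) (c := 1)
    (add_pos (h.pos k) one_pos).le
  refine (hL.continuousAt.sub continuousAt_id).congr (.of_forall fun Z => ?_)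
  simp only [Pi.sub_apply, one_smul, id_eq, add_sub_cancel_left]

end SimpleSVDRegularity

section Measurability

theorem measurable_of_continuousAt_of_eq_const {E F : Type*} [TopologicalSpace E]
    [MeasurableSpace E] [OpensMeasurableSpace E] [TopologicalSpace F] [MeasurableSpace F]
    [BorelSpace F] {s : Set E} (hs : IsOpen s) {f : E → F} {y : F}
    (hf : ∀ x ∈ s, ContinuousAt f x) (hy : ∀ x ∉ s, f x = y) :
    Measurable f := by
  classical
  have hpiecewise : f = s.piecewise f fun _ => y := by
    ext x
    by_cases hx : x ∈ s
    · rw [Set.piecewise_eq_of_mem _ _ _ hx]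
    · rw [Set.piecewise_eq_of_notMem _ _ _ hx, hy x hx]
  rw [hpiecewise]
  exact ContinuousOn.measurable_piecewise (fun x hx => (hf x hx).continuousWithinAt)
    continuousOn_const hs.measurableSet

variable {m n : Type*} [Fintype m] [Fintype n] [LinearOrder n] {q : ℕ}

theorem measurableSet_hasSimpleSVD (hcard : Fintype.card m = Fintype.card n + q) :
    MeasurableSet {Y : m → n → ℝ | HasSimpleSVD (Matrix.of Y)} :=
  have hopen : IsOpen {Y : m → n → ℝ | HasSimpleSVD (Matrix.of Y)} :=
    isOpen_setOf_hasSimpleSVD hcard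
  hopen.measurableSet

theorem measurable_simpleSingularValues (hcard : Fintype.card m = Fintype.card n + q) :
    Measurable fun Y : m → n → ℝ => simpleSingularValues (Matrix.of Y) :=
  have hopen : IsOpen {Y : m → n → ℝ | HasSimpleSVD (Matrix.of Y)} :=
    isOpen_setOf_hasSimpleSVD hcard
  measurable_of_continuousAt_of_eq_const hopen
    (fun _ hY => continuousAt_simpleSingularValues hcard hY) fun _ hY => dif_neg hY

theorem measurable_simpleRankOne (hcard : Fintype.card m = Fintype.card n + q) (k : n) :
    Measurable fun Y : m → n → ℝ => Matrix.of.symm (simpleRankOne k (Matrix.of Y)) :=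
  have hopen : IsOpen {Y : m → n → ℝ | HasSimpleSVD (Matrix.of Y)} :=
    isOpen_setOf_hasSimpleSVD hcard
  have hcont : ∀ Y ∈ {Y : m → n → ℝ | HasSimpleSVD (Matrix.of Y)}, ContinuousAt
      (fun Y : m → n → ℝ => Matrix.of.symm (simpleRankOne k (Matrix.of Y))) Y :=
    fun _ hY => continuousAt_simpleRankOne hcard hY k
  measurable_of_continuousAt_of_eq_const hopen hcont fun _ hY => dif_neg hY

end Measurability

section SingularGap

variable {n : Type*} [LinearOrder n] {k k' : n} {d : n → ℝ}

/-- The interval of admissible values for the `k`-th singular value when the others are given by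
`d`: above `d k'` and below every `d j` with `j < k`. For `k' = k` it is the part above `d k`. -/
def singularGap (k k' : n) (d : n → ℝ) : Set ℝ :=
  {z | d k' < z ∧ ∀ j < k, z < d j}

theorem isOpen_singularGap [Finite n] (k k' : n) (d : n → ℝ) : IsOpen (singularGap k k' d) := by
  simp only [singularGap, Set.ofPred_and, Set.ofPred_forall]
  exact isOpen_Ioi.inter (isOpen_iInter_of_finite fun _ => isOpen_iInter_of_finite fun _ =>
    isOpen_Iio)

theorem measurableSet_singularGap [Countable n] (k k' : n) :
    MeasurableSet {x : (n → ℝ) × ℝ | x.2 ∈ singularGap k k' x.1} := by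
  have hinter : {x : (n → ℝ) × ℝ | x.2 ∈ singularGap k k' x.1} =
      {x | x.1 k' < x.2} ∩ ⋂ j, ⋂ _ : j < k, {x | x.2 < x.1 j} := by
    ext x
    simp [singularGap]
  rw [hinter]
  exact (measurableSet_lt (by fun_prop) (by fun_prop)).inter (.iInter fun j => .iInter fun _ =>
    measurableSet_lt (by fun_prop) (by fun_prop))

theorem singularGap_update_of_ne (hk : k' ≠ k) (x : ℝ) :
    singularGap k k' (Function.update d k x) = singularGap k k' d := by
  ext z
  simp only [singularGap, Set.mem_ofPred_eq, Function.update_of_ne hk]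
  refine and_congr_right fun _ => forall₂_congr fun j hj => ?_
  rw [Function.update_of_ne hj.ne]

theorem singularGap_self_update {z : ℝ} (hz : d k' ≤ z) :
    singularGap k k (Function.update d k z) = Set.Ioi z ∩ singularGap k k' d := by
  ext x
  simp only [singularGap, Set.mem_inter_iff, Set.mem_ofPred_eq, Set.mem_Ioi, Function.update_self]
  refine and_congr_right fun hx => ⟨fun h => ⟨hz.trans_lt hx, fun j hj => ?_⟩,
    fun h j hj => ?_⟩
  · simpa only [Function.update_of_ne hj.ne] using h j hj
  · simpa only [Function.update_of_ne hj.ne] using h.2 j hj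

theorem mem_singularGap_self (hk : k < k') (hd : StrictAnti d) : d k ∈ singularGap k k' d :=
  ⟨hd hk, fun _ hj => hd hj⟩

theorem lt_of_mem_singularGap (hk : k ⋖ k') (hd : Antitone d) {z : ℝ}
    (hz : z ∈ singularGap k k' d) {j : n} (hj : k < j) : d j < z :=
  (hd (hk.ge_of_gt hj)).trans_lt hz.1

theorem strictAnti_update_of_mem_singularGap (hk : k ⋖ k') (hd : StrictAnti d) {z : ℝ}
    (hz : z ∈ singularGap k k' d) : StrictAnti (Function.update d k z) := by
  intro i j hij
  rcases eq_or_ne i k with rfl | hi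
  · rw [Function.update_self, Function.update_of_ne hij.ne']
    exact lt_of_mem_singularGap hk hd.antitone hz hij
  rw [Function.update_of_ne hi]
  rcases eq_or_ne j k with rfl | hj
  · rw [Function.update_self]
    exact hz.2 i hij
  · rw [Function.update_of_ne hj]
    exact hd hij

theorem sq_ne_sq_of_mem_singularGap (hk : k ⋖ k') (hd : Antitone d) (hnonneg : ∀ i, 0 ≤ d i)
    {z : ℝ} (hz : z ∈ singularGap k k' d) {j : n} (hj : j ≠ k) : z ^ 2 ≠ d j ^ 2 := by
  rw [Ne, sq_eq_sq₀ ((hnonneg k').trans hz.1.le) (hnonneg j)]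
  rcases hj.lt_or_gt with hjk | hkj
  · exact (hz.2 j hjk).ne
  · exact (lt_of_mem_singularGap hk hd hz hkj).ne'

end SingularGap

section SingularShift

variable {m n : Type*} [Fintype m] [Fintype n] [LinearOrder n]

/-- The flow translating the `k`-th singular value of `Y` by `c` along the rank-one factor
`U_k V_kᵀ`. -/
noncomputable def singularShift (k : n) (c : ℝ) (Y : m → n → ℝ) : m → n → ℝ :=
  Y + c • Matrix.of.symm (simpleRankOne k (Matrix.of Y))

variable {k k' : n} {Y U : Matrix m n ℝ} {d : n → ℝ} {V : Matrix n n ℝ} {c : ℝ}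

theorem IsSimpleSVD.singularShift (h : IsSimpleSVD Y U d V) (hk : k ⋖ k')
    (hc : d k + c ∈ singularGap k k' d) :
    IsSimpleSVD (Matrix.of (singularShift k c (Matrix.of.symm Y))) U
      (Function.update d k (d k + c)) V := by
  have hshift := h.shift (strictAnti_update_of_mem_singularGap hk h.strictAnti hc)
    ((h.pos k').trans hc.1)
  rwa [← h.simpleRankOne_eq] at hshift

end SingularShift

section CSVStatistic

theorem integrable_exp_neg_mul_sq_mul_polynomial {b : ℝ} (hb : 0 < b) (P : Polynomial ℝ) :
    Integrable fun x : ℝ => Real.exp (-b * x ^ 2) * P.eval x := by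
  induction P using Polynomial.induction_on' with
  | add P Q hP hQ =>
    simp only [Polynomial.eval_add, mul_add]
    exact hP.add hQ
  | monomial i a =>
    have hmoment := integrable_rpow_mul_exp_neg_mul_sq hb (s := (i : ℝ))
      (neg_one_lt_zero.trans_le i.cast_nonneg)
    refine (hmoment.const_mul a).congr (.of_forall fun x => ?_)
    simp only [Real.rpow_natCast, Polynomial.eval_monomial]
    ring

theorem integrable_exp_neg_sub_sq_div_mul_polynomial {v : ℝ} (hv : 0 < v) (Λ : ℝ)
    (P : Polynomial ℝ) : Integrable fun z => Real.exp (-(z - Λ) ^ 2 / (2 * v)) * P.eval z := by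
  have hcentered := (integrable_exp_neg_mul_sq_mul_polynomial (b := 1 / (2 * v)) (by positivity)
    (P.comp (Polynomial.X + Polynomial.C Λ))).comp_sub_right Λ
  refine hcentered.congr (.of_forall fun z => ?_)
  have hexp : -(1 / (2 * v)) * (z - Λ) ^ 2 = -(z - Λ) ^ 2 / (2 * v) := by ring
  have heval : (P.comp (Polynomial.X + Polynomial.C Λ)).eval (z - Λ) = P.eval z := by
    simp only [Polynomial.eval_comp, Polynomial.eval_add, Polynomial.eval_X, Polynomial.eval_C,
      sub_add_cancel]
  beta_reduce
  rw [hexp, heval]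

theorem measurable_setIntegral_prodMk_left {α β : Type*} [MeasurableSpace α] [MeasurableSpace β]
    {μ : Measure β} [SFinite μ] {f : α × β → ℝ} (hf : Measurable f) {s : Set (α × β)}
    (hs : MeasurableSet s) : Measurable fun a => ∫ b in Prod.mk a ⁻¹' s, f (a, b) ∂μ := by
  have hmeas := ((hf.indicator hs).stronglyMeasurable.integral_prod_right' (ν := μ)).measurable
  have hindicator : ∀ a, ∫ b, s.indicator f (a, b) ∂μ = ∫ b in Prod.mk a ⁻¹' s, f (a, b) ∂μ :=
    fun a => integral_indicator (f := fun b => f (a, b)) (measurable_prodMk_left hs)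
  simpa only [hindicator] using hmeas

variable {n : Type*} [Fintype n] [LinearOrder n] (v : NNReal) (Λ : ℝ) (q : ℕ) {k k' : n}
  {d : n → ℝ}

/-- The unnormalized conditional density at `z` of the `k`-th singular value of a matrix with
Gaussian entries of variance `v`, given its singular vectors and its other singular values `d j`;
`q` is the excess of rows over columns and `Λ` is the paper's `U_kᵀ B V_k`. -/
noncomputable def csvDensity (k : n) (d : n → ℝ) (z : ℝ) : ℝ :=
  Real.exp (-(z - Λ) ^ 2 / (2 * v)) * z ^ q * ∏ j ∈ Finset.univ.erase k, |z ^ 2 - d j ^ 2|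

theorem csvDensity_eq (k : n) (d : n → ℝ) (z : ℝ) :
    csvDensity v Λ q k d z = Real.exp (-(z - Λ) ^ 2 / (2 * v)) * svdJacobian q k d z :=
  mul_assoc _ _ _

theorem csvDensity_update (k : n) (d : n → ℝ) (x : ℝ) :
    csvDensity v Λ q k (Function.update d k x) = csvDensity v Λ q k d := by
  ext z
  rw [csvDensity_eq, csvDensity_eq, svdJacobian_update]

theorem csvDensity_pos (hk : k ⋖ k') (hd : Antitone d) (hnonneg : ∀ i, 0 ≤ d i) {z : ℝ}
    (hz : z ∈ singularGap k k' d) : 0 < csvDensity v Λ q k d z := by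
  rw [csvDensity_eq]
  exact mul_pos (Real.exp_pos _) (svdJacobian_pos q ((hnonneg k').trans_lt hz.1) fun j hj =>
    sq_ne_sq_of_mem_singularGap hk hd hnonneg hz hj)

theorem measurable_csvDensity (k : n) :
    Measurable fun x : ((n → ℝ) × ℝ) × ℝ => csvDensity v x.1.2 q k x.1.1 x.2 := by
  unfold csvDensity
  fun_prop

theorem continuous_csvDensity (k : n) (d : n → ℝ) : Continuous (csvDensity v Λ q k d) := by
  unfold csvDensity
  fun_prop

theorem integrable_csvDensity {v : NNReal} (hv : v ≠ 0) (k : n) (d : n → ℝ) :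
    Integrable (csvDensity v Λ q k d) := by
  have hgauss := integrable_exp_neg_sub_sq_div_mul_polynomial (NNReal.coe_pos.2 hv.pos) Λ
    (Polynomial.X ^ q * ∏ j ∈ Finset.univ.erase k, (Polynomial.X ^ 2 - Polynomial.C (d j ^ 2)))
  refine hgauss.mono (continuous_csvDensity v Λ q k d).aestronglyMeasurable
    (.of_forall fun z => le_of_eq ?_)
  simp only [csvDensity, Polynomial.eval_mul, Polynomial.eval_pow, Polynomial.eval_X,
    Polynomial.eval_prod, Polynomial.eval_sub, Polynomial.eval_C, norm_mul, norm_prod,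
    Real.norm_eq_abs, abs_abs, mul_assoc]

/-- The shifted CSV statistic `S_{k,Λ}`: the conditional survival function of the `k`-th singular
value, evaluated at `d k`. The index `k'` is the successor of `k`. -/
noncomputable def csvStatistic (k k' : n) (d : n → ℝ) : ℝ :=
  (∫ z in singularGap k k d, csvDensity v Λ q k d z) /
    ∫ z in singularGap k k' d, csvDensity v Λ q k d z

theorem measurable_csvStatistic (k k' : n) :
    Measurable fun x : (n → ℝ) × ℝ => csvStatistic v x.2 q k k' x.1 := by
  have hint : ∀ k', Measurable fun x : (n → ℝ) × ℝ =>
      ∫ z in singularGap k k' x.1, csvDensity v x.2 q k x.1 z := fun k' =>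
    measurable_setIntegral_prodMk_left (measurable_csvDensity v q k)
      ((show Measurable fun x : ((n → ℝ) × ℝ) × ℝ => (x.1.1, x.2) by fun_prop)
        (measurableSet_singularGap k k'))
  exact (hint k).div (hint k')

theorem csvStatistic_update (hk : k ⋖ k') {z : ℝ} (hz : z ∈ singularGap k k' d) :
    csvStatistic v Λ q k k' (Function.update d k z) =
      (∫ x in Set.Ioi z, csvDensity v Λ q k d x ∂volume.restrict (singularGap k k' d)) /
        ∫ x in singularGap k k' d, csvDensity v Λ q k d x := by
  rw [csvStatistic, csvDensity_update, singularGap_self_update hz.1.le,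
    singularGap_update_of_ne hk.lt.ne', Measure.restrict_restrict measurableSet_Ioi]

section Conditional

variable {v}

theorem setLIntegral_csvDensity (hk : k ⋖ k') (hnonneg : ∀ i, 0 ≤ d i) (hv : v ≠ 0)
    (hd : Antitone d) :
    ∫⁻ z in singularGap k k' d, ENNReal.ofReal (csvDensity v Λ q k d z) =
      ENNReal.ofReal (∫ z in singularGap k k' d, csvDensity v Λ q k d z) :=
  (ofReal_integral_eq_lintegral_ofReal (integrable_csvDensity Λ q hv k d).integrableOn
    (ae_restrict_of_forall_mem (isOpen_singularGap k k' d).measurableSet fun _ hz =>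
      (csvDensity_pos v Λ q hk hd hnonneg hz).le)).symm

theorem setLIntegral_csvDensity_ne_zero (hk : k ⋖ k') (hnonneg : ∀ i, 0 ≤ d i)
    (hd : StrictAnti d) :
    ∫⁻ z in singularGap k k' d, ENNReal.ofReal (csvDensity v Λ q k d z) ≠ 0 := by
  have hgap := isOpen_singularGap k k' d
  have hmeas := (continuous_csvDensity v Λ q k d).measurable.ennreal_ofReal
  refine ((setLIntegral_pos_iff hmeas).2 ?_).ne'
  rw [Set.inter_eq_right.2 fun z hz => Function.mem_support.2
    (ENNReal.ofReal_pos.2 (csvDensity_pos v Λ q hk hd.antitone hnonneg hz)).ne']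
  exact hgap.measure_pos volume ⟨d k, mem_singularGap_self hk.lt hd⟩

theorem setLIntegral_csvDensity_mul_indicator (hk : k ⋖ k') (hnonneg : ∀ i, 0 ≤ d i)
    (hv : v ≠ 0) (hd : Antitone d) {A : Set ℝ} (hA : MeasurableSet A) :
    ∫⁻ z in singularGap k k' d, ENNReal.ofReal (csvDensity v Λ q k d z) *
        A.indicator 1 (csvStatistic v Λ q k k' (Function.update d k z)) =
      (∫⁻ z in singularGap k k' d, ENNReal.ofReal (csvDensity v Λ q k d z)) *
        volume.restrict (Set.Ioo 0 1) A := by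
  have hgap := (isOpen_singularGap k k' d).measurableSet
  rw [setLIntegral_csvDensity Λ q hk hnonneg hv hd, ← lintegral_ofReal_survival
    (ae_restrict_of_forall_mem hgap fun _ hz => (csvDensity_pos v Λ q hk hd hnonneg hz).le)
    (integrable_csvDensity Λ q hv k d).integrableOn hA]
  exact setLIntegral_congr_fun hgap fun z hz => by rw [csvStatistic_update v Λ q hk hz]

end Conditional

end CSVStatistic

section FrobeniusInner

variable {ι κ : Type*} [Fintype ι] [Fintype κ]

/-- The Frobenius inner product of two real matrices, given as functions. -/
def frobeniusInner (X Y : ι → κ → ℝ) : ℝ := ∑ i, ∑ j, X i j * Y i j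

theorem sum_sq_add_smul_sub (Y Q B : ι → κ → ℝ) (c : ℝ) :
    ∑ i, ∑ j, ((Y + c • Q) i j - B i j) ^ 2 = ∑ i, ∑ j, (Y i j - B i j) ^ 2 +
      2 * c * (frobeniusInner Q Y - frobeniusInner Q B) + c ^ 2 * frobeniusInner Q Q := by
  simp only [frobeniusInner, Finset.mul_sum, ← Finset.sum_add_distrib, ← Finset.sum_sub_distrib]
  refine Finset.sum_congr rfl fun i _ => Finset.sum_congr rfl fun j _ => ?_
  simp only [Pi.add_apply, Pi.smul_apply, smul_eq_mul]
  ring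

theorem prod_prod_gaussianPDF_eq (B : ι → κ → ℝ) (v : NNReal) (Y : ι → κ → ℝ) :
    ∏ i, ∏ j, gaussianPDF (B i j) v (Y i j) =
      ENNReal.ofReal ((∏ _i : ι, ∏ _j : κ, (√(2 * Real.pi * v))⁻¹) *
        Real.exp (-(∑ i, ∑ j, (Y i j - B i j) ^ 2) / (2 * v))) := by
  have hreal : ∏ i, ∏ j, gaussianPDFReal (B i j) v (Y i j) =
      (∏ _i : ι, ∏ _j : κ, (√(2 * Real.pi * v))⁻¹) *
        Real.exp (-(∑ i, ∑ j, (Y i j - B i j) ^ 2) / (2 * v)) := by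
    simp only [gaussianPDFReal, Finset.prod_mul_distrib, ← Real.exp_sum, neg_div, Finset.sum_div,
      Finset.sum_neg_distrib]
  rw [← hreal, ENNReal.ofReal_prod_of_nonneg
    fun i _ => Finset.prod_nonneg fun j _ => gaussianPDFReal_nonneg _ _ _]
  refine Finset.prod_congr rfl fun i _ => ?_
  exact (ENNReal.ofReal_prod_of_nonneg fun j _ => gaussianPDFReal_nonneg _ _ _).symm

theorem prod_prod_gaussianPDF_add_smul_mul (Y B : ι → κ → ℝ) (v : NNReal) {Q : ι → κ → ℝ}
    (hQ : frobeniusInner Q Q = 1) (c : ℝ) :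
    (∏ i, ∏ j, gaussianPDF (B i j) v ((Y + c • Q) i j)) * ENNReal.ofReal
        (Real.exp (-(frobeniusInner Q Y - frobeniusInner Q B) ^ 2 / (2 * v))) =
      (∏ i, ∏ j, gaussianPDF (B i j) v (Y i j)) * ENNReal.ofReal
        (Real.exp (-(frobeniusInner Q Y + c - frobeniusInner Q B) ^ 2 / (2 * v))) := by
  rw [prod_prod_gaussianPDF_eq, prod_prod_gaussianPDF_eq, sum_sq_add_smul_sub, hQ,
    ← ENNReal.ofReal_mul (by positivity), ← ENNReal.ofReal_mul (by positivity),
    mul_assoc (∏ _i : ι, ∏ _j : κ, _), mul_assoc (∏ _i : ι, ∏ _j : κ, _), ← Real.exp_add,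
    ← Real.exp_add]
  congr 3
  ring

end FrobeniusInner

section SingularOrbit

variable {m n : Type*} [Fintype m] [Fintype n]

theorem frobeniusInner_rankOne (U : Matrix m n ℝ) (V : Matrix n n ℝ) (k : n) (B : Matrix m n ℝ) :
    frobeniusInner (of.symm (rankOne U V k)) (of.symm B) = ∑ i, ∑ j, U i k * B i j * V j k :=
  Finset.sum_congr rfl fun _ _ => Finset.sum_congr rfl fun _ _ => mul_right_comm _ _ _

variable [LinearOrder n]

theorem frobeniusInner_rankOne_mul_diagonal {U : Matrix m n ℝ} {V : Matrix n n ℝ}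
    (hU : Uᵀ * U = 1) (hV : Vᵀ * V = 1) (k : n) (e : n → ℝ) :
    frobeniusInner (of.symm (rankOne U V k)) (of.symm (U * diagonal e * Vᵀ)) = e k := by
  have hconj : Uᵀ * (U * diagonal e * Vᵀ) * V = diagonal e := by
    calc Uᵀ * (U * diagonal e * Vᵀ) * V = Uᵀ * U * diagonal e * (Vᵀ * V) := by
          simp only [Matrix.mul_assoc]
      _ = diagonal e := by rw [hU, hV, Matrix.one_mul, Matrix.mul_one]
  have hentry := congrFun₂ hconj k k
  rw [diagonal_apply_eq] at hentry
  rw [frobeniusInner_rankOne, ← hentry, Finset.sum_comm, Matrix.mul_apply]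
  exact Finset.sum_congr rfl fun j _ => (Finset.sum_mul _ _ _).symm

theorem IsSimpleSVD.frobeniusInner_rankOne_self {Y U : Matrix m n ℝ} {d : n → ℝ}
    {V : Matrix n n ℝ} (h : IsSimpleSVD Y U d V) (k : n) :
    frobeniusInner (of.symm (rankOne U V k)) (of.symm Y) = d k := by
  rw [h.eq, frobeniusInner_rankOne_mul_diagonal h.orthonormal_left h.orthonormal_right]

theorem IsSimpleSVD.frobeniusInner_rankOne_rankOne {Y U : Matrix m n ℝ} {d : n → ℝ}
    {V : Matrix n n ℝ} (h : IsSimpleSVD Y U d V) (k : n) :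
    frobeniusInner (of.symm (rankOne U V k)) (of.symm (rankOne U V k)) = 1 := by
  have hsingle := frobeniusInner_rankOne_mul_diagonal h.orthonormal_left h.orthonormal_right k
    (Pi.single k 1)
  rwa [mul_diagonal_single_mul_transpose, one_smul, Pi.single_eq_same] at hsingle

end SingularOrbit

section ShiftDomain

variable {m n : Type*} [Fintype m] [Fintype n] [LinearOrder n]

/-- The matrices whose `k`-th singular value may be translated by `c` without collision: the domain
on which `singularShift k c` is inverted by `singularShift k (-c)`. -/
def shiftDomain (k k' : n) (c : ℝ) : Set (m → n → ℝ) :=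
  {Y | HasSimpleSVD (of Y) ∧
    simpleSingularValues (of Y) k + c ∈ singularGap k k' (simpleSingularValues (of Y))}

variable {k k' : n} {c : ℝ} {Y : m → n → ℝ} {q : ℕ}

theorem simpleSingularValues_singularShift (hk : k ⋖ k') (hY : Y ∈ shiftDomain k k' c) :
    simpleSingularValues (of (singularShift k c Y)) =
      Function.update (simpleSingularValues (of Y)) k (simpleSingularValues (of Y) k + c) := by
  obtain ⟨U, V, h⟩ := hY.1.exists_isSimpleSVD
  exact (h.singularShift hk hY.2).simpleSingularValues_eq

theorem simpleRankOne_singularShift (hk : k ⋖ k') (hY : Y ∈ shiftDomain k k' c) :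
    simpleRankOne k (of (singularShift k c Y)) = simpleRankOne k (of Y) := by
  obtain ⟨U, V, h⟩ := hY.1.exists_isSimpleSVD
  exact ((h.singularShift hk hY.2).simpleRankOne_eq k).trans (h.simpleRankOne_eq k).symm

theorem singularShift_neg_singularShift (hk : k ⋖ k') (hY : Y ∈ shiftDomain k k' c) :
    singularShift k (-c) (singularShift k c Y) = Y := by
  rw [singularShift, simpleRankOne_singularShift hk hY, singularShift, neg_smul,
    add_neg_cancel_right]

theorem singularShift_mem_shiftDomain (hk : k ⋖ k') (hY : Y ∈ shiftDomain k k' c) :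
    singularShift k c Y ∈ shiftDomain k k' (-c) := by
  obtain ⟨U, V, h⟩ := hY.1.exists_isSimpleSVD
  refine ⟨(h.singularShift hk hY.2).hasSimpleSVD, ?_⟩
  rw [simpleSingularValues_singularShift hk hY, singularGap_update_of_ne hk.lt.ne',
    Function.update_self, add_neg_cancel_right]
  exact mem_singularGap_self hk.lt h.strictAnti

theorem singularShift_image_shiftDomain (hk : k ⋖ k') (c : ℝ) :
    singularShift k c '' shiftDomain k k' c = (shiftDomain k k' (-c) : Set (m → n → ℝ)) := by
  refine Set.Subset.antisymm
    (Set.image_subset_iff.2 fun Y hY => singularShift_mem_shiftDomain hk hY)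
    fun Y hY => ⟨singularShift k (-c) Y, ?_, ?_⟩
  · simpa only [neg_neg] using singularShift_mem_shiftDomain hk hY
  · simpa only [neg_neg] using singularShift_neg_singularShift hk hY

theorem injOn_singularShift (hk : k ⋖ k') (c : ℝ) :
    Set.InjOn (singularShift k c) (shiftDomain k k' c : Set (m → n → ℝ)) :=
  Set.LeftInvOn.injOn fun _ hY => singularShift_neg_singularShift hk hY

theorem measurable_singularShift (hcard : Fintype.card m = Fintype.card n + q) (k : n) :
    Measurable fun x : (m → n → ℝ) × ℝ => singularShift k x.2 x.1 :=
  measurable_fst.add (measurable_snd.smul ((measurable_simpleRankOne hcard k).comp measurable_fst))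

theorem measurableSet_uncurry_shiftDomain (hcard : Fintype.card m = Fintype.card n + q) (k k' : n) :
    MeasurableSet {x : (m → n → ℝ) × ℝ | x.1 ∈ shiftDomain k k' x.2} := by
  have hsing := (measurable_simpleSingularValues hcard).comp
    (measurable_fst : Measurable (Prod.fst : (m → n → ℝ) × ℝ → _))
  exact (measurable_fst (measurableSet_hasSimpleSVD hcard)).inter
    ((hsing.prodMk (((measurable_pi_apply k).comp hsing).add measurable_snd))
      (measurableSet_singularGap k k'))

theorem measurableSet_shiftDomain (hcard : Fintype.card m = Fintype.card n + q) (k k' : n) (c : ℝ) :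
    MeasurableSet (shiftDomain k k' c : Set (m → n → ℝ)) :=
  measurable_prodMk_right (y := c) (measurableSet_uncurry_shiftDomain hcard k k')

theorem setLIntegral_shiftDomain_neg (hcard : Fintype.card m = Fintype.card n + q) (hk : k ⋖ k')
    (c : ℝ) (g : (m → n → ℝ) → ℝ≥0∞) :
    ∫⁻ Y in shiftDomain k k' (-c), g Y =
      ∫⁻ Y in shiftDomain k k' c, ENNReal.ofReal
        (svdJacobian q k (simpleSingularValues (of Y)) (simpleSingularValues (of Y) k + c) /
          svdJacobian q k (simpleSingularValues (of Y)) (simpleSingularValues (of Y) k)) *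
        g (singularShift k c Y) := by
  have hmeas := measurableSet_shiftDomain hcard k k' c
  have hderiv : ∀ Y ∈ (shiftDomain k k' c : Set (m → n → ℝ)),
      ∃ L : (m → n → ℝ) →L[ℝ] (m → n → ℝ), HasFDerivAt (singularShift k c) L Y ∧ |L.det| =
        svdJacobian q k (simpleSingularValues (of Y)) (simpleSingularValues (of Y) k + c) /
          svdJacobian q k (simpleSingularValues (of Y)) (simpleSingularValues (of Y) k) := by
    intro Y hY
    obtain ⟨U, V, h⟩ := hY.1.exists_isSimpleSVD
    exact h.exists_hasFDerivAt_shift hcard ((h.pos k').trans hY.2.1).le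
  choose! L hL using hderiv
  rw [← singularShift_image_shiftDomain hk, lintegral_image_eq_lintegral_abs_det_fderiv_mul volume
    hmeas (fun Y hY => (hL Y hY).1.hasFDerivWithinAt) (injOn_singularShift hk c)]
  exact setLIntegral_congr_fun hmeas fun Y hY => by rw [(hL Y hY).2]

end ShiftDomain

section HeatBathWeight

variable {m n : Type*} [Fintype m] [Fintype n] [LinearOrder n]

/-- The paper's `Λ̃_k = ⟨U_k V_kᵀ, B⟩`, as a function of the data matrix `Y`. -/
noncomputable def signalProjection (B : m → n → ℝ) (k : n) (Y : m → n → ℝ) : ℝ :=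
  frobeniusInner (of.symm (simpleRankOne k (of Y))) B

/-- The unnormalized conditional density, with respect to `c`, of the translate of `Y` by `c` along
its orbit under `singularShift k`. -/
noncomputable def orbitWeight (v : NNReal) (B : m → n → ℝ) (q : ℕ) (k k' : n) (Y : m → n → ℝ)
    (c : ℝ) : ℝ≥0∞ :=
  (shiftDomain k k' c).indicator (fun Y => ENNReal.ofReal (csvDensity v (signalProjection B k Y) q k
    (simpleSingularValues (of Y)) (simpleSingularValues (of Y) k + c))) Y

variable {v : NNReal} {B : m → n → ℝ} {q : ℕ} {k k' : n} {c : ℝ} {Y : m → n → ℝ}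

theorem signalProjection_singularShift (hk : k ⋖ k') (hY : Y ∈ shiftDomain k k' c) :
    signalProjection B k (singularShift k c Y) = signalProjection B k Y := by
  rw [signalProjection, simpleRankOne_singularShift hk hY, signalProjection]

theorem measurable_signalProjection (hcard : Fintype.card m = Fintype.card n + q) :
    Measurable (signalProjection B k) := by
  have hQ := measurable_simpleRankOne hcard k
  unfold signalProjection frobeniusInner
  fun_prop

theorem measurable_orbitWeight (hcard : Fintype.card m = Fintype.card n + q) :
    Measurable (Function.uncurry (orbitWeight v B q k k')) := by
  have hsing := measurable_simpleSingularValues hcard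
  have hproj := measurable_signalProjection (B := B) (k := k) hcard
  have hdensity := (measurable_csvDensity v q k).comp (((hsing.comp measurable_fst).prodMk
    (hproj.comp measurable_fst)).prodMk ((((measurable_pi_apply k).comp hsing).comp
      measurable_fst).add (measurable_snd : Measurable (Prod.snd : (m → n → ℝ) × ℝ → ℝ))))
  exact hdensity.ennreal_ofReal.indicator (measurableSet_uncurry_shiftDomain hcard k k')

theorem lintegral_orbitWeight_mul (hY : HasSimpleSVD (of Y)) {f g : ℝ → ℝ≥0∞}
    (hfg : ∀ c, Y ∈ shiftDomain k k' c → f c = g (simpleSingularValues (of Y) k + c)) :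
    ∫⁻ c, orbitWeight v B q k k' Y c * f c =
      ∫⁻ z in singularGap k k' (simpleSingularValues (of Y)), ENNReal.ofReal
        (csvDensity v (signalProjection B k Y) q k (simpleSingularValues (of Y)) z) * g z := by
  rw [← lintegral_indicator (isOpen_singularGap _ _ _).measurableSet,
    ← lintegral_add_left_eq_self (Set.indicator _ _) (simpleSingularValues (of Y) k)]
  refine lintegral_congr fun c => ?_
  by_cases hc : Y ∈ shiftDomain k k' c
  · rw [orbitWeight, Set.indicator_of_mem hc, Set.indicator_of_mem hc.2, hfg c hc]
  · rw [orbitWeight, Set.indicator_of_notMem hc, Set.indicator_of_notMem fun h => hc ⟨hY, h⟩,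
      zero_mul]

theorem lintegral_orbitWeight (hY : HasSimpleSVD (of Y)) :
    ∫⁻ c, orbitWeight v B q k k' Y c =
      ∫⁻ z in singularGap k k' (simpleSingularValues (of Y)), ENNReal.ofReal
        (csvDensity v (signalProjection B k Y) q k (simpleSingularValues (of Y)) z) := by
  simpa only [mul_one] using
    lintegral_orbitWeight_mul (v := v) (B := B) (q := q) (g := fun _ => 1) hY fun _ _ => rfl

theorem lintegral_orbitWeight_singularShift (hk : k ⋖ k') (hY : Y ∈ shiftDomain k k' c) :
    ∫⁻ b, orbitWeight v B q k k' (singularShift k c Y) b = ∫⁻ b, orbitWeight v B q k k' Y b := by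
  rw [lintegral_orbitWeight (singularShift_mem_shiftDomain hk hY).1, lintegral_orbitWeight hY.1,
    simpleSingularValues_singularShift hk hY, signalProjection_singularShift hk hY,
    singularGap_update_of_ne hk.lt.ne', csvDensity_update]

theorem lintegral_orbitWeight_ne_zero (hk : k ⋖ k') (hY : HasSimpleSVD (of Y)) :
    ∫⁻ c, orbitWeight v B q k k' Y c ≠ 0 := by
  obtain ⟨U, V, h⟩ := hY.exists_isSimpleSVD
  rw [lintegral_orbitWeight hY]
  exact setLIntegral_csvDensity_ne_zero _ q hk (fun i => (h.pos i).le) h.strictAnti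

theorem lintegral_orbitWeight_ne_top (hv : v ≠ 0) (hk : k ⋖ k') (hY : HasSimpleSVD (of Y)) :
    ∫⁻ c, orbitWeight v B q k k' Y c ≠ ∞ := by
  obtain ⟨U, V, h⟩ := hY.exists_isSimpleSVD
  rw [lintegral_orbitWeight hY, setLIntegral_csvDensity _ q hk (fun i => (h.pos i).le) hv
    h.strictAnti.antitone]
  exact ENNReal.ofReal_ne_top

theorem lintegral_orbitWeight_mul_indicator (hv : v ≠ 0) (hk : k ⋖ k') (hY : HasSimpleSVD (of Y))
    {A : Set ℝ} (hA : MeasurableSet A) :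
    ∫⁻ c, orbitWeight v B q k k' Y c * A.indicator 1
        (csvStatistic v (signalProjection B k (singularShift k c Y)) q k k'
          (simpleSingularValues (of (singularShift k c Y)))) =
      (∫⁻ c, orbitWeight v B q k k' Y c) * volume.restrict (Set.Ioo 0 1) A := by
  obtain ⟨U, V, h⟩ := hY.exists_isSimpleSVD
  rw [lintegral_orbitWeight hY, ← setLIntegral_csvDensity_mul_indicator _ q hk
    (fun i => (h.pos i).le) hv h.strictAnti.antitone hA]
  refine lintegral_orbitWeight_mul (g := fun z => A.indicator 1 (csvStatistic v
    (signalProjection B k Y) q k k' (Function.update (simpleSingularValues (of Y)) k z))) hY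
    fun c hc => ?_
  rw [simpleSingularValues_singularShift hk hc, signalProjection_singularShift hk hc]

end HeatBathWeight

section CSVUniform

variable {m n : Type*} [Fintype m] [Fintype n] [LinearOrder n] {q : ℕ} {k k' : n}

theorem IsSimpleSVD.svdJacobian_pos {Y U : Matrix m n ℝ} {d : n → ℝ} {V : Matrix n n ℝ}
    (h : IsSimpleSVD Y U d V) (q : ℕ) (k : n) : 0 < svdJacobian q k d (d k) :=
  _root_.svdJacobian_pos q (h.pos k) fun _ hj => h.sq_injective.ne hj.symm

theorem prod_prod_gaussianPDF_singularShift_mul (v : NNReal) (B : m → n → ℝ) {Y : m → n → ℝ}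
    (hY : HasSimpleSVD (of Y)) (c : ℝ) :
    (∏ i, ∏ j, gaussianPDF (B i j) v (singularShift k c Y i j)) * ENNReal.ofReal (Real.exp
        (-(simpleSingularValues (of Y) k - signalProjection B k Y) ^ 2 / (2 * v))) =
      (∏ i, ∏ j, gaussianPDF (B i j) v (Y i j)) * ENNReal.ofReal (Real.exp
        (-(simpleSingularValues (of Y) k + c - signalProjection B k Y) ^ 2 / (2 * v))) := by
  obtain ⟨U, V, h⟩ := hY.exists_isSimpleSVD
  have hnorm := h.frobeniusInner_rankOne_rankOne k
  have hself := h.frobeniusInner_rankOne_self k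
  rw [← h.simpleRankOne_eq] at hnorm hself
  rw [← hself]
  exact prod_prod_gaussianPDF_add_smul_mul Y B v hnorm c

theorem jacobian_mul_gaussianPDF_mul_csvDensity (v : NNReal) (B : m → n → ℝ) {Y : m → n → ℝ}
    (hY : HasSimpleSVD (of Y)) (c : ℝ) :
    ENNReal.ofReal
        (svdJacobian q k (simpleSingularValues (of Y)) (simpleSingularValues (of Y) k + c) /
          svdJacobian q k (simpleSingularValues (of Y)) (simpleSingularValues (of Y) k)) *
      ((∏ i, ∏ j, gaussianPDF (B i j) v (singularShift k c Y i j)) *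
        ENNReal.ofReal (csvDensity v (signalProjection B k Y) q k (simpleSingularValues (of Y))
          (simpleSingularValues (of Y) k))) =
    (∏ i, ∏ j, gaussianPDF (B i j) v (Y i j)) *
      ENNReal.ofReal (csvDensity v (signalProjection B k Y) q k (simpleSingularValues (of Y))
        (simpleSingularValues (of Y) k + c)) := by
  obtain ⟨U, V, h⟩ := hY.exists_isSimpleSVD
  have hJ := h.svdJacobian_pos q k
  rw [csvDensity_eq, csvDensity_eq, ENNReal.ofReal_mul (Real.exp_nonneg _),
    ENNReal.ofReal_mul (Real.exp_nonneg _), ← mul_assoc (∏ i, _),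
    prod_prod_gaussianPDF_singularShift_mul v B hY, mul_comm, mul_assoc _ (ENNReal.ofReal _),
    ← ENNReal.ofReal_mul hJ.le, mul_div_cancel₀ _ hJ.ne', mul_assoc]

theorem lintegral_orbitWeight_mul_gaussian (hcard : Fintype.card m = Fintype.card n + q)
    (B : m → n → ℝ) {v : NNReal} (hv : v ≠ 0) (c : ℝ) {g : (m → n → ℝ) → ℝ≥0∞}
    (hg : Measurable g) :
    ∫⁻ Y, orbitWeight v B q k k' Y c * g Y
        ∂Measure.pi (fun i => Measure.pi fun j => gaussianReal (B i j) v) =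
      ∫⁻ Y in shiftDomain k k' c, (∏ i, ∏ j, gaussianPDF (B i j) v (Y i j)) * ENNReal.ofReal
        (csvDensity v (signalProjection B k Y) q k (simpleSingularValues (of Y))
          (simpleSingularValues (of Y) k + c)) * g Y := by
  have hpdf : Measurable fun Y : m → n → ℝ => ∏ i, ∏ j, gaussianPDF (B i j) v (Y i j) := by
    fun_prop
  have hw : Measurable fun Y => orbitWeight v B q k k' Y c :=
    (measurable_orbitWeight hcard).comp measurable_prodMk_right
  rw [pi_pi_gaussianReal_eq_withDensity B hv,
    lintegral_withDensity_eq_lintegral_mul _ hpdf (g := fun Y => _ * _) (hw.mul hg), ←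
    lintegral_indicator (measurableSet_shiftDomain hcard k k' c)]
  refine lintegral_congr fun Y => ?_
  by_cases hY : Y ∈ shiftDomain k k' c
  · simp only [Pi.mul_apply, orbitWeight, Set.indicator_of_mem hY, mul_assoc]
  · simp only [Pi.mul_apply, orbitWeight, Set.indicator_of_notMem hY, zero_mul, mul_zero]

theorem lintegral_orbitWeight_neg_mul (hcard : Fintype.card m = Fintype.card n + q) (hk : k ⋖ k')
    (B : m → n → ℝ) {v : NNReal} (hv : v ≠ 0) (c : ℝ) {g : (m → n → ℝ) → ℝ≥0∞}
    (hg : Measurable g) :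
    ∫⁻ Y, orbitWeight v B q k k' Y (-c) * g Y
        ∂Measure.pi (fun i => Measure.pi fun j => gaussianReal (B i j) v) =
      ∫⁻ Y, orbitWeight v B q k k' Y c * g (singularShift k c Y)
        ∂Measure.pi (fun i => Measure.pi fun j => gaussianReal (B i j) v) := by
  have hshift : Measurable (singularShift k c : (m → n → ℝ) → m → n → ℝ) :=
    (measurable_singularShift hcard k).comp measurable_prodMk_right
  rw [lintegral_orbitWeight_mul_gaussian hcard B hv _ hg,
    lintegral_orbitWeight_mul_gaussian hcard B hv c (g := fun Y => g (singularShift k c Y))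
      (hg.comp hshift),
    setLIntegral_shiftDomain_neg hcard hk]
  refine setLIntegral_congr_fun (measurableSet_shiftDomain hcard k k' c) fun Y hY => ?_
  rw [← jacobian_mul_gaussianPDF_mul_csvDensity v B hY.1 c, signalProjection_singularShift hk hY,
    simpleSingularValues_singularShift hk hY, csvDensity_update, Function.update_self,
    add_neg_cancel_right, mul_assoc (ENNReal.ofReal _)]

theorem hasLaw_csvStatistic_gaussian (hcard : Fintype.card m = Fintype.card n + q) (hk : k ⋖ k')
    (B : m → n → ℝ) {v : NNReal} (hv : v ≠ 0)
    (hsimple : ∀ᵐ Y ∂Measure.pi fun i => Measure.pi fun j => gaussianReal (B i j) v,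
      HasSimpleSVD (of Y)) :
    HasLaw (fun Y => csvStatistic v (signalProjection B k Y) q k k' (simpleSingularValues (of Y)))
      (volume.restrict (Set.Ioo 0 1))
      (Measure.pi fun i => Measure.pi fun j => gaussianReal (B i j) v) := by
  have hS : Measurable fun Y : m → n → ℝ =>
      csvStatistic v (signalProjection B k Y) q k k' (simpleSingularValues (of Y)) :=
    (measurable_csvStatistic v q k k').comp
      ((measurable_simpleSingularValues hcard).prodMk (measurable_signalProjection hcard))
  refine ⟨hS.aemeasurable, ?_⟩
  rw [map_eq_of_heatBath (w := orbitWeight v B q k k') (Φ := singularShift k)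
    (measurable_orbitWeight hcard) (measurable_singularShift hcard k) hS
    (fun c _ hg => lintegral_orbitWeight_neg_mul hcard hk B hv c hg)
    (fun Y c hc => lintegral_orbitWeight_singularShift hk (Set.mem_of_indicator_ne_zero hc))
    (hsimple.mono fun _ => lintegral_orbitWeight_ne_zero hk)
    (hsimple.mono fun _ => lintegral_orbitWeight_ne_top hv hk)
    (fun _ hA => hsimple.mono fun _ hY => lintegral_orbitWeight_mul_indicator hv hk hY hA),
    measure_univ, one_smul]

end CSVUniform

theorem shifted_csv_statistic_uniform_general {m Ω : Type*} [Fintype m] {p q : ℕ}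
    (hcard : Fintype.card m = p + q) {k k' : Fin p} (hk : k ⋖ k') (B : m → Fin p → ℝ) {v : NNReal}
    (hv : v ≠ 0) [MeasurableSpace Ω] {P : Measure Ω} {Y U : Ω → m → Fin p → ℝ} {d : Ω → Fin p → ℝ}
    {V : Ω → Fin p → Fin p → ℝ}
    (hY : HasLaw Y (Measure.pi fun i => Measure.pi fun j => gaussianReal (B i j) v) P)
    (hSVD : ∀ᵐ ω ∂P, IsSVD (of (Y ω)) (of (U ω)) (d ω) (of (V ω))) :
    HasLaw (fun ω => csvStatistic v (∑ i, ∑ j, U ω i k * B i j * V ω j k) q k k' (d ω))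
      (volume.restrict (Set.Ioo 0 1)) P := by
  have hcard' : Fintype.card m = Fintype.card (Fin p) + q := by rwa [Fintype.card_fin]
  have hdisc : ∀ᵐ ω ∂P, gramDiscriminant (of (Y ω)) ≠ 0 := by
    refine ae_of_ae_map (p := fun Y => gramDiscriminant (of Y) ≠ 0) hY.aemeasurable ?_
    rw [hY.map_eq, pi_pi_gaussianReal_eq_withDensity B hv]
    exact withDensity_absolutelyContinuous _ _ (ae_gramDiscriminant_ne_zero (by omega))
  have hsimple : ∀ᵐ ω ∂P, IsSimpleSVD (of (Y ω)) (of (U ω)) (d ω) (of (V ω)) :=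
    hSVD.mp (hdisc.mono fun _ hω h => h.isSimpleSVD hω)
  have hlaw := hasLaw_csvStatistic_gaussian hcard' hk B hv
    ((hY.ae_iff (measurableSet_setOfPred.1 (measurableSet_hasSimpleSVD hcard'))).1
      (hsimple.mono fun _ h => h.hasSimpleSVD))
  refine (hlaw.fun_comp hY).congr (hsimple.mono fun ω h => ?_)
  beta_reduce
  rw [signalProjection, h.simpleRankOne_eq, h.simpleSingularValues_eq]
  exact congrArg (csvStatistic v · q k k' (d ω)) (frobeniusInner_rankOne _ _ k (of B)).symm

/-- **Theorem 2.3 (pivot for the k-th signal).**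
Model: `Y = B + E ∈ ℝ^{N×p}` (`N > p ≥ 1`) with i.i.d. `N(0,σ²)` entries of `E`; `Y = U D Vᵀ`
a measurably chosen SVD with decreasing nonnegative singular values `d`.  Fix a zero-based
index `k` with `k + 1 < p` (one-based `k+1 ∈ {1,…,p-1}`), and let
`Λ̃ = ⟨U_k V_kᵀ, B⟩ = U_kᵀ B V_k` (with `U_k, V_k` the k-th columns).  Then
`S_{k,Λ̃} = (∫_{d_k}^{d_{k-1}} e^{-(z-Λ̃)²/(2σ²)} z^{N-p} ∏_{j≠k} |z²-d_j²| dz) /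
           (∫_{d_{k+1}}^{d_{k-1}} e^{-(z-Λ̃)²/(2σ²)} z^{N-p} ∏_{j≠k} |z²-d_j²| dz)`
is uniform on `(0,1)`.  The upper limit `d_{k-1}` (convention `d_{-1} = ∞`) is encoded by
`∀ j < k, z < d j`. -/
theorem shifted_csv_statistic_uniform
    (N p : ℕ) (hNp : p < N) (hp : 1 ≤ p)
    (σ : ℝ) (hσ : 0 < σ)
    (B : Matrix (Fin N) (Fin p) ℝ)
    (k : ℕ) (hk : k + 1 < p)
    {Ω : Type} [MeasurableSpace Ω] (P : Measure Ω) [IsProbabilityMeasure P]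
    (Y U : Ω → Fin N → Fin p → ℝ) (V : Ω → Fin p → Fin p → ℝ) (d : Ω → Fin p → ℝ)
    (hYm : Measurable Y) (hUm : Measurable U) (hVm : Measurable V) (hdm : Measurable d)
    (hlaw : Measure.map Y P =
      Measure.pi (fun i : Fin N => Measure.pi (fun j : Fin p =>
        gaussianReal (B i j) ⟨σ ^ 2, sq_nonneg σ⟩)))
    (hSVD : ∀ ω, Matrix.of (Y ω) =
      Matrix.of (U ω) * Matrix.diagonal (d ω) * (Matrix.of (V ω))ᵀ)
    (hUorth : ∀ ω, (Matrix.of (U ω))ᵀ * Matrix.of (U ω) = 1)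
    (hVorth : ∀ ω, (Matrix.of (V ω))ᵀ * Matrix.of (V ω) = 1)
    (hanti : ∀ ω, Antitone (d ω))
    (hnonneg : ∀ ω i, 0 ≤ d ω i) :
    Measure.map (fun ω =>
      (∫ z in {z : ℝ | d ω ⟨k, by omega⟩ < z ∧ ∀ j : Fin p, (j : ℕ) < k → z < d ω j},
        Real.exp (-(z - ∑ i : Fin N, ∑ j : Fin p,
            U ω i ⟨k, by omega⟩ * B i j * V ω j ⟨k, by omega⟩) ^ 2 / (2 * σ ^ 2)) *
          z ^ (N - p) *
          ∏ j ∈ Finset.univ.erase (⟨k, by omega⟩ : Fin p), |z ^ 2 - d ω j ^ 2|) /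
      (∫ z in {z : ℝ | d ω ⟨k + 1, by omega⟩ < z ∧ ∀ j : Fin p, (j : ℕ) < k → z < d ω j},
        Real.exp (-(z - ∑ i : Fin N, ∑ j : Fin p,
            U ω i ⟨k, by omega⟩ * B i j * V ω j ⟨k, by omega⟩) ^ 2 / (2 * σ ^ 2)) *
          z ^ (N - p) *
          ∏ j ∈ Finset.univ.erase (⟨k, by omega⟩ : Fin p), |z ^ 2 - d ω j ^ 2|)) P
      = volume.restrict (Set.Ioo (0 : ℝ) 1) :=
  have hcard : Fintype.card (Fin N) = p + (N - p) := by rw [Fintype.card_fin]; omega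
  have hk' : (⟨k, by omega⟩ : Fin p) ⋖ ⟨k + 1, hk⟩ := Fin.covBy_iff.2 (Order.covBy_add_one k)
  have hσ' : (⟨σ ^ 2, sq_nonneg σ⟩ : NNReal) ≠ 0 :=
    fun h => (pow_pos hσ 2).ne' (congrArg NNReal.toReal h)
  (shifted_csv_statistic_uniform_general hcard hk' B hσ' ⟨hYm.aemeasurable, hlaw⟩
    (.of_forall fun ω => ⟨hSVD ω, hUorth ω, hVorth ω, hanti ω, hnonneg ω⟩)).map_eq
end

section
/- Let Y ∈ ℝ^{N×p} have i.i.d. N(0,1) entries and let s(Y) = (d₁,…,d_p) be its singular values arranged in decreasing order. Then there exists a constant C_{N,p} > 0 such that the law of s(Y) (the pushforward of the Gaussian matrix law under s) has density with respect to p-dimensional Lebesgue measure given by F_{N,p}(y₁,…,y_p) = C_{N,p} · e^{−(Σ_{i=1}^{p} y_i²)/2} · ∏_{i=1}^{p} y_i^{N−p} · ∏_{1 ≤ i < j ≤ p} (y_i² − y_j²) on the region {y₁ > y₂ > ⋯ > y_p > 0}, and density 0 outside the closure of that region. -/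
open MeasureTheory ProbabilityTheory Matrix

/-!
A finite measure on decreasing nonnegative vectors with Gaussian tails is determined by its joint
moments of even power sums, so it suffices to compare these for the law of the singular values and
for the claimed density. On both sides Gaussian integration by parts yields the same recursion for
them, the loop equations: for matrices along the vector field `Y * (Yᵀ * Y) ^ k`, for vectors along
the field `x i ^ (2 * k + 1)` it induces on singular values, the weight
`∏ x i ^ (N - p) * ∏ (x i ^ 2 - x j ^ 2)` accounting for the difference of the two divergences. The
loop equations determine all moments from the total mass, so no change of variables is needed.
-/

section MomentDeterminacy

open Filter Topology

theorem Ioo_subset_interior_integrableExpSet {μ : Measure ℝ} {c : ℝ}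
    (hμ : Integrable (fun x => Real.exp (c * |x|)) μ) :
    Set.Ioo (-c) c ⊆ interior (integrableExpSet id μ) := by
  refine interior_maximal (fun t ht => ?_) isOpen_Ioo
  refine hμ.mono' (by fun_prop) (.of_forall fun x => ?_)
  rw [Real.norm_eq_abs, Real.abs_exp]
  refine Real.exp_le_exp.2 ((le_abs_self _).trans ?_)
  rw [abs_mul]
  exact mul_le_mul_of_nonneg_right (abs_lt.2 ht).le (abs_nonneg x)

theorem complexMGF_eventuallyEq_of_moments {μ ν : Measure ℝ}
    (hμ : 0 ∈ interior (integrableExpSet id μ)) (hν : 0 ∈ interior (integrableExpSet id ν))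
    (h : ∀ n : ℕ, ∫ x, x ^ n ∂μ = ∫ x, x ^ n ∂ν) :
    complexMGF id μ =ᶠ[𝓝 0] complexMGF id ν := by
  have hderiv (n : ℕ) :
      iteratedDeriv n (complexMGF id μ) 0 = iteratedDeriv n (complexMGF id ν) 0 := by
    rw [iteratedDeriv_complexMGF (by simpa using hμ), iteratedDeriv_complexMGF (by simpa using hν)]
    have hn := congrArg (fun r : ℝ => (r : ℂ)) (h n)
    simp only [← integral_complex_ofReal] at hn
    simpa using hn
  have hsμ := (analyticAt_complexMGF (z := 0) (by simpa using hμ)).hasFPowerSeriesAt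
  have hsν := (analyticAt_complexMGF (z := 0) (by simpa using hν)).hasFPowerSeriesAt
  simp_rw [hderiv] at hsμ
  have hsub := hsμ.sub hsν
  rw [sub_self] at hsub
  exact hsub.eventually_eq_zero.mono fun z hz => sub_eq_zero.1 hz

-- The complex moment generating functions are analytic on the strip `|re z| < c`, have the same
-- Taylor series at `0`, and restrict to the characteristic functions on the imaginary axis.
theorem measure_real_ext_of_moments {μ ν : Measure ℝ} [IsFiniteMeasure μ] [IsFiniteMeasure ν]
    {c : ℝ} (hc : 0 < c) (hμ : Integrable (fun x => Real.exp (c * |x|)) μ)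
    (hν : Integrable (fun x => Real.exp (c * |x|)) ν)
    (h : ∀ n : ℕ, ∫ x, x ^ n ∂μ = ∫ x, x ^ n ∂ν) : μ = ν := by
  have hSμ := Ioo_subset_interior_integrableExpSet hμ
  have hSν := Ioo_subset_interior_integrableExpSet hν
  have h0 : (0 : ℝ) ∈ Set.Ioo (-c) c := ⟨neg_lt_zero.2 hc, hc⟩
  let S : Set ℂ := Complex.re ⁻¹' Set.Ioo (-c) c
  have hSconn : IsPreconnected S :=
    ((convex_Ioo (-c) c).is_linear_preimage Complex.reLm.isLinear).isPreconnected
  have hEq : Set.EqOn (complexMGF id μ) (complexMGF id ν) S :=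
    AnalyticOnNhd.eqOn_of_preconnected_of_eventuallyEq
      (fun _ hz => analyticAt_complexMGF (hSμ hz)) (fun _ hz => analyticAt_complexMGF (hSν hz))
      hSconn (z₀ := 0) (by simpa [S] using h0)
      (complexMGF_eventuallyEq_of_moments (hSμ h0) (hSν h0) h)
  refine Measure.ext_of_charFun (funext fun t => ?_)
  rw [← complexMGF_id_mul_I, ← complexMGF_id_mul_I]
  exact hEq (by simpa [S] using hc)

theorem measure_ext_of_dual_moments {E : Type*} [NormedAddCommGroup E] [NormedSpace ℝ E]
    [MeasurableSpace E] [BorelSpace E] [CompleteSpace E] [SecondCountableTopology E]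
    {μ ν : Measure E} [IsFiniteMeasure μ] [IsFiniteMeasure ν] {c : ℝ} (hc : 0 < c)
    (hμ : Integrable (fun x => Real.exp (c * ‖x‖)) μ)
    (hν : Integrable (fun x => Real.exp (c * ‖x‖)) ν)
    (h : ∀ (L : StrongDual ℝ E) (n : ℕ), ∫ x, L x ^ n ∂μ = ∫ x, L x ^ n ∂ν) : μ = ν := by
  have hexp (L : StrongDual ℝ E) {m : Measure E}
      (hm : Integrable (fun x => Real.exp (c * ‖x‖)) m) :
      Integrable (fun t => Real.exp (c / (‖L‖ + 1) * |t|)) (m.map L) := by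
    rw [integrable_map_measure (by fun_prop) (by fun_prop)]
    refine hm.mono' (by fun_prop) (.of_forall fun x => ?_)
    rw [Function.comp_apply, Real.norm_eq_abs, Real.abs_exp, Real.exp_le_exp,
      div_mul_eq_mul_div, mul_div_assoc]
    gcongr
    rw [div_le_iff₀ (by positivity), mul_comm]
    exact (L.le_opNorm x).trans (by gcongr; simp)
  refine Measure.ext_of_charFunDual (funext fun L => ?_)
  rw [charFunDual_eq_charFun_map_one, charFunDual_eq_charFun_map_one]
  congr 1
  refine measure_real_ext_of_moments (c := c / (‖L‖ + 1)) (by positivity) (hexp L hμ) (hexp L hν)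
    fun n => ?_
  rw [integral_map (by fun_prop) (by fun_prop), integral_map (by fun_prop) (by fun_prop)]
  exact h L n

theorem measurable_mvPolynomial_eval {ι : Type*} [Countable ι] (q : MvPolynomial ι ℝ) :
    Measurable fun x => MvPolynomial.eval x q :=
  (MvPolynomial.continuous_eval q).measurable

theorem integrable_mvPolynomial_eval_of_integrable_exp_norm {ι : Type*} [Fintype ι]
    {μ : Measure (ι → ℝ)} [IsFiniteMeasure μ] {c : ℝ} (hc : 0 < c)
    (hμ : Integrable (fun x => Real.exp (c * ‖x‖)) μ) (q : MvPolynomial ι ℝ) :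
    Integrable (fun x => MvPolynomial.eval x q) μ := by
  have hneg : Integrable (fun x : ι → ℝ => Real.exp (-c * ‖x‖)) μ := by
    refine hμ.mono' (by fun_prop) (.of_forall fun x => ?_)
    rw [Real.norm_eq_abs, Real.abs_exp, Real.exp_le_exp]
    gcongr
    linarith
  induction q using MvPolynomial.induction_on' with
  | add p q hp hq => simpa using hp.fun_add hq
  | monomial n a =>
    simp only [MvPolynomial.eval_monomial, Finsupp.prod_pow]
    refine Integrable.const_mul ?_ a
    refine (integrable_pow_of_integrable_exp_mul hc.ne' hμ hneg (∑ i, n i)).mono'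
      (Continuous.aestronglyMeasurable (by fun_prop)) (.of_forall fun x => ?_)
    rw [norm_prod, ← Finset.prod_pow_eq_pow_sum]
    gcongr with i
    rw [norm_pow]
    gcongr
    exact norm_le_pi_norm x i

theorem measure_pi_ext_of_integral_eval {ι : Type*} [Fintype ι] {μ ν : Measure (ι → ℝ)}
    [IsFiniteMeasure μ] [IsFiniteMeasure ν] {c : ℝ} (hc : 0 < c)
    (hμ : Integrable (fun x => Real.exp (c * ‖x‖)) μ)
    (hν : Integrable (fun x => Real.exp (c * ‖x‖)) ν)
    (h : ∀ q : MvPolynomial ι ℝ,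
      ∫ x, MvPolynomial.eval x q ∂μ = ∫ x, MvPolynomial.eval x q ∂ν) : μ = ν := by
  classical
  refine measure_ext_of_dual_moments hc hμ hν fun L n => ?_
  have heval (x : ι → ℝ) : L x ^ n = MvPolynomial.eval x
      ((∑ i, MvPolynomial.C (L (Pi.single i 1)) * MvPolynomial.X i) ^ n) := by
    conv_lhs => rw [← Finset.univ_sum_single x, map_sum]
    simp only [map_pow, map_sum, map_mul, MvPolynomial.eval_C, MvPolynomial.eval_X]
    congr! 2 with i
    rw [mul_comm, ← smul_eq_mul, ← map_smul, ← Pi.single_smul, smul_eq_mul, mul_one]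
  simpa only [heval] using h _

end MomentDeterminacy

section Symmetrization

open MvPolynomial

/-- The sum over all permutations of the coordinates of the corresponding image measures. -/
noncomputable def symmetrization {ι α : Type*} [Fintype ι] [DecidableEq ι] [MeasurableSpace α]
    (μ : Measure (ι → α)) : Measure (ι → α) :=
  ∑ σ : Equiv.Perm ι, μ.map (· ∘ σ)

instance {ι α : Type*} [Fintype ι] [DecidableEq ι] [MeasurableSpace α] (μ : Measure (ι → α))
    [IsFiniteMeasure μ] : IsFiniteMeasure (symmetrization μ) := by
  unfold symmetrization
  infer_instance

theorem measurable_comp_perm {ι α : Type*} [MeasurableSpace α] (σ : Equiv.Perm ι) :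
    Measurable fun x : ι → α => x ∘ σ :=
  measurable_pi_lambda _ fun i => measurable_pi_apply (σ i)

section Antitone

variable {α : Type*} {n : ℕ} [LinearOrder α]

/-- The vectors having an antitone rearrangement that belongs to `A`. -/
def rearrangements (A : Set (Fin n → α)) : Set (Fin n → α) :=
  {y | ∃ τ : Equiv.Perm (Fin n), y ∘ τ ∈ A ∩ {x | Antitone x}}

theorem comp_perm_mem_rearrangements_iff (A : Set (Fin n → α)) {x : Fin n → α} (hx : Antitone x)
    (σ : Equiv.Perm (Fin n)) : x ∘ σ ∈ rearrangements A ↔ x ∈ A := by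
  refine ⟨fun ⟨τ, hτA, hτ⟩ => ?_, fun h => ⟨σ⁻¹, ?_⟩⟩
  · have hsorted : x ∘ (σ * τ) = x := Tuple.unique_antitone (τ := 1) hτ hx
    rwa [Function.comp_assoc, ← Equiv.Perm.coe_mul, hsorted] at hτA
  · have hinv : (x ∘ σ) ∘ ⇑σ⁻¹ = x := by ext; simp
    exact hinv.symm ▸ ⟨h, hx⟩

variable [TopologicalSpace α] [OrderClosedTopology α] [SecondCountableTopology α]
  [MeasurableSpace α] [BorelSpace α]

theorem measurableSet_antitone : MeasurableSet {x : Fin n → α | Antitone x} :=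
  isClosed_antitone.measurableSet

theorem measurableSet_rearrangements {A : Set (Fin n → α)} (hA : MeasurableSet A) :
    MeasurableSet (rearrangements A) :=
  measurableSet_setOfPred.2 <| Measurable.exists fun τ =>
    measurableSet_setOfPred.1 <| measurable_comp_perm τ (hA.inter measurableSet_antitone)

theorem symmetrization_apply_rearrangements {μ : Measure (Fin n → α)}
    (hμ : ∀ᵐ x ∂μ, Antitone x) {A : Set (Fin n → α)} (hA : MeasurableSet A) :
    symmetrization μ (rearrangements A) =
      (Fintype.card (Equiv.Perm (Fin n)) : ENNReal) * μ A := by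
  have hterm (σ : Equiv.Perm (Fin n)) : μ.map (· ∘ σ) (rearrangements A) = μ A := by
    rw [Measure.map_apply (measurable_comp_perm σ) (measurableSet_rearrangements hA)]
    refine measure_congr ?_
    filter_upwards [hμ] with x hx
    exact propext (comp_perm_mem_rearrangements_iff A hx σ)
  simp [symmetrization, Measure.finsetSum_apply, hterm]

theorem measure_eq_of_symmetrization_eq {μ ν : Measure (Fin n → α)}
    (hμ : ∀ᵐ x ∂μ, Antitone x) (hν : ∀ᵐ x ∂ν, Antitone x)
    (h : symmetrization μ = symmetrization ν) : μ = ν := by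
  ext A hA
  have hcard := symmetrization_apply_rearrangements hμ hA
  rw [h, symmetrization_apply_rearrangements hν hA] at hcard
  exact ((ENNReal.mul_right_inj (by simp) (by simp)).1 hcard).symm

end Antitone

variable {ι : Type*} [Fintype ι] [DecidableEq ι]

theorem integrable_exp_norm_symmetrization {μ : Measure (ι → ℝ)} {c : ℝ}
    (hμ : Integrable (fun x => Real.exp (c * ‖x‖)) μ) :
    Integrable (fun x => Real.exp (c * ‖x‖)) (symmetrization μ) := by
  refine integrable_finsetSum_measure.2 fun σ _ => ?_
  rw [integrable_map_measure (by fun_prop) (measurable_comp_perm σ).aemeasurable]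
  refine hμ.congr (.of_forall fun x => ?_)
  simp [σ.surjective.pi_norm_comp]

theorem integral_eval_symmetrization {μ : Measure (ι → ℝ)} [IsFiniteMeasure μ] {c : ℝ} (hc : 0 < c)
    (hμ : Integrable (fun x => Real.exp (c * ‖x‖)) μ) (q : MvPolynomial ι ℝ) :
    ∫ x, eval x q ∂(symmetrization μ) =
      ∫ x, eval x (∑ σ : Equiv.Perm ι, rename σ q) ∂μ := by
  have hint := integrable_mvPolynomial_eval_of_integrable_exp_norm hc
    (integrable_exp_norm_symmetrization hμ) q
  rw [symmetrization, integral_finsetSum_measure (integrable_finsetSum_measure.1 hint)]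
  simp only [map_sum, eval_rename]
  rw [integral_finsetSum]
  · exact Finset.sum_congr rfl fun σ _ => integral_map (measurable_comp_perm σ).aemeasurable
      (measurable_mvPolynomial_eval q).aestronglyMeasurable
  · intro σ _
    simpa only [eval_rename] using
      integrable_mvPolynomial_eval_of_integrable_exp_norm hc hμ (rename σ q)

theorem isSymmetric_sum_rename {R : Type*} [CommSemiring R] (q : MvPolynomial ι R) :
    (∑ σ : Equiv.Perm ι, rename σ q).IsSymmetric := fun τ => by
  simp only [map_sum, rename_rename]
  exact Fintype.sum_equiv (Equiv.mulLeft τ) _ _ fun σ => rfl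

end Symmetrization

section PowerSums

open MvPolynomial

theorem eval_aeval {σ τ R : Type*} [CommSemiring R] (x : σ → R) (t : τ → MvPolynomial σ R)
    (Q : MvPolynomial τ R) : eval x (aeval t Q) = eval (fun j => eval x (t j)) Q := by
  simpa only [bind₁, aeval_eq_eval] using aeval_bind₁ x t Q

variable {ι : Type*} [Fintype ι] {K : Type*} [Field K] [CharZero K]

theorem esymm_mem_adjoin_psum (k : ℕ) :
    esymm ι K k ∈ Algebra.adjoin K (Set.range (psum ι K)) := by
  classical
  induction k using Nat.strong_induction_on with
  | _ k ih =>
    rcases eq_or_ne k 0 with rfl | hk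
    · simp
    have hcast : (k : K) ≠ 0 := Nat.cast_ne_zero.2 hk
    have hsmul : esymm ι K k = (k : K)⁻¹ • ((k : MvPolynomial ι K) * esymm ι K k) := by
      rw [← nsmul_eq_mul, ← Nat.cast_smul_eq_nsmul K, inv_smul_smul₀ hcast]
    have hsign (m : ℕ) : (-1) ^ m ∈ Algebra.adjoin K (Set.range (psum ι K)) :=
      pow_mem (neg_mem (one_mem _)) m
    rw [hsmul, mul_esymm_eq_sum]
    refine Subalgebra.smul_mem _ (mul_mem (hsign _) (sum_mem fun a ha => ?_)) _
    exact mul_mem (mul_mem (hsign _) (ih _ (Finset.mem_filter.1 ha).2))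
      (Algebra.subset_adjoin ⟨_, rfl⟩)

theorem mem_adjoin_psum_of_isSymmetric {q : MvPolynomial ι K} (hq : q.IsSymmetric) :
    q ∈ Algebra.adjoin K (Set.range (psum ι K)) := by
  classical
  obtain ⟨g, hg⟩ := esymmAlgHom_surjective K (le_refl (Fintype.card ι)) ⟨q, hq⟩
  have hq_esymm : q ∈ Algebra.adjoin K
      (Set.range fun i : Fin (Fintype.card ι) => esymm ι K (i + 1)) := by
    rw [Algebra.adjoin_range_eq_range_aeval]
    exact ⟨g, (esymmAlgHom_apply g).symm.trans (congrArg Subtype.val hg)⟩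
  refine Algebra.adjoin_le ?_ hq_esymm
  rintro _ ⟨i, rfl⟩
  exact esymm_mem_adjoin_psum _

theorem exists_aeval_psum_of_isSymmetric {q : MvPolynomial ι K} (hq : q.IsSymmetric) :
    ∃ Q : MvPolynomial ℕ K, aeval (psum ι K) Q = q := by
  have hmem := mem_adjoin_psum_of_isSymmetric hq
  rwa [Algebra.adjoin_range_eq_range_aeval] at hmem

end PowerSums

section AntitoneDeterminacy

open MvPolynomial

variable {n : ℕ} {μ ν : Measure (Fin n → ℝ)} [IsFiniteMeasure μ] [IsFiniteMeasure ν] {c : ℝ}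

theorem measure_eq_of_antitone_of_integral_powerSums
    (hμ : ∀ᵐ x ∂μ, Antitone x) (hν : ∀ᵐ x ∂ν, Antitone x) (hc : 0 < c)
    (hμexp : Integrable (fun x => Real.exp (c * ‖x‖)) μ)
    (hνexp : Integrable (fun x => Real.exp (c * ‖x‖)) ν)
    (h : ∀ Q : MvPolynomial ℕ ℝ, ∫ x, eval (fun j => ∑ i, x i ^ j) Q ∂μ =
      ∫ x, eval (fun j => ∑ i, x i ^ j) Q ∂ν) : μ = ν := by
  refine measure_eq_of_symmetrization_eq hμ hν <|
    measure_pi_ext_of_integral_eval hc (integrable_exp_norm_symmetrization hμexp)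
      (integrable_exp_norm_symmetrization hνexp) fun q => ?_
  rw [integral_eval_symmetrization hc hμexp, integral_eval_symmetrization hc hνexp]
  obtain ⟨Q, hQ⟩ := exists_aeval_psum_of_isSymmetric (isSymmetric_sum_rename q)
  have heval (x : Fin n → ℝ) :
      eval x (aeval (psum (Fin n) ℝ) Q) = eval (fun j => ∑ i, x i ^ j) Q := by
    rw [eval_aeval]
    simp [psum]
  simpa only [← hQ, heval] using h Q

theorem integrable_exp_norm_map_sq {ι : Type*} [Fintype ι] {m : Measure (ι → ℝ)} {c : ℝ}
    (hc : 0 ≤ c) (hm : Integrable (fun x => Real.exp (c * ∑ i, x i ^ 2)) m) :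
    Integrable (fun x => Real.exp (c * ‖x‖)) (m.map fun x i => x i ^ 2) := by
  have hsq : Measurable fun (x : ι → ℝ) i => x i ^ 2 := by fun_prop
  rw [integrable_map_measure (by fun_prop) hsq.aemeasurable]
  refine hm.mono' (Measurable.aestronglyMeasurable (by fun_prop)) (.of_forall fun x => ?_)
  rw [Function.comp_apply, Real.norm_eq_abs, Real.abs_exp, Real.exp_le_exp]
  gcongr
  refine (pi_norm_le_iff_of_nonneg (by positivity)).2 fun i => ?_
  rw [Real.norm_of_nonneg (sq_nonneg _)]
  exact Finset.single_le_sum (f := fun i => x i ^ 2) (fun i _ => sq_nonneg _) (Finset.mem_univ i)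

theorem integral_eval_powerSums_map_sq {ι : Type*} [Fintype ι] (m : Measure (ι → ℝ))
    (Q : MvPolynomial ℕ ℝ) :
    ∫ x, eval (fun j => ∑ i, x i ^ j) Q ∂m.map (fun x i => x i ^ 2) =
      ∫ x, eval (fun j => ∑ i, x i ^ (2 * j)) Q ∂m := by
  have hQ : Measurable fun x : ι → ℝ => eval (fun j => ∑ i, x i ^ j) Q :=
    (measurable_mvPolynomial_eval Q).comp (by fun_prop)
  rw [integral_map (Measurable.aemeasurable (by fun_prop)) hQ.aestronglyMeasurable]
  simp only [← pow_mul]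

theorem measure_eq_of_antitone_nonneg_of_integral_evenPowerSums
    (hμ : ∀ᵐ x ∂μ, Antitone x ∧ ∀ i, 0 ≤ x i) (hν : ∀ᵐ x ∂ν, Antitone x ∧ ∀ i, 0 ≤ x i)
    (hc : 0 < c) (hμexp : Integrable (fun x => Real.exp (c * ∑ i, x i ^ 2)) μ)
    (hνexp : Integrable (fun x => Real.exp (c * ∑ i, x i ^ 2)) ν)
    (h : ∀ Q : MvPolynomial ℕ ℝ, ∫ x, eval (fun j => ∑ i, x i ^ (2 * j)) Q ∂μ =
      ∫ x, eval (fun j => ∑ i, x i ^ (2 * j)) Q ∂ν) : μ = ν := by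
  let sq : (Fin n → ℝ) → Fin n → ℝ := fun x i => x i ^ 2
  let sqrt : (Fin n → ℝ) → Fin n → ℝ := fun x i => √(x i)
  have hsq : Measurable sq := by fun_prop
  have hsqrt : Measurable sqrt := by fun_prop
  have hinv {m : Measure (Fin n → ℝ)} (hm : ∀ᵐ x ∂m, Antitone x ∧ ∀ i, 0 ≤ x i) :
      (m.map sq).map sqrt = m := by
    rw [Measure.map_map hsqrt hsq]
    refine (Measure.map_congr ?_).trans Measure.map_id
    filter_upwards [hm] with x hx
    exact funext fun i => Real.sqrt_sq (hx.2 i)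
  have hanti {m : Measure (Fin n → ℝ)} (hm : ∀ᵐ x ∂m, Antitone x ∧ ∀ i, 0 ≤ x i) :
      ∀ᵐ x ∂m.map sq, Antitone x := by
    refine (ae_map_iff hsq.aemeasurable measurableSet_antitone).2 (hm.mono fun x hx i j hij => ?_)
    exact pow_le_pow_left₀ (hx.2 j) (hx.1 hij) 2
  have hmap : μ.map sq = ν.map sq :=
    measure_eq_of_antitone_of_integral_powerSums (hanti hμ) (hanti hν) hc
      (integrable_exp_norm_map_sq hc.le hμexp) (integrable_exp_norm_map_sq hc.le hνexp) fun Q => by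
        rw [integral_eval_powerSums_map_sq, integral_eval_powerSums_map_sq, h]
  rw [← hinv hμ, ← hinv hν, hmap]

end AntitoneDeterminacy

section Stein

open Filter Topology

theorem continuous_mul_of_locallyConstant {X : Type*} [TopologicalSpace X] {g s : X → ℝ} {M : ℝ}
    (hg : Continuous g) (hsM : ∀ x, |s x| ≤ M)
    (hloc : ∀ x, g x ≠ 0 → ∀ᶠ y in 𝓝 x, s y = s x) : Continuous fun x => s x * g x := by
  refine continuous_iff_continuousAt.2 fun x => ?_
  by_cases hx : g x = 0
  · have hzero : Tendsto (fun y => M * ‖g y‖) (𝓝 x) (𝓝 0) := by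
      simpa [hx] using (hg.norm.const_mul M).tendsto x
    rw [ContinuousAt, hx, mul_zero]
    refine squeeze_zero_norm (fun y => ?_) hzero
    rw [norm_mul]
    exact mul_le_mul_of_nonneg_right (hsM y) (norm_nonneg _)
  · exact (hg.continuousAt.const_mul (s x)).congr
      ((hloc x hx).mono fun y hy => by simp only [hy])

-- `s * g` vanishes where `s` jumps, so it is a primitive of `s * g'` off the countable zero set.
theorem integral_mul_deriv_eq_zero_of_locallyConstant {g g' s : ℝ → ℝ} {M : ℝ}
    (hg : ∀ t, HasDerivAt g (g' t) t) (hgint : Integrable g) (hg'int : Integrable g')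
    (hzero : {t | g t = 0}.Countable) (hs : Measurable s) (hsM : ∀ t, |s t| ≤ M)
    (hloc : ∀ t, g t ≠ 0 → ∀ᶠ u in 𝓝 t, s u = s t) : ∫ t, s t * g' t = 0 := by
  have hcont : Continuous fun t => s t * g t :=
    continuous_mul_of_locallyConstant
      (continuous_iff_continuousAt.2 fun t => (hg t).continuousAt) hsM hloc
  have hderiv (t : ℝ) (ht : g t ≠ 0) : HasDerivAt (fun u => s u * g u) (s t * g' t) t :=
    ((hg t).const_mul (s t)).congr_of_eventuallyEq ((hloc t ht).mono fun u hu => by simp only [hu])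
  have hint : Integrable fun t => s t * g' t :=
    hg'int.bdd_mul hs.aestronglyMeasurable (.of_forall hsM)
  have hFTC (r : ℝ) : ∫ t in (-r)..r, s t * g' t = s r * g r - s (-r) * g (-r) :=
    integral_eq_of_hasDerivAt_off_countable _ _ hzero hcont.continuousOn
      (fun t ht => hderiv t ht.2) hint.intervalIntegrable
  have hbdd {l : Filter ℝ} {u : ℝ → ℝ} (hu : Tendsto u l (𝓝 0)) {φ : ℝ → ℝ} :
      Tendsto (fun r => s (φ r) * u r) l (𝓝 0) :=
    bdd_le_mul_tendsto_zero' M (.of_forall fun r => hsM (φ r)) hu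
  have htop : Tendsto g atTop (𝓝 0) :=
    tendsto_zero_of_hasDerivAt_of_integrableOn_Ioi (a := 0) (fun t _ => hg t)
      hg'int.integrableOn hgint.integrableOn
  have hbot : Tendsto g atBot (𝓝 0) :=
    tendsto_zero_of_hasDerivAt_of_integrableOn_Iic (a := 0) (fun t _ => hg t)
      hg'int.integrableOn hgint.integrableOn
  have hlim := intervalIntegral_tendsto_integral hint tendsto_neg_atTop_atBot tendsto_id
  simp only [id, hFTC] at hlim
  have hlim0 := (hbdd htop (φ := id)).sub
    (hbdd (hbot.comp tendsto_neg_atTop_atBot) (φ := fun r => -r))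
  rw [sub_zero] at hlim0
  exact tendsto_nhds_unique hlim hlim0

theorem hasDerivAt_gaussianPDFReal (μ : ℝ) (v : NNReal) (t : ℝ) :
    HasDerivAt (gaussianPDFReal μ v) (-((t - μ) / v) * gaussianPDFReal μ v t) t := by
  have hexponent :
      HasDerivAt (fun t : ℝ => -(t - μ) ^ 2 / (2 * v)) (-(2 * (t - μ)) / (2 * v)) t := by
    simpa using (((hasDerivAt_id t).sub_const μ).pow 2).neg.div_const (2 * (v : ℝ))
  rw [gaussianPDFReal_def]
  refine (hexponent.exp.const_mul _).congr_deriv ?_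
  rw [← mul_neg, mul_div_mul_left _ _ two_ne_zero]
  beta_reduce
  ring

theorem integrable_polynomial_eval_gaussianReal (μ : ℝ) (v : NNReal) (P : Polynomial ℝ) :
    Integrable (fun t => P.eval t) (gaussianReal μ v) := by
  induction P using Polynomial.induction_on' with
  | add p q hp hq => simpa using hp.fun_add hq
  | monomial n a =>
    simp only [Polynomial.eval_monomial]
    exact (integrable_pow_of_integrable_exp_mul one_ne_zero (integrable_exp_mul_gaussianReal 1)
      (integrable_exp_mul_gaussianReal (-1)) n).const_mul a

theorem integrable_gaussianPDFReal_mul_polynomial_eval (μ : ℝ) {v : NNReal} (hv : v ≠ 0)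
    (P : Polynomial ℝ) : Integrable fun t => gaussianPDFReal μ v t * P.eval t := by
  have hP := integrable_polynomial_eval_gaussianReal μ v P
  rw [gaussianReal_of_var_ne_zero μ hv, gaussianPDF_def,
    integrable_withDensity_iff_integrable_smul₀' (by fun_prop) (by simp)] at hP
  simpa only [ENNReal.toReal_ofReal (gaussianPDFReal_nonneg μ v _), smul_eq_mul] using hP

theorem integral_gaussianReal_stein {s : ℝ → ℝ} {M : ℝ} (hs : Measurable s) (hsM : ∀ t, |s t| ≤ M)
    (R : Polynomial ℝ) (hloc : ∀ t, R.eval t ≠ 0 → ∀ᶠ u in 𝓝 t, s u = s t) :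
    ∫ t, s t * (R.derivative.eval t - t * R.eval t) ∂gaussianReal 0 1 = 0 := by
  rcases eq_or_ne R 0 with rfl | hR
  · simp
  have hpdf (t : ℝ) : gaussianPDFReal 0 1 t ≠ 0 := (gaussianPDFReal_pos 0 1 t one_ne_zero).ne'
  have hderiv (t : ℝ) : HasDerivAt (fun t => gaussianPDFReal 0 1 t * R.eval t)
      (gaussianPDFReal 0 1 t * (R.derivative - Polynomial.X * R).eval t) t := by
    refine ((hasDerivAt_gaussianPDFReal 0 1 t).mul (R.hasDerivAt t)).congr_deriv ?_
    simp only [NNReal.coe_one, sub_zero, div_one, Polynomial.eval_sub, Polynomial.eval_mul,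
      Polynomial.eval_X]
    ring
  have hzero : {t | gaussianPDFReal 0 1 t * R.eval t = 0}.Countable := by
    refine (R.roots.toFinset.finite_toSet.subset fun t ht => ?_).countable
    simpa [hR, hpdf] using ht
  have hmain := integral_mul_deriv_eq_zero_of_locallyConstant hderiv
    (integrable_gaussianPDFReal_mul_polynomial_eval 0 one_ne_zero R)
    (integrable_gaussianPDFReal_mul_polynomial_eval 0 one_ne_zero _) hzero hs hsM
    fun t ht => hloc t (right_ne_zero_of_mul ht)
  rw [integral_gaussianReal_eq_integral_smul one_ne_zero]
  refine (integral_congr_ae (.of_forall fun t => ?_)).trans hmain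
  simp only [smul_eq_mul, Polynomial.eval_sub, Polynomial.eval_mul, Polynomial.eval_X]
  ring

end Stein

section SteinPi

open MvPolynomial Filter Topology

theorem measurePreserving_update {ι : Type*} [Fintype ι] [DecidableEq ι] {α : ι → Type*}
    [∀ i, MeasurableSpace (α i)] (μ : ∀ i, Measure (α i)) [∀ i, IsProbabilityMeasure (μ i)]
    (i : ι) : MeasurePreserving (fun z : (∀ i, α i) × α i => Function.update z.1 i z.2)
      ((Measure.pi μ).prod (μ i)) (Measure.pi μ) := by
  refine ⟨measurable_update', (Measure.pi_eq fun s hs => ?_).symm⟩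
  have hpre : (fun z : (∀ i, α i) × α i => Function.update z.1 i z.2) ⁻¹' Set.univ.pi s =
      Set.univ.pi (Function.update s i Set.univ) ×ˢ s i := by
    ext z
    simp only [Set.mem_preimage, Set.mem_univ_pi, Set.mem_prod]
    rw [Function.forall_update_iff z.1 (p := fun j y => y ∈ s j),
      Function.forall_update_iff s (p := fun j S => z.1 j ∈ S)]
    simp [and_comm]
  have hmass (j : ι) : μ j (Function.update s i Set.univ j) =
      Function.update (fun j => μ j (s j)) i 1 j := by
    rw [Function.apply_update (fun j => μ j), measure_univ]
  rw [Measure.map_apply measurable_update' (.univ_pi hs), hpre, Measure.prod_prod, Measure.pi_pi,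
    Finset.prod_congr rfl fun j _ => hmass j, Finset.prod_update_of_mem (Finset.mem_univ i),
    one_mul, Finset.sdiff_singleton_eq_erase, Finset.prod_erase_mul _ _ (Finset.mem_univ i)]

section Slice

variable {ι : Type*} [DecidableEq ι] {R : Type*} [CommSemiring R]

/-- Restriction of a polynomial to the line through `x` in the direction of the `i`-th axis. -/
noncomputable def sliceAt (x : ι → R) (i : ι) : MvPolynomial ι R →ₐ[R] Polynomial R :=
  aeval (Function.update (fun j => Polynomial.C (x j)) i Polynomial.X)

theorem eval_sliceAt (x : ι → R) (i : ι) (q : MvPolynomial ι R) (t : R) :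
    (sliceAt x i q).eval t = eval (Function.update x i t) q := by
  rw [sliceAt, ← Polynomial.coe_evalRingHom, ← Polynomial.coe_aeval_eq_evalRingHom,
    RingHom.coe_coe, comp_aeval_apply, aeval_eq_eval]
  congr 2
  ext j
  rcases eq_or_ne j i with rfl | hj <;> simp [*]

theorem derivative_sliceAt (x : ι → R) (i : ι) (q : MvPolynomial ι R) :
    (sliceAt x i q).derivative = sliceAt x i (pderiv i q) := by
  induction q using MvPolynomial.induction_on with
  | C a => simp [sliceAt]
  | add p q hp hq => simp [hp, hq]
  | mul_X p j hp =>
    have hX : (sliceAt x i (X j)).derivative = sliceAt x i (pderiv i (X j)) := by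
      rcases eq_or_ne j i with rfl | hj
      · simp [sliceAt]
      · simp [sliceAt, hj, pderiv_X_of_ne hj]
    rw [map_mul, Polynomial.derivative_mul, hp, hX, pderiv_mul, map_add, map_mul, map_mul]

end Slice

/-- The standard Gaussian measure on `ι → ℝ`. -/
noncomputable abbrev stdGaussianPi (ι : Type*) [Fintype ι] : Measure (ι → ℝ) :=
  Measure.pi fun _ => gaussianReal 0 1

variable {ι : Type*} [Fintype ι]

theorem integrable_mvPolynomial_eval_stdGaussianPi (q : MvPolynomial ι ℝ) :
    Integrable (fun x => eval x q) (stdGaussianPi ι) := by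
  induction q using MvPolynomial.induction_on' with
  | add p q hp hq => simpa using hp.fun_add hq
  | monomial n a =>
    simp only [eval_monomial, Finsupp.prod_pow]
    refine (Integrable.fintype_prod (f := fun i t => t ^ n i) fun i => ?_).const_mul a
    simpa using integrable_polynomial_eval_gaussianReal 0 1 (Polynomial.X ^ n i)

theorem integrable_bdd_mul_mvPolynomial_eval_stdGaussianPi {s : (ι → ℝ) → ℝ} {M : ℝ}
    (hs : Measurable s) (hsM : ∀ x, |s x| ≤ M) (q : MvPolynomial ι ℝ) :
    Integrable (fun x => s x * eval x q) (stdGaussianPi ι) :=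
  (integrable_mvPolynomial_eval_stdGaussianPi q).bdd_mul hs.aestronglyMeasurable (.of_forall hsM)

theorem mkDerivation_apply_eq_sum {R : Type*} [CommSemiring R] (v : ι → MvPolynomial ι R)
    (q : MvPolynomial ι R) : mkDerivation R v q = ∑ i, v i * pderiv i q := by
  classical
  have hsum (q : MvPolynomial ι R) :
      (∑ i, v i • pderiv i : Derivation R _ _) q = ∑ i, v i * pderiv i q :=
    (congrFun (map_sum Derivation.coeFnAddMonoidHom (fun i => v i • pderiv i) .univ) q).trans
      (by simp)
  rw [← hsum]
  congr 1
  refine derivation_ext fun j => ?_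
  simp [hsum, pderiv_X, Pi.single_apply]

/-- The divergence of a polynomial vector field. -/
noncomputable def polyDivergence {R : Type*} [CommSemiring R] (v : ι → MvPolynomial ι R) :
    MvPolynomial ι R :=
  ∑ i, pderiv i (v i)

theorem sum_pderiv_sub_X_mul {R : Type*} [CommRing R] {v : ι → MvPolynomial ι R}
    {D c : MvPolynomial ι R} (hD : mkDerivation R v D = c * D) (q : MvPolynomial ι R) :
    ∑ i, (pderiv i (v i * D * q) - X i * (v i * D * q)) =
      D * (mkDerivation R v q + (polyDivergence v + c) * q) - D * ((∑ i, X i * v i) * q) := by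
  have hterm (i : ι) : pderiv i (v i * D * q) - X i * (v i * D * q) =
      D * q * pderiv i (v i) + q * (v i * pderiv i D) + D * (v i * pderiv i q) -
        D * q * (X i * v i) := by
    simp only [Derivation.leibniz, smul_eq_mul]
    ring
  simp only [hterm, Finset.sum_sub_distrib, Finset.sum_add_distrib, ← Finset.mul_sum]
  rw [← mkDerivation_apply_eq_sum, ← mkDerivation_apply_eq_sum, hD, polyDivergence]
  ring

variable [DecidableEq ι]

theorem integral_stdGaussianPi_stein {s : (ι → ℝ) → ℝ} {M : ℝ} (hs : Measurable s)
    (hsM : ∀ x, |s x| ≤ M) (i : ι) (R : MvPolynomial ι ℝ)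
    (hloc : ∀ x, eval x R ≠ 0 → ∀ᶠ t in 𝓝 (x i), s (Function.update x i t) = s x) :
    ∫ x, s x * eval x (pderiv i R - X i * R) ∂stdGaussianPi ι = 0 := by
  have hint := integrable_bdd_mul_mvPolynomial_eval_stdGaussianPi hs hsM (pderiv i R - X i * R)
  have hmp : MeasurePreserving _ ((stdGaussianPi ι).prod (gaussianReal 0 1)) (stdGaussianPi ι) :=
    measurePreserving_update _ i
  rw [← hmp.map_eq] at hint ⊢
  rw [integral_map hmp.measurable.aemeasurable hint.aestronglyMeasurable]
  refine (integral_prod _ (hint.comp_measurable hmp.measurable)).trans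
    (integral_eq_zero_of_ae (.of_forall fun x => ?_))
  have hslice := integral_gaussianReal_stein (s := fun t => s (Function.update x i t))
    (hs.comp (measurable_update x)) (fun t => hsM _) (sliceAt x i R) fun t ht => by
      rw [eval_sliceAt] at ht
      simpa using hloc _ ht
  refine (integral_congr_ae (.of_forall fun t => ?_)).trans hslice
  simp [derivative_sliceAt, eval_sliceAt]

theorem integral_stdGaussianPi_sum_X_mul {s : (ι → ℝ) → ℝ} {M : ℝ} (hs : Measurable s)
    (hsM : ∀ x, |s x| ≤ M) {v : ι → MvPolynomial ι ℝ} {D c : MvPolynomial ι ℝ}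
    (hD : mkDerivation ℝ v D = c * D)
    (hloc : ∀ i x, eval x (v i * D) ≠ 0 → ∀ᶠ t in 𝓝 (x i), s (Function.update x i t) = s x)
    (q : MvPolynomial ι ℝ) :
    ∫ x, s x * eval x (D * ((∑ i, X i * v i) * q)) ∂stdGaussianPi ι =
      ∫ x, s x * eval x (D * (mkDerivation ℝ v q + (polyDivergence v + c) * q))
        ∂stdGaussianPi ι := by
  have hint := integrable_bdd_mul_mvPolynomial_eval_stdGaussianPi hs hsM
  have hstein (i : ι) :
      ∫ x, s x * eval x (pderiv i (v i * D * q) - X i * (v i * D * q)) ∂stdGaussianPi ι = 0 :=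
    integral_stdGaussianPi_stein hs hsM i _ fun x hx => hloc i x <| by
      rw [map_mul] at hx
      exact left_ne_zero_of_mul hx
  rw [eq_comm, ← sub_eq_zero, ← integral_sub (hint _) (hint _)]
  simp only [← mul_sub, ← map_sub, ← sum_pderiv_sub_X_mul hD, map_sum, Finset.mul_sum]
  rw [integral_finsetSum _ fun i _ => hint _, Finset.sum_eq_zero fun i _ => hstein i]

end SteinPi

section LoopEquations

open MvPolynomial

section Algebra

variable {R : Type*} [CommRing R]

/-- The derivation `X j ↦ 2 j X (j + k)` of `R[X 0, X 1, …]`: if `X j` stands for the even power sum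
`∑ i, x i ^ (2 * j)`, it is the action of the vector field `x i ↦ x i ^ (2 * k + 1)`. -/
noncomputable def loopDerivation (R : Type*) [CommRing R] (k : ℕ) :
    Derivation R (MvPolynomial ℕ R) (MvPolynomial ℕ R) :=
  mkDerivation R fun j => C (2 * j : R) * X (j + k)

/-- The zeroth-order term of the `k`-th loop equation. -/
noncomputable def loopCoeff (a : R) (k : ℕ) : MvPolynomial ℕ R :=
  C (k + a) * X k + ∑ l ∈ Finset.range (k + 1), X l * X (k - l)

/-- The loop (Schwinger–Dyson) equations for a linear functional `L` on polynomials in the even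
power sums `X 0, X 1, …` of `r` variables: `a` is the exponent of `∏ i, x i` in the weight. -/
structure SatisfiesLoopEquations (a r : R) (L : MvPolynomial ℕ R →ₗ[R] R) : Prop where
  zero (Q : MvPolynomial ℕ R) : L (X 0 * Q) = r * L Q
  succ (k : ℕ) (Q : MvPolynomial ℕ R) :
    L (X (k + 1) * Q) = L (loopDerivation R k Q + loopCoeff a k * Q)

@[simp]
theorem loopDerivation_X (k j : ℕ) : loopDerivation R k (X j) = C (2 * j : R) * X (j + k) :=
  mkDerivation_X R _ j

theorem isWeightedHomogeneous_loopDerivation_monomial (k : ℕ) (m : ℕ →₀ ℕ) (r : R) :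
    IsWeightedHomogeneous id (loopDerivation R k (monomial m r)) (Finsupp.weight id m + k) := by
  rw [loopDerivation, mkDerivation_monomial, ← mem_weightedHomogeneousSubmodule]
  refine Submodule.smul_mem _ _ (Submodule.sum_mem _ fun i hi => ?_)
  simp only [mem_weightedHomogeneousSubmodule, smul_eq_mul]
  have hle : Finsupp.single i 1 ≤ m :=
    Finsupp.single_le_iff.2 (Nat.one_le_iff_ne_zero.2 (Finsupp.mem_support_iff.1 hi))
  have hweight : Finsupp.weight id m = Finsupp.weight id (m - Finsupp.single i 1) + i := by
    conv_lhs => rw [← tsub_add_cancel_of_le hle, map_add, Finsupp.weight_single]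
    simp
  have hhom := (isWeightedHomogeneous_monomial id (m - Finsupp.single i 1) (m i : R) rfl).mul
    ((isWeightedHomogeneous_C id (2 * i : R)).mul (isWeightedHomogeneous_X R id (i + k)))
  rwa [zero_add, id, ← add_assoc, ← hweight] at hhom

theorem isWeightedHomogeneous_loopCoeff (a : R) (k : ℕ) :
    IsWeightedHomogeneous id (loopCoeff a k) k := by
  refine IsWeightedHomogeneous.add ?_ (IsWeightedHomogeneous.sum _ _ _ fun l hl => ?_)
  · simpa using (isWeightedHomogeneous_C id (k + a)).mul (isWeightedHomogeneous_X R id k)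
  · have hhom := (isWeightedHomogeneous_X R id l).mul (isWeightedHomogeneous_X R id (k - l))
    rwa [id, id, Nat.add_sub_cancel' (Finset.mem_range_succ_iff.1 hl)] at hhom

namespace SatisfiesLoopEquations

variable {a r : R} {L₁ L₂ : MvPolynomial ℕ R →ₗ[R] R}

theorem eq_X_zero_pow (h₁ : SatisfiesLoopEquations a r L₁) (h₂ : SatisfiesLoopEquations a r L₂)
    (hone : L₁ 1 = L₂ 1) (j : ℕ) : L₁ (X 0 ^ j) = L₂ (X 0 ^ j) := by
  induction j with
  | zero => simpa using hone
  | succ j ih => rw [pow_succ', h₁.zero, h₂.zero, ih]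

-- The `k`-th equation removes one `X (k + 1)` and lowers the weighted degree by one, while the
-- zeroth equation eliminates `X 0`, which has weight zero.
theorem eq_of_isWeightedHomogeneous (h₁ : SatisfiesLoopEquations a r L₁)
    (h₂ : SatisfiesLoopEquations a r L₂) (hone : L₁ 1 = L₂ 1) {n : ℕ} {Q : MvPolynomial ℕ R}
    (hQ : IsWeightedHomogeneous id Q n) : L₁ Q = L₂ Q := by
  induction n using Nat.strong_induction_on generalizing Q with
  | _ n ih =>
  have hmonomial (m : ℕ →₀ ℕ) (hm : Finsupp.weight id m = n) :
      L₁ (monomial m 1) = L₂ (monomial m 1) := by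
    by_cases hpos : ∃ k, m (k + 1) ≠ 0
    · obtain ⟨k, hk⟩ := hpos
      obtain ⟨m', rfl⟩ := le_iff_exists_add.1 (Finsupp.single_le_iff.2
        (Nat.one_le_iff_ne_zero.2 hk))
      have hweight : Finsupp.weight id m' + k < n := by
        rw [← hm, map_add, Finsupp.weight_single]
        simp
        omega
      have hsplit : monomial (Finsupp.single (k + 1) 1 + m') (1 : R) =
          X (k + 1) * monomial m' 1 := by
        rw [X, monomial_mul, one_mul]
      rw [hsplit, h₁.succ, h₂.succ]
      refine ih _ hweight ((isWeightedHomogeneous_loopDerivation_monomial k m' 1).add ?_)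
      rw [add_comm]
      exact (isWeightedHomogeneous_loopCoeff a k).mul (isWeightedHomogeneous_monomial id m' 1 rfl)
    · have hm0 : m = Finsupp.single 0 (m 0) := by
        ext j
        cases j with
        | zero => simp
        | succ j => simpa using not_exists_not.1 hpos j
      have hX : monomial m (1 : R) = X 0 ^ m 0 := by rw [X_pow_eq_monomial, ← hm0]
      rw [hX, eq_X_zero_pow h₁ h₂ hone]
  rw [Q.as_sum, map_sum, map_sum]
  refine Finset.sum_congr rfl fun m hm => ?_
  rw [← mul_one (coeff m Q), ← smul_eq_mul, ← smul_monomial, map_smul, map_smul,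
    hmonomial m (hQ (mem_support_iff.1 hm))]

protected theorem ext (h₁ : SatisfiesLoopEquations a r L₁) (h₂ : SatisfiesLoopEquations a r L₂)
    (hone : L₁ 1 = L₂ 1) : L₁ = L₂ := by
  ext m
  exact h₁.eq_of_isWeightedHomogeneous h₂ hone (isWeightedHomogeneous_monomial id m 1 rfl)

end SatisfiesLoopEquations

theorem derivation_aeval_eq_aeval_loopDerivation {A : Type*} [CommRing A] [Algebra R A]
    {V : Derivation R A A} {t : ℕ → A} {k : ℕ} (hV : ∀ j, V (t j) = (2 * j : R) • t (j + k))
    (Q : MvPolynomial ℕ R) : V (aeval t Q) = aeval t (loopDerivation R k Q) := by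
  induction Q using MvPolynomial.induction_on with
  | C a => simp [loopDerivation]
  | add p q hp hq => rw [map_add, map_add, hp, hq, map_add, map_add]
  | mul_X p j hp =>
    rw [map_mul, Derivation.leibniz, Derivation.leibniz, hp, aeval_X, hV, loopDerivation_X]
    simp [Algebra.smul_def]

end Algebra

section Gaussian

variable {ι : Type*} [Fintype ι] [DecidableEq ι] {s : (ι → ℝ) → ℝ} {M : ℝ}

/-- The functional `Q ↦ ∫ s x * (D * Q(t)) x` on polynomials in abstract variables `X j`, where the
polynomials `t j` are substituted for the variables. -/
noncomputable def weightedMoment (hs : Measurable s) (hsM : ∀ x, |s x| ≤ M)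
    (D : MvPolynomial ι ℝ) (t : ℕ → MvPolynomial ι ℝ) : MvPolynomial ℕ ℝ →ₗ[ℝ] ℝ where
  toFun Q := ∫ x, s x * eval x (D * aeval t Q) ∂stdGaussianPi ι
  map_add' P Q := by
    have hint := integrable_bdd_mul_mvPolynomial_eval_stdGaussianPi hs hsM
    rw [← integral_add (hint _) (hint _)]
    simp only [map_add, mul_add]
  map_smul' c Q := by
    rw [RingHom.id_apply, smul_eq_mul, ← integral_const_mul]
    congr with x
    simp only [map_smul, map_mul, smul_eval]
    ring

theorem satisfiesLoopEquations_weightedMoment (hs : Measurable s) (hsM : ∀ x, |s x| ≤ M)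
    {D : MvPolynomial ι ℝ} {t : ℕ → MvPolynomial ι ℝ} {a r : ℝ}
    {v : ℕ → ι → MvPolynomial ι ℝ} {c : ℕ → MvPolynomial ι ℝ}
    (ht₀ : t 0 = C r) (ht : ∀ k, ∑ i, X i * v k i = t (k + 1))
    (hv : ∀ k j, mkDerivation ℝ (v k) (t j) = (2 * j : ℝ) • t (j + k))
    (hD : ∀ k, mkDerivation ℝ (v k) D = c k * D)
    (hdiv : ∀ k, polyDivergence (v k) + c k = aeval t (loopCoeff a k))
    (hloc : ∀ k i x, eval x (v k i * D) ≠ 0 →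
      ∀ᶠ u in nhds (x i), s (Function.update x i u) = s x) :
    SatisfiesLoopEquations a r (weightedMoment hs hsM D t) where
  zero Q := by
    simp only [weightedMoment, LinearMap.coe_mk, AddHom.coe_mk, map_mul, aeval_X, ht₀, eval_C,
      ← integral_const_mul]
    congr with x
    ring
  succ k Q := by
    simp only [weightedMoment, LinearMap.coe_mk, AddHom.coe_mk]
    rw [map_mul, aeval_X, ← ht k, integral_stdGaussianPi_sum_X_mul hs hsM (hD k) (hloc k),
      derivation_aeval_eq_aeval_loopDerivation (hv k), hdiv, map_add, map_mul]

end Gaussian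

end LoopEquations

section SquaredVandermonde

open MvPolynomial

variable {ι R : Type*} [CommRing R]

/-- The polynomial `∑ l ≤ k, x i ^ (2 * l) * x j ^ (2 * (k - l))`, the quotient of
`x i ^ (2 * (k + 1)) - x j ^ (2 * (k + 1))` by `x i ^ 2 - x j ^ 2`. -/
noncomputable def evenGeomSum (R : Type*) [CommRing R] (k : ℕ) (i j : ι) : MvPolynomial ι R :=
  ∑ l ∈ Finset.range (k + 1), X i ^ (2 * l) * X j ^ (2 * (k - l))

theorem evenGeomSum_comm (k : ℕ) (i j : ι) : evenGeomSum R k i j = evenGeomSum R k j i := by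
  rw [evenGeomSum, evenGeomSum, ← Finset.sum_range_reflect]
  refine Finset.sum_congr rfl fun l hl => ?_
  rw [add_tsub_cancel_right, Nat.sub_sub_self (Finset.mem_range_succ_iff.1 hl), mul_comm]

theorem evenGeomSum_self (k : ℕ) (i : ι) :
    evenGeomSum R k i i = (k + 1 : R) • X i ^ (2 * k) := by
  have hterm : ∀ l ∈ Finset.range (k + 1),
      (X i ^ (2 * l) * X i ^ (2 * (k - l)) : MvPolynomial ι R) = X i ^ (2 * k) := fun l hl => by
    rw [← pow_add, ← mul_add, Nat.add_sub_cancel' (Finset.mem_range_succ_iff.1 hl)]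
  rw [evenGeomSum, Finset.sum_congr rfl hterm]
  simp [smul_eq_C_mul]

theorem evenGeomSum_mul_sub (k : ℕ) (i j : ι) :
    evenGeomSum R k i j * (X i ^ 2 - X j ^ 2) = X i ^ (2 * (k + 1)) - X j ^ (2 * (k + 1)) := by
  have hgeom := (Commute.all (X i ^ 2 : MvPolynomial ι R) (X j ^ 2)).geom_sum₂_mul (k + 1)
  simpa only [evenGeomSum, pow_mul, add_tsub_cancel_right] using hgeom

/-- The vector field `x i ↦ x i ^ (2 * k + 1)`. -/
noncomputable def oddPowerField (ι R : Type*) [CommRing R] (k : ℕ) (i : ι) : MvPolynomial ι R :=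
  X i ^ (2 * k + 1)

theorem mkDerivation_oddPowerField_X_pow (k n : ℕ) (i : ι) :
    mkDerivation R (oddPowerField ι R k) (X i ^ n) = (n : R) • (X i ^ (2 * k) * X i ^ n) := by
  rw [Derivation.leibniz_pow, mkDerivation_X, oddPowerField, smul_eq_mul, Nat.cast_smul_eq_nsmul]
  cases n with
  | zero => simp
  | succ n => rw [add_tsub_cancel_right]; ring

theorem mkDerivation_oddPowerField_sub (k : ℕ) (i j : ι) :
    mkDerivation R (oddPowerField ι R k) (X i ^ 2 - X j ^ 2) =
      (2 * evenGeomSum R k i j) * (X i ^ 2 - X j ^ 2) := by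
  rw [map_sub, mkDerivation_oddPowerField_X_pow, mkDerivation_oddPowerField_X_pow, mul_assoc,
    evenGeomSum_mul_sub, ← smul_sub, smul_eq_C_mul]
  simp only [Nat.cast_ofNat, map_ofNat]
  ring

theorem derivation_prod_eq_sum_mul_prod {κ A : Type*} [CommRing A] [Algebra R A]
    (V : Derivation R A A) (s : Finset κ) {f c : κ → A} (h : ∀ i ∈ s, V (f i) = c i * f i) :
    V (∏ i ∈ s, f i) = (∑ i ∈ s, c i) * ∏ i ∈ s, f i := by
  induction s using Finset.cons_induction with
  | empty => simp
  | cons x s hx ih =>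
    rw [Finset.prod_cons, Finset.sum_cons, Derivation.leibniz,
      ih fun i hi => h i (Finset.mem_cons_of_mem hi), h x (Finset.mem_cons_self _ _),
      smul_eq_mul, smul_eq_mul]
    ring

variable [Fintype ι]

theorem sum_X_mul_oddPowerField (k : ℕ) :
    ∑ i, X i * oddPowerField ι R k i = psum ι R (2 * (k + 1)) :=
  Finset.sum_congr rfl fun i _ => by rw [oddPowerField]; ring

theorem mkDerivation_oddPowerField_psum (k j : ℕ) :
    mkDerivation R (oddPowerField ι R k) (psum ι R (2 * j)) =
      (2 * j : R) • psum ι R (2 * (j + k)) := by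
  rw [psum, psum, map_sum, Finset.smul_sum]
  refine Finset.sum_congr rfl fun i _ => ?_
  rw [mkDerivation_oddPowerField_X_pow, ← pow_add, ← mul_add, add_comm k j]
  push_cast
  rfl

theorem sum_psum_mul_psum (k : ℕ) :
    ∑ l ∈ Finset.range (k + 1), psum ι R (2 * l) * psum ι R (2 * (k - l)) =
      ∑ i, ∑ j, evenGeomSum R k i j := by
  simp only [psum, evenGeomSum, Finset.sum_mul_sum]
  rw [Finset.sum_comm]
  exact Finset.sum_congr rfl fun i _ => Finset.sum_comm

section Weight

variable [LinearOrder ι] [LocallyFiniteOrderTop ι]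

/-- The polynomial part `∏ i, x i ^ a * ∏ i < j, (x i ^ 2 - x j ^ 2)` of the density. -/
noncomputable def singularValueWeight (ι R : Type*) [Fintype ι] [LinearOrder ι]
    [LocallyFiniteOrderTop ι] [CommRing R] (a : ℕ) : MvPolynomial ι R :=
  (∏ i, X i ^ a) * ∏ i, ∏ j ∈ Finset.Ioi i, (X i ^ 2 - X j ^ 2)

/-- The logarithmic derivative of `singularValueWeight ι R a` along `oddPowerField ι R k`. -/
noncomputable def weightLogDeriv (ι R : Type*) [Fintype ι] [LinearOrder ι]
    [LocallyFiniteOrderTop ι] [CommRing R] (a k : ℕ) : MvPolynomial ι R :=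
  (a : R) • psum ι R (2 * k) + ∑ i, ∑ j ∈ Finset.Ioi i, 2 * evenGeomSum R k i j

theorem mkDerivation_oddPowerField_singularValueWeight (a k : ℕ) :
    mkDerivation R (oddPowerField ι R k) (singularValueWeight ι R a) =
      weightLogDeriv ι R a k * singularValueWeight ι R a := by
  have hmonomial : mkDerivation R (oddPowerField ι R k) (∏ i, X i ^ a) =
      (∑ i, (a : R) • X i ^ (2 * k)) * ∏ i, X i ^ a :=
    derivation_prod_eq_sum_mul_prod _ _ fun i _ => by
      rw [mkDerivation_oddPowerField_X_pow, smul_mul_assoc]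
  have hvandermonde := derivation_prod_eq_sum_mul_prod (mkDerivation R (oddPowerField ι R k))
    Finset.univ fun i _ => derivation_prod_eq_sum_mul_prod _ (Finset.Ioi i)
      fun j _ => mkDerivation_oddPowerField_sub (R := R) k i j
  rw [singularValueWeight, weightLogDeriv, Derivation.leibniz, hmonomial, hvandermonde,
    ← Finset.smul_sum, ← psum, smul_eq_mul, smul_eq_mul]
  ring

variable [LocallyFiniteOrderBot ι]

theorem sum_evenGeomSum_eq (k : ℕ) :
    ∑ i : ι, ∑ j, evenGeomSum R k i j =
      (k + 1 : R) • psum ι R (2 * k) + ∑ i : ι, ∑ j ∈ Finset.Ioi i, 2 * evenGeomSum R k i j := by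
  have hoff : ∑ i : ι, ∑ j ∈ Finset.Ioi i, 2 * evenGeomSum R k i j =
      ∑ i, ∑ j ∈ {i}ᶜ, evenGeomSum R k j i := by
    rw [← Finset.sum_sum_Ioi_add_eq_sum_sum_off_diag]
    simp only [two_mul, evenGeomSum_comm]
  rw [hoff, psum, Finset.smul_sum, ← Finset.sum_add_distrib]
  refine Finset.sum_congr rfl fun i _ => ?_
  rw [← evenGeomSum_self, ← Finset.sum_add_sum_compl {i}, Finset.sum_singleton]
  simp only [evenGeomSum_comm k i]

theorem polyDivergence_oddPowerField_add_weightLogDeriv (a k : ℕ) :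
    polyDivergence (oddPowerField ι R k) + weightLogDeriv ι R a k =
      aeval (fun j => psum ι R (2 * j)) (loopCoeff (a : R) k) := by
  have hdiv : polyDivergence (oddPowerField ι R k) = (2 * k + 1 : R) • psum ι R (2 * k) := by
    rw [polyDivergence, psum, Finset.smul_sum]
    refine Finset.sum_congr rfl fun i _ => ?_
    rw [oddPowerField, Derivation.leibniz_pow, pderiv_X_self, add_tsub_cancel_right,
      smul_eq_mul, mul_one, ← Nat.cast_smul_eq_nsmul R]
    push_cast
    rfl
  rw [hdiv, weightLogDeriv, loopCoeff, map_add, map_mul, map_sum, aeval_X]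
  simp only [map_mul, aeval_X]
  rw [sum_psum_mul_psum, sum_evenGeomSum_eq, algHom_C, algebraMap_eq, ← smul_eq_C_mul]
  module

end Weight

end SquaredVandermonde

section GenericGram

open MvPolynomial

variable {m n R : Type*} [Fintype m] [CommRing R]

/-- The Gram matrix `Yᵀ * Y` of the generic `m × n` matrix `Y`. -/
noncomputable def genericGram (m n R : Type*) [Fintype m] [CommRing R] :
    Matrix n n (MvPolynomial (m × n) R) :=
  (mvPolynomialX m n R)ᵀ * mvPolynomialX m n R

theorem transpose_genericGram : (genericGram m n R)ᵀ = genericGram m n R := by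
  rw [genericGram, transpose_mul, transpose_transpose]

theorem pderiv_genericGram [DecidableEq n] (r : m) (b e c : n) :
    pderiv (r, b) (genericGram m n R e c) =
      (if b = e then X (r, c) else 0) + if b = c then X (r, e) else 0 := by
  classical
  simp [genericGram, mul_apply, pderiv_X, Pi.single_apply, Finset.sum_add_distrib, ite_and,
    add_comm, eq_comm (a := b)]

theorem map_derivation_mul {l A : Type*} [CommRing A] [Algebra R A] (V : Derivation R A A)
    (P : Matrix l m A) (Q : Matrix m n A) : (P * Q).map V = P.map V * Q + P * Q.map V := by
  ext i j
  simp only [map_apply, mul_apply, Matrix.add_apply, map_sum, Derivation.leibniz, smul_eq_mul,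
    Finset.sum_add_distrib, mul_comm (Q _ _)]
  rw [add_comm]

/-- The matrix whose trace is the divergence of the matrix field `A`: its entry at `(b, c)` is the
sum over all rows `r` of the derivatives of `A r c` with respect to the coordinate `(r, b)`. -/
noncomputable def columnDivergence (A : Matrix m n (MvPolynomial (m × n) R)) :
    Matrix n n (MvPolynomial (m × n) R) :=
  of fun b c => ∑ r, pderiv (r, b) (A r c)

theorem columnDivergence_mvPolynomialX [DecidableEq n] :
    columnDivergence (mvPolynomialX m n R) = (Fintype.card m : R) • 1 := by
  classical
  ext1 b c
  simp [columnDivergence, pderiv_X, Pi.single_apply, one_apply, eq_comm, smul_eq_C_mul]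

variable [Fintype n]

theorem trace_columnDivergence (A : Matrix m n (MvPolynomial (m × n) R)) :
    (columnDivergence A).trace = polyDivergence fun z => A z.1 z.2 := by
  rw [polyDivergence, Fintype.sum_prod_type, Finset.sum_comm]
  rfl

variable [DecidableEq n]

theorem columnDivergence_mul_genericGram (A : Matrix m n (MvPolynomial (m × n) R)) :
    columnDivergence (A * genericGram m n R) =
      columnDivergence A * genericGram m n R + Aᵀ * mvPolynomialX m n R +
        (Aᵀ * mvPolynomialX m n R).trace • 1 := by
  ext1 b c
  have hderiv (r : m) : pderiv (r, b) ((A * genericGram m n R) r c) =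
      ∑ e, pderiv (r, b) (A r e) * genericGram m n R e c + A r b * X (r, c) +
        if b = c then ∑ e, A r e * X (r, e) else 0 := by
    simp only [mul_apply, map_sum, Derivation.leibniz, smul_eq_mul, pderiv_genericGram, mul_add,
      Finset.sum_add_distrib, mul_ite, mul_zero, Finset.sum_ite_eq, Finset.mem_univ, if_true]
    rw [add_comm, ← add_assoc]
    split_ifs <;> simp [mul_comm]
  have htrace : (Aᵀ * mvPolynomialX m n R).trace = ∑ r, ∑ e, A r e * X (r, e) := by
    simp only [trace, diag_apply, mul_apply, transpose_apply, mvPolynomialX_apply]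
    exact Finset.sum_comm
  simp only [columnDivergence, of_apply, hderiv]
  rw [htrace, Finset.sum_add_distrib, Finset.sum_add_distrib, Finset.sum_comm]
  simp only [Matrix.add_apply, mul_apply, of_apply, transpose_apply, mvPolynomialX_apply,
    Matrix.smul_apply, one_apply, smul_eq_mul, mul_ite, mul_one, mul_zero, Finset.sum_mul]
  split_ifs <;> simp

/-- The matrix field `Y * (Yᵀ * Y) ^ k`, as a vector field on `m × n` coordinates; it moves each
singular value `d` of `Y` with speed `d ^ (2 * k + 1)`. -/
noncomputable def gramField (m n R : Type*) [Fintype m] [Fintype n] [DecidableEq n] [CommRing R]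
    (k : ℕ) (z : m × n) : MvPolynomial (m × n) R :=
  (mvPolynomialX m n R * genericGram m n R ^ k) z.1 z.2

/-- The trace of `(Yᵀ * Y) ^ j`, i.e. the `2 * j`-th power sum of the singular values of `Y`. -/
noncomputable def gramTrace (m n R : Type*) [Fintype m] [Fintype n] [DecidableEq n] [CommRing R]
    (j : ℕ) : MvPolynomial (m × n) R :=
  (genericGram m n R ^ j).trace

theorem gramTrace_zero : gramTrace m n R 0 = C (Fintype.card n : R) := by
  simp [gramTrace]

theorem genericGram_pow_succ (k : ℕ) :
    genericGram m n R ^ (k + 1) =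
      (mvPolynomialX m n R * genericGram m n R ^ k)ᵀ * mvPolynomialX m n R := by
  rw [transpose_mul, transpose_pow, transpose_genericGram, Matrix.mul_assoc, pow_succ]
  rfl

theorem sum_X_mul_gramField (k : ℕ) :
    ∑ z, X z * gramField m n R k z = gramTrace m n R (k + 1) := by
  rw [gramTrace, genericGram_pow_succ, Fintype.sum_prod_type, Finset.sum_comm]
  simp only [gramField, trace, diag_apply, mul_apply (M := (_)ᵀ), transpose_apply,
    mvPolynomialX_apply, mul_comm (X _)]

theorem map_mkDerivation_gramField_mvPolynomialX (k : ℕ) :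
    (mvPolynomialX m n R).map (mkDerivation R (gramField m n R k)) =
      mvPolynomialX m n R * genericGram m n R ^ k := by
  ext1 i j
  rw [map_apply, mvPolynomialX_apply, mkDerivation_X, gramField]

theorem map_mkDerivation_gramField_genericGram (k : ℕ) :
    (genericGram m n R).map (mkDerivation R (gramField m n R k)) =
      (2 : R) • genericGram m n R ^ (k + 1) := by
  have hsymm : (mvPolynomialX m n R)ᵀ * (mvPolynomialX m n R * genericGram m n R ^ k) =
      genericGram m n R ^ (k + 1) := by
    rw [← Matrix.mul_assoc, pow_succ', genericGram]
  rw [genericGram, map_derivation_mul, transpose_map, map_mkDerivation_gramField_mvPolynomialX,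
    ← genericGram, hsymm, ← genericGram_pow_succ, two_smul]

theorem map_mkDerivation_gramField_genericGram_pow (k j : ℕ) :
    (genericGram m n R ^ j).map (mkDerivation R (gramField m n R k)) =
      (2 * j : R) • genericGram m n R ^ (j + k) := by
  induction j with
  | zero =>
    ext1 i j
    simp [one_apply, apply_ite]
  | succ j ih =>
    rw [pow_succ, map_derivation_mul, ih, map_mkDerivation_gramField_genericGram,
      mul_smul_comm, smul_mul_assoc, ← pow_succ, ← pow_add, ← add_assoc, add_right_comm j]
    push_cast
    module

theorem mkDerivation_gramField_gramTrace (k j : ℕ) :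
    mkDerivation R (gramField m n R k) (gramTrace m n R j) =
      (2 * j : R) • gramTrace m n R (j + k) := by
  rw [gramTrace, gramTrace, ← trace_smul, ← map_mkDerivation_gramField_genericGram_pow]
  simp [trace]

theorem columnDivergence_mvPolynomialX_mul_genericGram_pow (k : ℕ) :
    columnDivergence (mvPolynomialX m n R * genericGram m n R ^ k) =
      (Fintype.card m + k : R) • genericGram m n R ^ k +
        ∑ l ∈ Finset.range k, gramTrace m n R (l + 1) • genericGram m n R ^ (k - (l + 1)) := by
  induction k with
  | zero => simp [columnDivergence_mvPolynomialX]
  | succ k ih =>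
    have hpow : ∀ l ∈ Finset.range k,
        gramTrace m n R (l + 1) • genericGram m n R ^ (k - (l + 1)) * genericGram m n R =
          gramTrace m n R (l + 1) • genericGram m n R ^ (k + 1 - (l + 1)) := fun l hl => by
      rw [smul_mul_assoc, ← pow_succ, Nat.sub_add_comm (Finset.mem_range.1 hl)]
    rw [pow_succ, ← Matrix.mul_assoc, columnDivergence_mul_genericGram, ih, add_mul,
      Finset.sum_mul, Finset.sum_congr rfl hpow, smul_mul_assoc, ← pow_succ,
      ← genericGram_pow_succ, ← gramTrace, Finset.sum_range_succ, tsub_self, pow_zero]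
    push_cast
    module

theorem polyDivergence_gramField (k : ℕ) :
    polyDivergence (gramField m n R k) =
      aeval (gramTrace m n R) (loopCoeff (Fintype.card m - Fintype.card n : R) k) := by
  have htrace (j : ℕ) : (genericGram m n R ^ j).trace = gramTrace m n R j := rfl
  have hdiv : polyDivergence (gramField m n R k) =
      (Fintype.card m + k : R) • gramTrace m n R k +
        ∑ l ∈ Finset.range k, gramTrace m n R (l + 1) * gramTrace m n R (k - (l + 1)) := by
    rw [← htrace k]
    refine (trace_columnDivergence _).symm.trans ?_
    rw [columnDivergence_mvPolynomialX_mul_genericGram_pow, trace_add, trace_smul, trace_sum]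
    simp only [trace_smul, smul_eq_mul, htrace]
  rw [hdiv, loopCoeff, map_add, map_mul, map_sum, aeval_X, Finset.sum_range_succ', algHom_C]
  simp only [map_mul, aeval_X, gramTrace_zero, tsub_zero, algebraMap_eq, ← smul_eq_C_mul]
  module

end GenericGram

section GaussianDensity

variable {ι : Type*} [Fintype ι]

theorem pi_withDensity_ofReal {α : ι → Type*} [∀ i, MeasurableSpace (α i)]
    {μ : ∀ i, Measure (α i)} [∀ i, SigmaFinite (μ i)] {f : ∀ i, α i → ℝ}
    (hf : ∀ i, Integrable (f i) (μ i)) (hf0 : ∀ i x, 0 ≤ f i x) :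
    Measure.pi (fun i => (μ i).withDensity fun x => ENNReal.ofReal (f i x)) =
      (Measure.pi μ).withDensity fun x => ENNReal.ofReal (∏ i, f i (x i)) := by
  have (i : ι) : IsFiniteMeasure ((μ i).withDensity fun x => ENNReal.ofReal (f i x)) :=
    isFiniteMeasure_withDensity_ofReal (hf i).2
  refine Measure.pi_eq fun s hs => ?_
  have hint : Integrable (fun x => ∏ i, f i (x i)) (Measure.pi fun i => (μ i).restrict (s i)) :=
    .fintype_prod_dep fun i => (hf i).restrict
  rw [withDensity_apply _ (.univ_pi hs), Measure.restrict_pi_pi,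
    ← ofReal_integral_eq_lintegral_ofReal hint
      (.of_forall fun x => Finset.prod_nonneg fun i _ => hf0 i _),
    integral_fintype_prod_eq_prod,
    ENNReal.ofReal_prod_of_nonneg fun i _ => integral_nonneg (hf0 i)]
  refine Finset.prod_congr rfl fun i _ => ?_
  rw [withDensity_apply _ (hs i),
    ofReal_integral_eq_lintegral_ofReal (hf i).restrict (.of_forall (hf0 i))]

theorem stdGaussianPi_eq_withDensity :
    stdGaussianPi ι = volume.withDensity fun x => ENNReal.ofReal
      ((√(2 * Real.pi))⁻¹ ^ Fintype.card ι * Real.exp (-(∑ i, x i ^ 2) / 2)) := by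
  have hprod (x : ι → ℝ) : ∏ i, gaussianPDFReal 0 1 (x i) =
      (√(2 * Real.pi))⁻¹ ^ Fintype.card ι * Real.exp (-(∑ i, x i ^ 2) / 2) := by
    simp [gaussianPDFReal, Finset.prod_mul_distrib, ← Real.exp_sum, ← Finset.sum_div]
  simp only [stdGaussianPi, gaussianReal_of_var_ne_zero 0 one_ne_zero, gaussianPDF_def]
  rw [pi_withDensity_ofReal (fun _ => integrable_gaussianPDFReal 0 1)
    fun _ => gaussianPDFReal_nonneg 0 1, ← volume_pi]
  simp only [hprod]

theorem integrable_exp_mul_sq_gaussianReal {c : ℝ} (hc : c < 1 / 2) :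
    Integrable (fun t => Real.exp (c * t ^ 2)) (gaussianReal 0 1) := by
  rw [gaussianReal_of_var_ne_zero 0 one_ne_zero, gaussianPDF_def,
    integrable_withDensity_iff_integrable_smul' (by fun_prop) (by simp)]
  refine ((integrable_exp_neg_mul_sq (sub_pos.2 hc)).const_mul (√(2 * Real.pi))⁻¹).congr
    (.of_forall fun t => ?_)
  beta_reduce
  rw [ENNReal.toReal_ofReal (gaussianPDFReal_nonneg _ _ _), gaussianPDFReal, smul_eq_mul,
    mul_assoc, ← Real.exp_add, NNReal.coe_one, sub_zero, mul_one, mul_one]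
  ring_nf

theorem integrable_exp_mul_sum_sq_stdGaussianPi {c : ℝ} (hc : c < 1 / 2) :
    Integrable (fun x => Real.exp (c * ∑ i, x i ^ 2)) (stdGaussianPi ι) := by
  simp only [Finset.mul_sum, Real.exp_sum]
  exact .fintype_prod (f := fun _ t => Real.exp (c * t ^ 2)) fun _ =>
    integrable_exp_mul_sq_gaussianReal hc

theorem integrable_exp_mul_bdd_mul_mvPolynomial_eval_stdGaussianPi {c M : ℝ} (hc : c < 1 / 4)
    {s : (ι → ℝ) → ℝ} (hs : Measurable s) (hsM : ∀ x, |s x| ≤ M) (q : MvPolynomial ι ℝ) :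
    Integrable (fun x => Real.exp (c * ∑ i, x i ^ 2) * (s x * MvPolynomial.eval x q))
      (stdGaussianPi ι) := by
  have hexp : MemLp (fun x => Real.exp (c * ∑ i, x i ^ 2)) 2 (stdGaussianPi ι) := by
    rw [memLp_two_iff_integrable_sq (Measurable.aestronglyMeasurable (by fun_prop))]
    simpa only [← Real.exp_nat_mul, ← mul_assoc] using
      integrable_exp_mul_sum_sq_stdGaussianPi (by push_cast; linarith : (2 : ℕ) * c < 1 / 2)
  have hpoly : MemLp (fun x => s x * MvPolynomial.eval x q) 2 (stdGaussianPi ι) := by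
    rw [memLp_two_iff_integrable_sq
      (hs.fun_mul (measurable_mvPolynomial_eval q)).aestronglyMeasurable]
    simpa only [mul_pow, ← map_pow] using integrable_bdd_mul_mvPolynomial_eval_stdGaussianPi
      (hs.pow_const 2) (fun x => (abs_pow (s x) 2).trans_le
        (pow_le_pow_left₀ (abs_nonneg _) (hsM x) 2)) (q ^ 2)
  exact hexp.integrable_mul hpoly

end GaussianDensity

section Chamber

open MvPolynomial Filter Topology

variable {ι : Type*}

/-- The set of strictly decreasing positive vectors: the open Weyl chamber of type `B`. -/
def openChamber (ι : Type*) [Preorder ι] : Set (ι → ℝ) :=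
  {x | StrictAnti x ∧ ∀ i, 0 < x i}

theorem isOpen_openChamber [Preorder ι] [Finite ι] : IsOpen (openChamber ι) := by
  have hchamber : openChamber ι = {x | ∀ i j, i < j → x j < x i} ∩ {x | ∀ i, 0 < x i} := rfl
  simp only [hchamber, Set.ofPred_forall]
  refine .inter (isOpen_iInter_of_finite fun i => isOpen_iInter_of_finite fun j => ?_)
    (isOpen_iInter_of_finite fun i => isOpen_lt continuous_const (continuous_apply i))
  exact isOpen_iInter_of_finite fun _ => isOpen_lt (continuous_apply j) (continuous_apply i)

theorem openChamber_nonempty [Preorder ι] [LocallyFiniteOrderTop ι] :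
    (openChamber ι).Nonempty := by
  refine ⟨fun i => (Finset.Ici i).card, fun i j hij => ?_, fun i => ?_⟩
  · exact Nat.cast_lt.2 (Finset.card_lt_card (Finset.Ici_ssubset_Ici.2 hij))
  · exact Nat.cast_pos.2 (Finset.card_pos.2 Finset.nonempty_Ici)

theorem closure_openChamber_subset [PartialOrder ι] :
    closure (openChamber ι) ⊆ {x | Antitone x ∧ ∀ i, 0 ≤ x i} := by
  refine closure_minimal (fun x hx => ⟨hx.1.antitone, fun i => (hx.2 i).le⟩) ?_
  rw [Set.ofPred_and, Set.ofPred_forall]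
  exact isClosed_antitone.inter
    (isClosed_iInter fun i => isClosed_le continuous_const (continuous_apply i))

-- A wall of the chamber meets a line parallel to an axis only where two coordinates agree or where
-- the moving coordinate vanishes.
theorem eventually_update_mem_openChamber_iff [LinearOrder ι] [Finite ι] {x : ι → ℝ} {i : ι}
    (hinj : Function.Injective x) (hi : x i ≠ 0) :
    ∀ᶠ u in 𝓝 (x i), Function.update x i u ∈ openChamber ι ↔ x ∈ openChamber ι := by
  have hcont : Tendsto (Function.update x i) (𝓝 (x i)) (𝓝 x) := by
    simpa using (continuous_const.update i continuous_id : Continuous (Function.update x i)).tendsto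
      (x i)
  by_cases hx : x ∈ openChamber ι
  · filter_upwards [hcont (isOpen_openChamber.mem_nhds hx)] with u hu
    exact iff_of_true hu hx
  · suffices h : ∀ᶠ u in 𝓝 (x i), Function.update x i u ∉ openChamber ι from
      h.mono fun u hu => iff_of_false hu hx
    by_contra hfreq
    rw [not_eventually, frequently_congr (.of_forall fun _ => not_not)] at hfreq
    obtain ⟨hanti, hnonneg⟩ :=
      closure_openChamber_subset (mem_closure_of_frequently_of_tendsto hfreq hcont)
    obtain ⟨u, hu⟩ := hfreq.exists
    refine hx ⟨hanti.strictAnti_of_injective hinj, fun j => ?_⟩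
    rcases eq_or_ne j i with rfl | hji
    · exact (hnonneg j).lt_of_ne' hi
    · simpa [hji] using hu.2 j

variable [Fintype ι] [LinearOrder ι] [LocallyFiniteOrderTop ι] {a : ℕ}

theorem eval_singularValueWeight (x : ι → ℝ) :
    eval x (singularValueWeight ι ℝ a) =
      (∏ i, x i ^ a) * ∏ i, ∏ j ∈ Finset.Ioi i, (x i ^ 2 - x j ^ 2) := by
  simp [singularValueWeight]

theorem eval_singularValueWeight_pos {x : ι → ℝ} (hx : x ∈ openChamber ι) :
    0 < eval x (singularValueWeight ι ℝ a) := by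
  rw [eval_singularValueWeight]
  refine mul_pos (Finset.prod_pos fun i _ => pow_pos (hx.2 i) _)
    (Finset.prod_pos fun i _ => Finset.prod_pos fun j hj => sub_pos.2 ?_)
  exact pow_lt_pow_left₀ (hx.1 (Finset.mem_Ioi.1 hj)) (hx.2 j).le two_ne_zero

theorem injective_of_eval_singularValueWeight_ne_zero {x : ι → ℝ}
    (hx : eval x (singularValueWeight ι ℝ a) ≠ 0) : Function.Injective x := by
  rw [eval_singularValueWeight] at hx
  refine Function.Injective.of_lt_imp_ne fun i j hij heq => right_ne_zero_of_mul hx ?_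
  refine Finset.prod_eq_zero (Finset.mem_univ i) (Finset.prod_eq_zero (Finset.mem_Ioi.2 hij) ?_)
  rw [heq, sub_self]

/-- The Gaussian mass of `singularValueWeight` on the chamber, by which it gets normalized. -/
noncomputable def chamberMass (ι : Type*) [Fintype ι] [LinearOrder ι] [LocallyFiniteOrderTop ι]
    (a : ℕ) : ℝ :=
  ∫ x in openChamber ι, eval x (singularValueWeight ι ℝ a) ∂stdGaussianPi ι

theorem chamberMass_pos : 0 < chamberMass ι a := by
  have : (gaussianReal 0 1).IsOpenPosMeasure :=
    (gaussianReal_absolutelyContinuous' 0 one_ne_zero).isOpenPosMeasure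
  have hsupport : openChamber ι ⊆ Function.support fun x => eval x (singularValueWeight ι ℝ a) :=
    fun x hx => (eval_singularValueWeight_pos hx).ne'
  rw [chamberMass, setIntegral_pos_iff_support_of_nonneg_ae
    (ae_restrict_of_forall_mem isOpen_openChamber.measurableSet
      fun x hx => (eval_singularValueWeight_pos hx).le)
    (integrable_mvPolynomial_eval_stdGaussianPi _).integrableOn,
    Set.inter_eq_self_of_subset_right hsupport]
  exact isOpen_openChamber.measure_pos _ openChamber_nonempty

/-- The indicator of the chamber, normalized to make `singularValueLaw` a probability measure. -/
noncomputable def chamberFactor (ι : Type*) [Fintype ι] [LinearOrder ι] [LocallyFiniteOrderTop ι]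
    (a : ℕ) : (ι → ℝ) → ℝ :=
  (openChamber ι).indicator fun _ => (chamberMass ι a)⁻¹

theorem chamberFactor_of_mem {x : ι → ℝ} (hx : x ∈ openChamber ι) :
    chamberFactor ι a x = (chamberMass ι a)⁻¹ :=
  Set.indicator_of_mem hx _

theorem chamberFactor_of_notMem {x : ι → ℝ} (hx : x ∉ openChamber ι) : chamberFactor ι a x = 0 :=
  Set.indicator_of_notMem hx _

theorem measurable_chamberFactor : Measurable (chamberFactor ι a) :=
  measurable_const.indicator isOpen_openChamber.measurableSet

theorem abs_chamberFactor_le (x : ι → ℝ) : |chamberFactor ι a x| ≤ |(chamberMass ι a)⁻¹| :=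
  norm_indicator_le_norm_self (fun _ => (chamberMass ι a)⁻¹) x

theorem chamberFactor_mul_eval_nonneg (x : ι → ℝ) :
    0 ≤ chamberFactor ι a x * eval x (singularValueWeight ι ℝ a) := by
  by_cases hx : x ∈ openChamber ι
  · rw [chamberFactor_of_mem hx]
    exact mul_nonneg (inv_nonneg.2 chamberMass_pos.le) (eval_singularValueWeight_pos hx).le
  · rw [chamberFactor_of_notMem hx, zero_mul]

theorem integral_chamberFactor_mul_eval :
    ∫ x, chamberFactor ι a x * eval x (singularValueWeight ι ℝ a) ∂stdGaussianPi ι = 1 := by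
  rw [← setIntegral_eq_integral_of_forall_compl_eq_zero (s := openChamber ι)
      fun x hx => by rw [chamberFactor_of_notMem hx, zero_mul],
    setIntegral_congr_fun isOpen_openChamber.measurableSet
      fun x hx => by rw [chamberFactor_of_mem hx],
    integral_const_mul, ← chamberMass, inv_mul_cancel₀ chamberMass_pos.ne']

-- The weight vanishes where two coordinates agree and `oddPowerField` where `x i = 0`.
theorem eventually_chamberFactor_update_eq {k : ℕ} {i : ι} {x : ι → ℝ}
    (hx : eval x (oddPowerField ι ℝ k i * singularValueWeight ι ℝ a) ≠ 0) :
    ∀ᶠ u in 𝓝 (x i), chamberFactor ι a (Function.update x i u) = chamberFactor ι a x := by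
  rw [map_mul, oddPowerField, map_pow, eval_X] at hx
  filter_upwards [eventually_update_mem_openChamber_iff
    (injective_of_eval_singularValueWeight_ne_zero (right_ne_zero_of_mul hx))
    (ne_zero_pow (Nat.succ_ne_zero _) (left_ne_zero_of_mul hx))] with u hu
  by_cases hmem : x ∈ openChamber ι
  · rw [chamberFactor_of_mem hmem, chamberFactor_of_mem (hu.2 hmem)]
  · rw [chamberFactor_of_notMem hmem, chamberFactor_of_notMem (hu.not.2 hmem)]

/-- The functional sending `Q` to the integral against the normalized weight of `Q` evaluated at the
even power sums of the coordinates. -/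
noncomputable def chamberMoment (ι : Type*) [Fintype ι] [LinearOrder ι] [LocallyFiniteOrderTop ι]
    (a : ℕ) : MvPolynomial ℕ ℝ →ₗ[ℝ] ℝ :=
  weightedMoment (measurable_chamberFactor (ι := ι) (a := a)) abs_chamberFactor_le
    (singularValueWeight ι ℝ a) fun j => psum ι ℝ (2 * j)

theorem chamberMoment_apply (Q : MvPolynomial ℕ ℝ) :
    chamberMoment ι a Q = ∫ x, chamberFactor ι a x *
      (eval x (singularValueWeight ι ℝ a) * eval (fun j => ∑ i, x i ^ (2 * j)) Q)
        ∂stdGaussianPi ι := by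
  simp only [chamberMoment, weightedMoment, LinearMap.coe_mk, AddHom.coe_mk, map_mul, eval_aeval,
    psum, map_sum, map_pow, eval_X]

theorem chamberMoment_one : chamberMoment ι a 1 = 1 := by
  simpa only [chamberMoment_apply, map_one, mul_one] using integral_chamberFactor_mul_eval

theorem satisfiesLoopEquations_chamberMoment [LocallyFiniteOrderBot ι] :
    SatisfiesLoopEquations (a : ℝ) (Fintype.card ι) (chamberMoment ι a) :=
  satisfiesLoopEquations_weightedMoment _ _ (by simp) sum_X_mul_oddPowerField
    mkDerivation_oddPowerField_psum (mkDerivation_oddPowerField_singularValueWeight a)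
    (polyDivergence_oddPowerField_add_weightLogDeriv a)
    fun _ _ _ => eventually_chamberFactor_update_eq

end Chamber

section SingularValueLaw

open MvPolynomial

variable {ι : Type*} [Fintype ι] [LinearOrder ι] [LocallyFiniteOrderTop ι] {a : ℕ}

/-- The claimed law of the singular values, given by its density with respect to the standard
Gaussian measure; `a` stands for the excess of rows over columns. -/
noncomputable def singularValueLaw (ι : Type*) [Fintype ι] [LinearOrder ι]
    [LocallyFiniteOrderTop ι] (a : ℕ) : Measure (ι → ℝ) :=
  (stdGaussianPi ι).withDensity fun x =>
    ENNReal.ofReal (chamberFactor ι a x * eval x (singularValueWeight ι ℝ a))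

theorem measurable_chamberFactor_mul_eval :
    Measurable fun x => ENNReal.ofReal (chamberFactor ι a x * eval x (singularValueWeight ι ℝ a)) :=
  (measurable_chamberFactor.fun_mul (measurable_mvPolynomial_eval _)).ennreal_ofReal

instance isFiniteMeasure_singularValueLaw : IsFiniteMeasure (singularValueLaw ι a) :=
  isFiniteMeasure_withDensity_ofReal (integrable_bdd_mul_mvPolynomial_eval_stdGaussianPi
    measurable_chamberFactor abs_chamberFactor_le _).2

theorem ae_singularValueLaw_mem_openChamber :
    ∀ᵐ x ∂singularValueLaw ι a, x ∈ openChamber ι := by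
  rw [singularValueLaw, ae_withDensity_iff measurable_chamberFactor_mul_eval]
  refine .of_forall fun x => not_imp_comm.1 fun hx => ?_
  rw [chamberFactor_of_notMem hx, zero_mul, ENNReal.ofReal_zero]

theorem integrable_exp_mul_sum_sq_singularValueLaw {c : ℝ} (hc : c < 1 / 4) :
    Integrable (fun x => Real.exp (c * ∑ i, x i ^ 2)) (singularValueLaw ι a) := by
  rw [singularValueLaw, integrable_withDensity_iff measurable_chamberFactor_mul_eval (by simp)]
  simpa only [ENNReal.toReal_ofReal (chamberFactor_mul_eval_nonneg _)] using
    integrable_exp_mul_bdd_mul_mvPolynomial_eval_stdGaussianPi hc measurable_chamberFactor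
      abs_chamberFactor_le (singularValueWeight ι ℝ a)

theorem integral_evenPowerSums_singularValueLaw (Q : MvPolynomial ℕ ℝ) :
    ∫ x, eval (fun j => ∑ i, x i ^ (2 * j)) Q ∂singularValueLaw ι a =
      chamberMoment ι a Q := by
  rw [singularValueLaw, integral_withDensity_eq_integral_toReal_smul
    measurable_chamberFactor_mul_eval (by simp)]
  simp only [ENNReal.toReal_ofReal (chamberFactor_mul_eval_nonneg _), smul_eq_mul, mul_assoc,
    chamberMoment_apply]

theorem singularValueLaw_eq_withDensity_volume :
    singularValueLaw ι a = volume.withDensity ((openChamber ι).indicator fun x => ENNReal.ofReal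
      ((chamberMass ι a)⁻¹ * (√(2 * Real.pi))⁻¹ ^ Fintype.card ι *
        Real.exp (-(∑ i, x i ^ 2) / 2) * (∏ i, x i ^ a) *
        ∏ i, ∏ j ∈ Finset.Ioi i, (x i ^ 2 - x j ^ 2))) := by
  rw [singularValueLaw, stdGaussianPi_eq_withDensity,
    ← withDensity_mul _ (by fun_prop) measurable_chamberFactor_mul_eval]
  congr with x
  rw [Pi.mul_apply, ← ENNReal.ofReal_mul (by positivity), eval_singularValueWeight]
  by_cases hx : x ∈ openChamber ι
  · rw [chamberFactor_of_mem hx, Set.indicator_of_mem hx]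
    ring_nf
  · rw [chamberFactor_of_notMem hx, Set.indicator_of_notMem hx, zero_mul, mul_zero,
      ENNReal.ofReal_zero]

end SingularValueLaw

section GramMoment

open MvPolynomial

variable {m n : Type*} [Fintype m] [Fintype n]

/-- The functional sending `Q` to the Gaussian expectation of `Q` evaluated at the traces of the
powers of `Yᵀ * Y`. -/
noncomputable def gramMoment (m n : Type*) [Fintype m] [Fintype n] [DecidableEq n] :
    MvPolynomial ℕ ℝ →ₗ[ℝ] ℝ :=
  weightedMoment (s := fun _ => 1) measurable_const (fun _ => abs_one.le) 1 (gramTrace m n ℝ)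

theorem gramMoment_apply [DecidableEq n] (Q : MvPolynomial ℕ ℝ) :
    gramMoment m n Q =
      ∫ x, eval (fun j => eval x (gramTrace m n ℝ j)) Q ∂stdGaussianPi (m × n) := by
  simp only [gramMoment, weightedMoment, LinearMap.coe_mk, AddHom.coe_mk, one_mul, eval_aeval]

theorem gramMoment_one [DecidableEq n] : gramMoment m n 1 = 1 := by
  simp [gramMoment_apply]

theorem satisfiesLoopEquations_gramMoment [DecidableEq n] :
    SatisfiesLoopEquations (Fintype.card m - Fintype.card n : ℝ) (Fintype.card n)
      (gramMoment m n) := by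
  classical
  exact satisfiesLoopEquations_weightedMoment (c := 0) _ _ gramTrace_zero sum_X_mul_gramField
    mkDerivation_gramField_gramTrace (by simp) (by simpa using polyDivergence_gramField)
    fun _ _ _ _ => .of_forall fun _ => rfl

theorem gramMoment_eq_chamberMoment [LinearOrder n] [LocallyFiniteOrderTop n]
    [LocallyFiniteOrderBot n] (h : Fintype.card n ≤ Fintype.card m) :
    gramMoment m n = chamberMoment n (Fintype.card m - Fintype.card n) := by
  refine satisfiesLoopEquations_gramMoment.ext ?_ (gramMoment_one.trans chamberMoment_one.symm)
  rw [← Nat.cast_sub h]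
  exact satisfiesLoopEquations_chamberMoment

theorem eval_gramTrace_one [DecidableEq n] (x : m × n → ℝ) :
    eval x (gramTrace m n ℝ 1) = ∑ z, x z ^ 2 := by
  rw [← zero_add 1, ← sum_X_mul_gramField]
  simp [gramField, mvPolynomialX_apply, sq]

theorem map_stdGaussianPi_eq_singularValueLaw {p : ℕ} (hp : p ≤ Fintype.card m)
    {e : (m × Fin p → ℝ) → Fin p → ℝ} (he : Measurable e) (hanti : ∀ x, Antitone (e x))
    (hnonneg : ∀ x i, 0 ≤ e x i)
    (hgram : ∀ x j, ∑ i, e x i ^ (2 * j) = eval x (gramTrace m (Fin p) ℝ j)) :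
    (stdGaussianPi (m × Fin p)).map e = singularValueLaw (Fin p) (Fintype.card m - p) := by
  have hnorm (x : m × Fin p → ℝ) : ∑ i, e x i ^ 2 = ∑ z, x z ^ 2 := by
    simpa only [mul_one, eval_gramTrace_one] using hgram x 1
  refine measure_eq_of_antitone_nonneg_of_integral_evenPowerSums (c := 1 / 8) ?_
    (ae_singularValueLaw_mem_openChamber.mono fun x hx => ⟨hx.1.antitone, fun i => (hx.2 i).le⟩)
    (by norm_num) ?_ (integrable_exp_mul_sum_sq_singularValueLaw (by norm_num)) fun Q => ?_
  · exact (ae_map_iff he.aemeasurable (measurableSet_antitone.inter measurableSet_Ici)).2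
      (.of_forall fun x => ⟨hanti x, hnonneg x⟩)
  · rw [integrable_map_measure (Measurable.aestronglyMeasurable (by fun_prop)) he.aemeasurable]
    simpa only [Function.comp_def, hnorm] using
      integrable_exp_mul_sum_sq_stdGaussianPi (by norm_num)
  · have hQ : Measurable fun x : Fin p → ℝ => eval (fun j => ∑ i, x i ^ (2 * j)) Q :=
      (measurable_mvPolynomial_eval Q).comp (by fun_prop)
    rw [integral_map he.aemeasurable hQ.aestronglyMeasurable,
      integral_evenPowerSums_singularValueLaw]
    have hmoment := gramMoment_eq_chamberMoment (n := Fin p) (by simpa using hp)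
    simp only [hgram, ← gramMoment_apply, hmoment, Fintype.card_fin]

theorem map_curry_stdGaussianPi :
    (stdGaussianPi (m × n)).map Function.curry = Measure.pi fun _ : m => stdGaussianPi n := by
  simpa only [Measure.infinitePi_eq_pi, MeasurableEquiv.coe_curry] using
    Measure.infinitePi_map_curry fun (_ : m) (_ : n) => gaussianReal 0 1

end GramMoment

section SingularValues

open MvPolynomial

variable {m n R : Type*} [Fintype m] [Fintype n] [DecidableEq n] [CommRing R]

theorem trace_pow_transpose_mul_self_of_svd {y U : Matrix m n R} {V : Matrix n n R} {d : n → R}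
    (hy : y = U * diagonal d * Vᵀ) (hU : Uᵀ * U = 1) (hV : Vᵀ * V = 1) (j : ℕ) :
    ((yᵀ * y) ^ j).trace = ∑ i, d i ^ (2 * j) := by
  let V' : (Matrix n n R)ˣ := ⟨V, Vᵀ, mul_eq_one_comm.1 hV, hV⟩
  have hgram : yᵀ * y = V'.val * diagonal (d ^ 2) * V'⁻¹.val :=
    calc yᵀ * y = V * (diagonal d * (Uᵀ * U) * diagonal d) * Vᵀ := by
          simp only [hy, transpose_mul, transpose_transpose, diagonal_transpose, Matrix.mul_assoc]
      _ = V * diagonal (d ^ 2) * Vᵀ := by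
          rw [hU, Matrix.mul_one, diagonal_mul_diagonal', Pi.pow_def]
          simp only [sq]
  rw [hgram, Units.conj_pow, trace_units_conj, diagonal_pow, trace_diagonal]
  simp [pow_mul]

theorem eval_gramTrace (x : m × n → R) (j : ℕ) :
    eval x (gramTrace m n R j) =
      (((of (Function.curry x))ᵀ * of (Function.curry x)) ^ j).trace := by
  have hgram : (eval x).mapMatrix (genericGram m n R) =
      (of (Function.curry x))ᵀ * of (Function.curry x) := by
    ext a b
    simp [genericGram, Matrix.mul_apply]
  rw [gramTrace, ← hgram, ← map_pow, AddMonoidHom.map_trace]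
  rfl

end SingularValues

theorem singular_value_density_gaussian_general
    (N p : ℕ) (hpN : p ≤ N)
    (d : (Fin N → Fin p → ℝ) → Fin p → ℝ)
    (hdm : Measurable d)
    (hSVD : ∀ y : Fin N → Fin p → ℝ,
      ∃ U : Matrix (Fin N) (Fin p) ℝ, ∃ V : Matrix (Fin p) (Fin p) ℝ,
        Matrix.of y = U * Matrix.diagonal (d y) * Vᵀ ∧ Uᵀ * U = 1 ∧ Vᵀ * V = 1)
    (hanti : ∀ y, Antitone (d y))
    (hnonneg : ∀ y i, 0 ≤ d y i) :
    ∃ C : ℝ, 0 < C ∧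
      Measure.map d (Measure.pi (fun _ : Fin N => Measure.pi (fun _ : Fin p =>
          gaussianReal 0 1)))
        = volume.withDensity (fun x : Fin p → ℝ =>
            Set.indicator {x : Fin p → ℝ | StrictAnti x ∧ ∀ i, 0 < x i}
              (fun x => ENNReal.ofReal
                (C * Real.exp (-(∑ i : Fin p, x i ^ 2) / 2) *
                  (∏ i : Fin p, x i ^ (N - p)) *
                  ∏ i : Fin p, ∏ j ∈ Finset.Ioi i, (x i ^ 2 - x j ^ 2))) x) := by
  refine ⟨(chamberMass (Fin p) (N - p))⁻¹ * (√(2 * Real.pi))⁻¹ ^ Fintype.card (Fin p),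
    mul_pos (inv_pos.2 chamberMass_pos) (by positivity), ?_⟩
  have hcurry : Measurable (Function.curry (α := Fin N) (β := Fin p) (φ := ℝ)) :=
    (MeasurableEquiv.curry _ _ _).measurable
  have hgram (x : Fin N × Fin p → ℝ) (j : ℕ) : ∑ i, d (Function.curry x) i ^ (2 * j) =
      MvPolynomial.eval x (gramTrace (Fin N) (Fin p) ℝ j) := by
    obtain ⟨U, V, hy, hU, hV⟩ := hSVD (Function.curry x)
    rw [eval_gramTrace, trace_pow_transpose_mul_self_of_svd hy hU hV]
  have hlaw := map_stdGaussianPi_eq_singularValueLaw (by simpa using hpN) (hdm.comp hcurry)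
    (fun _ => hanti _) (fun _ => hnonneg _) hgram
  rw [← map_curry_stdGaussianPi, Measure.map_map hdm hcurry, hlaw, Fintype.card_fin]
  exact singularValueLaw_eq_withDensity_volume

/-- **Joint density of the singular values of a standard Gaussian matrix (Appendix, (A.2)).**
Let `Y ∈ ℝ^{N×p}` (`N > p ≥ 1`) have i.i.d. `N(0,1)` entries and let `d y` be the decreasing
nonnegative singular values of `y` (characterized by an SVD, measurably chosen).  Then there
is a constant `C_{N,p} > 0` such that the law of the singular value vector is absolutely
continuous with respect to Lebesgue measure on `ℝ^p` with density
`F(x) = C e^{-(∑ x_i²)/2} ∏ x_i^{N-p} ∏_{i<j} (x_i² - x_j²)` on the open region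
`{x₁ > x₂ > ⋯ > x_p > 0}` and `0` outside the closure of that region (the chosen density
below vanishes on the boundary, a Lebesgue-null set, so it is `F` on the region and `0` off
the closure). -/
theorem singular_value_density_gaussian
    (N p : ℕ) (hNp : p < N) (hp : 1 ≤ p)
    (d : (Fin N → Fin p → ℝ) → Fin p → ℝ)
    (hdm : Measurable d)
    (hSVD : ∀ y : Fin N → Fin p → ℝ,
      ∃ U : Matrix (Fin N) (Fin p) ℝ, ∃ V : Matrix (Fin p) (Fin p) ℝ,
        Matrix.of y = U * Matrix.diagonal (d y) * Vᵀ ∧ Uᵀ * U = 1 ∧ Vᵀ * V = 1)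
    (hanti : ∀ y, Antitone (d y))
    (hnonneg : ∀ y i, 0 ≤ d y i) :
    ∃ C : ℝ, 0 < C ∧
      Measure.map d (Measure.pi (fun _ : Fin N => Measure.pi (fun _ : Fin p =>
          gaussianReal 0 1)))
        = volume.withDensity (fun x : Fin p → ℝ =>
            Set.indicator {x : Fin p → ℝ | StrictAnti x ∧ ∀ i, 0 < x i}
              (fun x => ENNReal.ofReal
                (C * Real.exp (-(∑ i : Fin p, x i ^ 2) / 2) *
                  (∏ i : Fin p, x i ^ (N - p)) *
                  ∏ i : Fin p, ∏ j ∈ Finset.Ioi i, (x i ^ 2 - x j ^ 2))) x) :=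
  singular_value_density_gaussian_general N p hNp.le d hdm hSVD hanti hnonneg
end
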